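/- arXiv:1205.0236 — 8 statements merged into one kernel-verified Lean document; each statement's English description precedes it below -/
import Mathlib

section
/- Identity theorem for convergent generalized power series: Let X be a complex Banach space, δ > 0, σ ∈ (0,∞], and let (a_α)_{α∈S} be a generalized power series with coefficients in X converging normally on Ω(δ,σ), with sum f(w) = ∑_{α∈S} a_α e^{αw} for w ∈ Ω(δ,σ). If there exists a sequence (w_n) in Ω(δ,σ) with Re w_n → −∞ and f(w_n) = 0 for all n, then a_α = 0 for every α ∈ S, and consequently f vanishes identically on Ω(δ,σ). -/
noncomputable section

/-- The logarithm of the punctured disc of radius `δ` and half-opening angle `σ`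
on the logarithmic cover of `ℂ`. -/
def Omega (δ : ℝ) (σ : ENNReal) : Set ℂ :=
  {w : ℂ | w.re < Real.log δ ∧ ENNReal.ofReal |w.im| < σ}

/-!
If `α₀` is the smallest exponent of a nonzero coefficient, then `e^{-α₀ w} f(w) → a_{α₀}` as
`Re w → -∞`: all other terms carry a factor `e^{(α - α₀) w}` with `α > α₀`, and normal convergence
lets the limit be taken termwise. Along zeros of `f` the left side vanishes, so `a_{α₀} = 0`.
-/

section

open Filter Topology

variable {ι X : Type*} [NormedAddCommGroup X] {δ : ℝ}

theorem exp_mul_le_rpow (hδ : 0 < δ) {x e : ℝ} (hx : x ≤ Real.log δ) (he : 0 ≤ e) :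
    Real.exp (e * x) ≤ δ ^ e := by
  rw [Real.rpow_def_of_pos hδ, mul_comm]
  gcongr

theorem summable_norm_update_mul_rpow_sub [DecidableEq ι] (hδ : 0 < δ) {e : ι → ℝ} {a : ι → X}
    (ha : Summable fun i => ‖a i‖ * δ ^ e i) (j : ι) :
    Summable fun i => ‖Function.update a j 0 i‖ * δ ^ (e i - e j) := by
  refine (ha.div_const (δ ^ e j)).of_nonneg_of_le (fun i => by positivity) fun i => ?_
  rw [Real.rpow_sub hδ, mul_div_assoc]
  gcongr
  obtain rfl | hij := eq_or_ne i j
  · simp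
  · rw [Function.update_of_ne hij]

variable [NormedSpace ℂ X]

theorem norm_cexp_ofReal_mul_smul (e : ℝ) (w : ℂ) (x : X) :
    ‖Complex.exp (e * w) • x‖ = ‖x‖ * Real.exp (e * w.re) := by
  rw [norm_smul, Complex.norm_exp, Complex.re_ofReal_mul, mul_comm]

theorem norm_cexp_ofReal_mul_smul_le (hδ : 0 < δ) {e : ℝ} {w : ℂ} {x : X}
    (hw : w.re ≤ Real.log δ) (he : x ≠ 0 → 0 ≤ e) :
    ‖Complex.exp (e * w) • x‖ ≤ ‖x‖ * δ ^ e := by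
  obtain rfl | hx := eq_or_ne x 0
  · simp
  · rw [norm_cexp_ofReal_mul_smul]
    gcongr
    exact exp_mul_le_rpow hδ hw (he hx)

theorem tendsto_norm_cexp_ofReal_mul_smul {l : Filter ℂ} (hl : Tendsto Complex.re l atBot)
    {e : ℝ} {x : X} (he : x ≠ 0 → 0 < e) :
    Tendsto (fun w : ℂ => ‖Complex.exp (e * w) • x‖) l (𝓝 0) := by
  obtain rfl | hx := eq_or_ne x 0
  · simpa using tendsto_const_nhds
  · have hexp : Tendsto (fun w : ℂ => Real.exp (e * w.re)) l (𝓝 0) :=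
      Real.tendsto_exp_atBot.comp (hl.const_mul_atBot (he hx))
    simpa only [norm_cexp_ofReal_mul_smul, mul_zero] using hexp.const_mul ‖x‖

theorem summable_norm_cexp_ofReal_mul_smul (hδ : 0 < δ) {e : ι → ℝ} {a : ι → X}
    (he : ∀ i, a i ≠ 0 → 0 ≤ e i) (ha : Summable fun i => ‖a i‖ * δ ^ e i)
    {w : ℂ} (hw : w.re ≤ Real.log δ) :
    Summable fun i => ‖Complex.exp (e i * w) • a i‖ :=
  ha.of_nonneg_of_le (fun _ => norm_nonneg _) fun i => norm_cexp_ofReal_mul_smul_le hδ hw (he i)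

theorem tendsto_zero_of_hasSum_cexp_ofReal_mul_smul (hδ : 0 < δ) {e : ι → ℝ} {a : ι → X}
    (he : ∀ i, a i ≠ 0 → 0 < e i) (ha : Summable fun i => ‖a i‖ * δ ^ e i)
    {l : Filter ℂ} (hl : Tendsto Complex.re l atBot) {f : ℂ → X}
    (hf : ∀ᶠ w in l, HasSum (fun i => Complex.exp (e i * w) • a i) (f w)) :
    Tendsto f l (𝓝 0) := by
  have he' : ∀ i, a i ≠ 0 → 0 ≤ e i := fun i hi => (he i hi).le
  have hre : ∀ᶠ w in l, w.re ≤ Real.log δ := hl.eventually_le_atBot _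
  have hnorm : Tendsto (fun w => ∑' i, ‖Complex.exp (e i * w) • a i‖) l (𝓝 0) := by
    rw [← tsum_zero (β := ι)]
    refine tendsto_tsum_of_dominated_convergence ha
      (fun i => tendsto_norm_cexp_ofReal_mul_smul hl (he i)) (hre.mono fun w hw i => ?_)
    rw [norm_norm]
    exact norm_cexp_ofReal_mul_smul_le hδ hw (he' i)
  refine squeeze_zero_norm' ?_ hnorm
  filter_upwards [hre, hf] with w hw hsum
  rw [← hsum.tsum_eq]
  exact norm_tsum_le_tsum_norm (summable_norm_cexp_ofReal_mul_smul hδ he' ha hw)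

theorem hasSum_cexp_sub_mul_smul_update [DecidableEq ι] {e : ι → ℝ} {a : ι → X} {w : ℂ} {s : X}
    (hs : HasSum (fun i => Complex.exp (e i * w) • a i) s) (j : ι) :
    HasSum (fun i => Complex.exp ((e i - e j : ℝ) * w) • Function.update a j 0 i)
      (Complex.exp (-(e j * w)) • s - a j) := by
  have hshift : HasSum (fun i => Complex.exp ((e i - e j : ℝ) * w) • a i)
      (Complex.exp (-(e j * w)) • s) := by
    convert hs.const_smul (Complex.exp (-(e j * w))) using 2 with i
    rw [smul_smul, ← Complex.exp_add]
    push_cast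
    ring_nf
  convert hshift.update j 0 using 1
  · ext i
    obtain rfl | hij := eq_or_ne i j
    · simp
    · simp only [Function.update_of_ne hij]
  · simp [sub_eq_neg_add]

theorem tendsto_cexp_neg_mul_smul_leadingCoeff (hδ : 0 < δ) {e : ι → ℝ} {a : ι → X} {j : ι}
    (hj : ∀ i ≠ j, a i ≠ 0 → e j < e i) (ha : Summable fun i => ‖a i‖ * δ ^ e i)
    {l : Filter ℂ} (hl : Tendsto Complex.re l atBot) {f : ℂ → X}
    (hf : ∀ᶠ w in l, HasSum (fun i => Complex.exp (e i * w) • a i) (f w)) :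
    Tendsto (fun w => Complex.exp (-(e j * w)) • f w) l (𝓝 (a j)) := by
  classical
  have hpos : ∀ i, Function.update a j 0 i ≠ 0 → 0 < e i - e j := fun i hi => by
    obtain rfl | hij := eq_or_ne i j
    · simp at hi
    · rw [Function.update_of_ne hij] at hi
      exact sub_pos.2 (hj i hij hi)
  exact tendsto_sub_nhds_zero_iff.1 <|
    tendsto_zero_of_hasSum_cexp_ofReal_mul_smul hδ hpos (summable_norm_update_mul_rpow_sub hδ ha j)
      hl (hf.mono fun _ hw => hasSum_cexp_sub_mul_smul_update hw j)

theorem summable_cexp_mul_smul_of_mem_Omega [CompleteSpace X] (hδ : 0 < δ) {σ : ENNReal}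
    {S : Set ℝ} (hS : S ⊆ Set.Ici 0) {a : ℝ → X}
    (ha : Summable fun α : S => ‖a α‖ * δ ^ (α : ℝ)) {w : ℂ} (hw : w ∈ Omega δ σ) :
    Summable fun α : S => Complex.exp ((α : ℝ) * w) • a α :=
  (summable_norm_cexp_ofReal_mul_smul hδ (fun α _ => hS α.2) ha hw.1.le).of_norm

theorem identity_theorem_generalized_power_series_general (hδ : 0 < δ) {S : Set ℝ} (hS : S.IsWF)
    {a : ℝ → X} (ha : Summable fun α : S => ‖a α‖ * δ ^ (α : ℝ))
    {l : Filter ℂ} [l.NeBot] (hl : Tendsto Complex.re l atBot)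
    (hzero : ∀ᶠ w in l, HasSum (fun α : S => Complex.exp ((α : ℝ) * w) • a α) 0) :
    ∀ α ∈ S, a α = 0 := by
  by_contra! hne
  have hsupp : {α ∈ S | a α ≠ 0}.IsWF := hS.mono (Set.sep_subset _ _)
  obtain ⟨hmem, hmin_ne⟩ := hsupp.min_mem hne
  let α₀ : S := ⟨hsupp.min hne, hmem⟩
  have hlt : ∀ α : S, α ≠ α₀ → a α ≠ 0 → (α₀ : ℝ) < α := fun α hα haα =>
    (hsupp.min_le hne ⟨α.2, haα⟩).lt_of_ne fun h => hα (Subtype.ext h.symm)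
  have hlim := tendsto_cexp_neg_mul_smul_leadingCoeff (a := fun α : S => a α) hδ hlt ha hl hzero
  simp only [smul_zero] at hlim
  exact hmin_ne (tendsto_nhds_unique hlim tendsto_const_nhds)

end

/-- Identity theorem for convergent generalized power series. -/
theorem identity_theorem_generalized_power_series
    {X : Type*} [NormedAddCommGroup X] [NormedSpace ℂ X] [CompleteSpace X]
    (δ : ℝ) (hδ : 0 < δ) (σ : ENNReal) (hσ : 0 < σ)
    (S : Set ℝ) (hSc : S.Countable) (hSwf : S.IsWF) (hS0 : S ⊆ Set.Ici 0)
    (a : ℝ → X)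
    (hconv : Summable fun α : S => ‖a (α : ℝ)‖ * δ ^ (α : ℝ))
    (f : ℂ → X)
    (hf : ∀ w ∈ Omega δ σ, f w = ∑' α : S, Complex.exp (((α : ℝ) : ℂ) * w) • a (α : ℝ))
    (wseq : ℕ → ℂ) (hw : ∀ n, wseq n ∈ Omega δ σ)
    (hre : Filter.Tendsto (fun n => (wseq n).re) Filter.atTop Filter.atBot)
    (hzero : ∀ n, f (wseq n) = 0) :
    (∀ α ∈ S, a α = 0) ∧ ∀ w ∈ Omega δ σ, f w = 0 := by
  have hsum : ∀ n, HasSum (fun α : S => Complex.exp ((α : ℝ) * wseq n) • a α) 0 := fun n => by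
    rw [← hzero n, hf _ (hw n)]
    exact (summable_cexp_mul_smul_of_mem_Omega hδ hS0 hconv (hw n)).hasSum
  have ha : ∀ α ∈ S, a α = 0 := identity_theorem_generalized_power_series_general hδ hSwf hconv
    (l := .map wseq .atTop) hre (Filter.eventually_map.2 (.of_forall hsum))
  exact ⟨ha, fun w hw => by simp [hf w hw, ha]⟩
end
end

section
/- Inverses of z-Hahn holomorphic functions (Theorem 2.12, z-case): Let R be a complex unital Banach algebra, δ > 0, σ ∈ (0,∞], and let f : Ω(δ,σ) → R be z-Hahn holomorphic, represented on Ω(δ',σ) by the normally convergent series f(w) = ∑_{α∈S} a_α e^{αw}. Assume that f(w) is invertible in R for every w ∈ Ω(δ,σ) and that the limit value f(0) = a_0 is invertible in R. Then the function w ↦ f(w)^{-1} is z-Hahn holomorphic: there exist δ'' ∈ (0,δ'], a countable well-ordered set S' ⊂ [0,∞), and coefficients (b_γ)_{γ∈S'} in R with ∑_{γ∈S'} ‖b_γ‖ (δ'')^γ < ∞ and f(w)^{-1} = ∑_{γ∈S'} b_γ e^{γw} for all w ∈ Ω(δ'',σ). -/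
noncomputable section

/-!
After multiplication by `a₀⁻¹` the function becomes `1 - c`, where `c` has only positive exponents,
so by dominated convergence the normal norm `∑ ‖c α‖ r ^ α` drops below `1` for small `r`. Expanding
every power in the Neumann series `∑ cⁿ` gives an absolutely convergent sum over words in the
exponents, which is regrouped according to the sum of the letters. The exponents that occur lie in
the additive monoid generated by the support of `c`, which is well-ordered by Higman's lemma.
Multiplying the coefficients by a character, such as `α ↦ exp (α w)`, commutes with the regrouping.
Hence one unweighted `ℓ¹` statement gives both the normal convergence of the inverse series and its
value at every point.
-/

open Filter Function Set Topology

section SumOverLists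

variable {ι R : Type*} [NormedRing R] {c : ι → R}

lemma norm_list_prod_map_le (c : ι → R) (l : List ι) :
    ‖(l.map c).prod‖ ≤ ‖(1 : R)‖ * (l.map (‖c ·‖)).prod := by
  induction l with
  | nil => simp
  | cons i l ih =>
    simp only [List.map_cons, List.prod_cons]
    calc ‖c i * (l.map c).prod‖
        ≤ ‖c i‖ * (‖(1 : R)‖ * (l.map (‖c ·‖)).prod) := norm_mul_le_of_le le_rfl ih
      _ = ‖(1 : R)‖ * (‖c i‖ * (l.map (‖c ·‖)).prod) := mul_left_comm _ _ _

lemma summable_norm_prod_map_ofFn (hc : Summable (‖c ·‖)) (n : ℕ) :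
    Summable fun v : Fin n → ι ↦ ‖((List.ofFn v).map c).prod‖ := by
  induction n with
  | zero => exact Summable.of_finite
  | succ n ih =>
    rw [← (Fin.consEquiv fun _ ↦ ι).summable_iff]
    simpa [comp_def, Fin.consEquiv, List.ofFn_cons] using hc.mul_norm ih

lemma tsum_prod_map_ofFn [CompleteSpace R] (hc : Summable (‖c ·‖)) (n : ℕ) :
    ∑' v : Fin n → ι, ((List.ofFn v).map c).prod = (∑' i, c i) ^ n := by
  induction n with
  | zero => simp
  | succ n ih =>
    rw [← (Fin.consEquiv fun _ ↦ ι).tsum_eq, pow_succ', ← ih,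
      tsum_mul_tsum_of_summable_norm hc (summable_norm_prod_map_ofFn hc n)]
    simp [Fin.consEquiv]

lemma summable_norm_prod_map_list (hc : Summable (‖c ·‖)) (hc1 : ∑' i, ‖c i‖ < 1) :
    Summable fun l : List ι ↦ ‖(l.map c).prod‖ := by
  have hcn : Summable fun i ↦ ‖‖c i‖‖ := by simpa only [norm_norm] using hc
  have hprod_nonneg (l : List ι) : 0 ≤ (l.map (‖c ·‖)).prod :=
    List.prod_nonneg <| by simp
  suffices Summable fun l : List ι ↦ (l.map (‖c ·‖)).prod from
    .of_nonneg_of_le (fun _ ↦ norm_nonneg _) (norm_list_prod_map_le c)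
      (this.mul_left _)
  refine List.equivSigmaTuple.symm.summable_iff.1 <|
    (summable_sigma_of_nonneg fun _ ↦ hprod_nonneg _).2
      ⟨fun n ↦ (summable_norm_prod_map_ofFn hcn n).of_norm, ?_⟩
  have hgeom : Summable fun n : ℕ ↦ (∑' i, ‖c i‖) ^ n :=
    summable_geometric_of_lt_one (tsum_nonneg fun _ ↦ norm_nonneg _) hc1
  exact hgeom.congr fun n ↦ (tsum_prod_map_ofFn hcn n).symm

lemma hasSum_prod_map_list [CompleteSpace R] (hc : Summable (‖c ·‖))
    (hc1 : ∑' i, ‖c i‖ < 1) :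
    HasSum (fun l : List ι ↦ (l.map c).prod) (Ring.inverse (1 - ∑' i, c i)) := by
  have hsum : Summable fun l : List ι ↦ (l.map c).prod :=
    (summable_norm_prod_map_list hc hc1).of_norm
  convert! hsum.hasSum using 1
  have hlt : ‖∑' i, c i‖ < 1 := (norm_tsum_le_tsum_norm hc).trans_lt hc1
  calc Ring.inverse (1 - ∑' i, c i)
      = ∑' n : ℕ, (∑' i, c i) ^ n := NormedRing.inverse_one_sub _ hlt
    _ = ∑' n : ℕ, ∑' v : Fin n → ι, ((List.ofFn v).map c).prod :=
        tsum_congr fun n ↦ (tsum_prod_map_ofFn hc n).symm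
    _ = ∑' p : Σ n, Fin n → ι, ((List.ofFn p.2).map c).prod :=
        (Summable.tsum_sigma (List.equivSigmaTuple.symm.summable_iff.2 hsum)).symm
    _ = ∑' l : List ι, (l.map c).prod := List.equivSigmaTuple.symm.tsum_eq fun l ↦ (l.map c).prod

end SumOverLists

section GeomCoeff

variable {M R : Type*} [AddMonoid M]

/-- The coefficient at `x` of the geometric series `∑ cⁿ` of a formal series `∑ c y • T ^ y`: each
word `l` in the exponents contributes the product of the coefficients of its letters at the
exponent `l.sum`. The order of the factors is kept, so `R` need not be commutative. -/
def geomCoeff [Semiring R] [TopologicalSpace R] (c : M → R) (x : M) : R :=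
  ∑' l : (List.sum ⁻¹' {x} : Set (List M)), ((l : List M).map c).prod

lemma support_geomCoeff_subset [Semiring R] [TopologicalSpace R] (c : M → R) :
    support (geomCoeff c) ⊆ AddSubmonoid.closure (support c) := by
  intro x hx
  obtain ⟨⟨l, rfl⟩, hl⟩ : ∃ l : (List.sum ⁻¹' {x} : Set (List M)),
      ((l : List M).map c).prod ≠ 0 := by
    by_contra! h
    exact hx (by simp [geomCoeff, h])
  refine AddSubmonoid.list_sum_mem _ fun y hy ↦ AddSubmonoid.subset_closure fun hcy ↦ hl ?_
  exact List.prod_eq_zero (List.mem_map.2 ⟨y, hy, hcy⟩)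

lemma geomCoeff_addChar_smul {𝕜 : Type*} [Field 𝕜] [Semiring R] [Algebra 𝕜 R] [TopologicalSpace R]
    [T2Space R] [ContinuousConstSMul 𝕜 R] (χ : AddChar M 𝕜) (c : M → R) :
    geomCoeff (fun x ↦ χ x • c x) = fun x ↦ χ x • geomCoeff c x := by
  have hprod (l : List M) : (l.map fun x ↦ χ x • c x).prod = χ l.sum • (l.map c).prod := by
    induction l with
    | nil => simp
    | cons x l ih =>
      simp only [List.map_cons, List.prod_cons, List.sum_cons, ih, smul_mul_smul_comm,
        χ.map_add_eq_mul]
  ext x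
  rw [geomCoeff, geomCoeff, ← tsum_const_smul'']
  refine tsum_congr fun ⟨l, hl⟩ ↦ ?_
  rw [hprod, show l.sum = x from hl]

variable [NormedRing R] {c : M → R}

lemma summable_norm_geomCoeff (hc : Summable (‖c ·‖)) (hc1 : ∑' x, ‖c x‖ < 1) :
    Summable fun x ↦ ‖geomCoeff c x‖ := by
  have hlist := summable_norm_prod_map_list hc hc1
  refine .of_nonneg_of_le (fun _ ↦ norm_nonneg _) (fun x ↦ ?_)
    (hlist.hasSum.tsum_fiberwise List.sum).summable
  exact norm_tsum_le_tsum_norm (hlist.subtype _)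

lemma hasSum_geomCoeff [CompleteSpace R] (hc : Summable (‖c ·‖)) (hc1 : ∑' x, ‖c x‖ < 1) :
    HasSum (geomCoeff c) (Ring.inverse (1 - ∑' x, c x)) :=
  (hasSum_prod_map_list hc hc1).tsum_fiberwise List.sum

end GeomCoeff

section NormalConvergence

variable {E : Type*} [NormedAddCommGroup E] {δ : ℝ} {a : ℝ → E}

/-- Normal convergence on the disc of radius `δ` of the generalized power series with coefficients
`a`. The coefficients are extended by zero to all of `ℝ`, so that the index set is the support. -/
structure IsNormallyConvergent (δ : ℝ) (a : ℝ → E) : Prop where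
  isWF_support : (support a).IsWF
  support_subset : support a ⊆ Ici 0
  summable : Summable fun α ↦ ‖a α‖ * δ ^ α

lemma isNormallyConvergent_single_zero (δ : ℝ) (x : E) :
    IsNormallyConvergent δ (Pi.single (0 : ℝ) x) where
  isWF_support := ((finite_singleton 0).subset Pi.support_single_subset).isWF
  support_subset := Pi.support_single_subset.trans (by simp)
  summable := summable_of_ne_finset_zero (s := {0}) fun α hα ↦ by
    simp [Finset.notMem_singleton.1 hα]

lemma IsNormallyConvergent.sub {b : ℝ → E} (ha : IsNormallyConvergent δ a)
    (hb : IsNormallyConvergent δ b) (hδ : 0 ≤ δ) : IsNormallyConvergent δ (a - b) where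
  isWF_support := (ha.isWF_support.union hb.isWF_support).mono (support_sub a b)
  support_subset := (support_sub a b).trans (union_subset ha.support_subset hb.support_subset)
  summable := .of_nonneg_of_le (fun _ ↦ by positivity)
    (fun α ↦ by rw [← add_mul]; gcongr; exact norm_sub_le _ _) (ha.summable.add hb.summable)

lemma norm_mul_rpow_le_norm_mul_rpow {r : ℝ} (ha : support a ⊆ Ici 0) (hr : 0 ≤ r)
    (hrδ : r ≤ δ) (α : ℝ) : ‖a α‖ * r ^ α ≤ ‖a α‖ * δ ^ α := by
  by_cases hα : a α = 0
  · simp [hα]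
  · gcongr
    exact ha hα

lemma IsNormallyConvergent.mono (ha : IsNormallyConvergent δ a) {r : ℝ} (hr : 0 ≤ r)
    (hrδ : r ≤ δ) : IsNormallyConvergent r a where
  isWF_support := ha.isWF_support
  support_subset := ha.support_subset
  summable := .of_nonneg_of_le (fun _ ↦ by positivity)
    (norm_mul_rpow_le_norm_mul_rpow ha.support_subset hr hrδ) ha.summable

lemma IsNormallyConvergent.countable_support (ha : IsNormallyConvergent δ a) (hδ : 0 < δ) :
    (support a).Countable := by
  refine ha.summable.countable_support.mono fun α hα ↦ ?_
  exact mul_ne_zero (norm_ne_zero_iff.2 hα) (Real.rpow_pos_of_pos hδ α).ne'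

lemma IsNormallyConvergent.tendsto_tsum_norm_mul_rpow (ha : IsNormallyConvergent δ a)
    (ha0 : a 0 = 0) (hδ : 0 < δ) :
    Tendsto (fun r : ℝ ↦ ∑' α, ‖a α‖ * r ^ α) (𝓝[>] 0) (𝓝 0) := by
  suffices Tendsto (fun r : ℝ ↦ ∑' α, ‖a α‖ * r ^ α) (𝓝[>] 0) (𝓝 (∑' _ : ℝ, 0)) by
    simpa only [tsum_zero] using this
  refine tendsto_tsum_of_dominated_convergence ha.summable (fun α ↦ ?_) ?_
  · by_cases hα : a α = 0
    · simp [hα]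
    · have hα0 : 0 < α := (ha.support_subset hα).lt_of_ne (by rintro rfl; exact hα ha0)
      have hcont : ContinuousAt (fun r : ℝ ↦ ‖a α‖ * r ^ α) 0 :=
        (Real.continuousAt_rpow_const 0 α (.inr hα0.le)).const_mul _
      simpa [Real.zero_rpow hα0.ne'] using hcont.tendsto.mono_left nhdsWithin_le_nhds
  · filter_upwards [Ioo_mem_nhdsGT hδ] with r hr α
    rw [Real.norm_of_nonneg (mul_nonneg (norm_nonneg _) (Real.rpow_nonneg hr.1.le α))]
    exact norm_mul_rpow_le_norm_mul_rpow ha.support_subset hr.1.le hr.2.le α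

lemma IsNormallyConvergent.exists_tsum_lt_one (ha : IsNormallyConvergent δ a) (ha0 : a 0 = 0)
    (hδ : 0 < δ) : ∃ r ∈ Ioc 0 δ, ∑' α, ‖a α‖ * r ^ α < 1 :=
  (Filter.Eventually.and (Ioc_mem_nhdsGT hδ) <|
    (ha.tendsto_tsum_norm_mul_rpow ha0 hδ).eventually_lt_const one_pos).exists

end NormalConvergence

section Evaluation

variable {E : Type*} [NormedAddCommGroup E] [NormedSpace ℂ E] {δ : ℝ} {a : ℝ → E} {w : ℂ}

/-- The power `z ^ α` as an additive character in the exponent `α`, where `z = exp w` is a point of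
the logarithmic cover. -/
def cexpMulChar (w : ℂ) : AddChar ℝ ℂ where
  toFun α := Complex.exp (α * w)
  map_zero_eq_one' := by simp
  map_add_eq_mul' α β := by rw [Complex.ofReal_add, add_mul, Complex.exp_add]

lemma cexpMulChar_apply (w : ℂ) (α : ℝ) : cexpMulChar w α = Complex.exp (α * w) := rfl

lemma norm_cexpMulChar (w : ℂ) (α : ℝ) : ‖cexpMulChar w α‖ = Real.exp w.re ^ α := by
  rw [cexpMulChar_apply, Complex.norm_exp, Complex.re_ofReal_mul, mul_comm, Real.exp_mul]

/-- The value of the generalized power series with coefficients `a` at the point `w` of the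
logarithmic cover. It is the junk value `0` where the series is not summable. -/
def hahnSum (a : ℝ → E) (w : ℂ) : E :=
  ∑' α, cexpMulChar w α • a α

lemma IsNormallyConvergent.summable_norm_cexpMulChar_smul (ha : IsNormallyConvergent δ a)
    (hw : Real.exp w.re ≤ δ) : Summable fun α ↦ ‖cexpMulChar w α • a α‖ := by
  simpa only [norm_smul, norm_cexpMulChar, mul_comm] using
    (ha.mono (Real.exp_pos _).le hw).summable

lemma IsNormallyConvergent.tsum_norm_cexpMulChar_smul_le (ha : IsNormallyConvergent δ a)
    (hw : Real.exp w.re ≤ δ) : ∑' α, ‖cexpMulChar w α • a α‖ ≤ ∑' α, ‖a α‖ * δ ^ α := by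
  refine (ha.summable_norm_cexpMulChar_smul hw).tsum_le_tsum (fun α ↦ ?_) ha.summable
  rw [norm_smul, norm_cexpMulChar, mul_comm]
  exact norm_mul_rpow_le_norm_mul_rpow ha.support_subset (Real.exp_pos _).le hw α

lemma hahnSum_sub {b : ℝ → E} [CompleteSpace E] (ha : IsNormallyConvergent δ a)
    (hb : IsNormallyConvergent δ b) (hw : Real.exp w.re ≤ δ) :
    hahnSum (a - b) w = hahnSum a w - hahnSum b w := by
  simp only [hahnSum, Pi.sub_apply, smul_sub]
  exact (ha.summable_norm_cexpMulChar_smul hw).of_norm.tsum_sub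
    (hb.summable_norm_cexpMulChar_smul hw).of_norm

lemma hahnSum_single_zero (x : E) (w : ℂ) : hahnSum (Pi.single 0 x) w = x := by
  rw [hahnSum, tsum_eq_single 0 fun α hα ↦ by simp [hα]]
  simp

variable {F : Type*} [NormedAddCommGroup F] [NormedSpace ℂ F]

lemma IsNormallyConvergent.clm_comp (T : E →L[ℂ] F) (ha : IsNormallyConvergent δ a) (hδ : 0 ≤ δ) :
    IsNormallyConvergent δ (T ∘ a) where
  isWF_support := ha.isWF_support.mono <| support_comp_subset (map_zero T) a
  support_subset := (support_comp_subset (map_zero T) a).trans ha.support_subset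
  summable := .of_nonneg_of_le (fun _ ↦ by positivity)
    (fun α ↦ by rw [← mul_assoc]; gcongr; exact T.le_opNorm _) (ha.summable.mul_left ‖T‖)

lemma hahnSum_clm_comp [CompleteSpace E] (T : E →L[ℂ] F) (ha : IsNormallyConvergent δ a)
    (hw : Real.exp w.re ≤ δ) : hahnSum (T ∘ a) w = T (hahnSum a w) := by
  rw [hahnSum, hahnSum, T.map_tsum (ha.summable_norm_cexpMulChar_smul hw).of_norm]
  simp only [comp_apply, map_smul]

end Evaluation

section Inversion

variable {R : Type*} [NormedRing R] [NormedAlgebra ℂ R] {δ r : ℝ} {a c : ℝ → R}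

lemma isNormallyConvergent_geomCoeff (hr : 0 < r) (hc : IsNormallyConvergent r c)
    (hc1 : ∑' α, ‖c α‖ * r ^ α < 1) : IsNormallyConvergent r (geomCoeff c) where
  isWF_support := (hc.isWF_support.isPWO.addSubmonoid_closure hc.support_subset).isWF.mono
    (support_geomCoeff_subset c)
  support_subset := (support_geomCoeff_subset c).trans <|
    (AddSubmonoid.closure_le (S := AddSubmonoid.nonneg ℝ)).2 hc.support_subset
  summable := by
    have hw : Real.exp ((Real.log r : ℂ).re) = r := by rw [Complex.ofReal_re, Real.exp_log hr]
    have hsum := summable_norm_geomCoeff (hc.summable_norm_cexpMulChar_smul hw.le)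
      ((hc.tsum_norm_cexpMulChar_smul_le hw.le).trans_lt hc1)
    simpa only [geomCoeff_addChar_smul, norm_smul, norm_cexpMulChar, hw, mul_comm] using hsum

variable [CompleteSpace R]

lemma isUnit_one_sub_hahnSum {w : ℂ} (hc : IsNormallyConvergent r c)
    (hc1 : ∑' α, ‖c α‖ * r ^ α < 1) (hw : Real.exp w.re ≤ r) : IsUnit (1 - hahnSum c w) :=
  isUnit_one_sub_of_norm_lt_one <|
    (norm_tsum_le_tsum_norm (hc.summable_norm_cexpMulChar_smul hw)).trans_lt <|
      (hc.tsum_norm_cexpMulChar_smul_le hw).trans_lt hc1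

lemma hahnSum_geomCoeff {w : ℂ} (hc : IsNormallyConvergent r c)
    (hc1 : ∑' α, ‖c α‖ * r ^ α < 1) (hw : Real.exp w.re ≤ r) :
    hahnSum (geomCoeff c) w = Ring.inverse (1 - hahnSum c w) := by
  have hsum := hasSum_geomCoeff (hc.summable_norm_cexpMulChar_smul hw)
    ((hc.tsum_norm_cexpMulChar_smul_le hw).trans_lt hc1)
  rw [geomCoeff_addChar_smul] at hsum
  exact hsum.tsum_eq

theorem IsNormallyConvergent.exists_inverse (ha : IsNormallyConvergent δ a) (hδ : 0 < δ)
    (h0 : IsUnit (a 0)) :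
    ∃ r ∈ Ioc 0 δ, ∃ b : ℝ → R, IsNormallyConvergent r b ∧ ∀ w : ℂ, Real.exp w.re ≤ r →
      IsUnit (hahnSum a w) ∧ Ring.inverse (hahnSum a w) = hahnSum b w := by
  obtain ⟨u, hu⟩ := h0
  let leftMul : R →L[ℂ] R := ContinuousLinearMap.mul ℂ R ↑u⁻¹
  let rightMul : R →L[ℂ] R := (ContinuousLinearMap.mul ℂ R).flip ↑u⁻¹
  let c : ℝ → R := Pi.single 0 1 - leftMul ∘ a
  have hc : IsNormallyConvergent δ c :=
    (isNormallyConvergent_single_zero δ 1).sub (ha.clm_comp leftMul hδ.le) hδ.le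
  have hc0 : c 0 = 0 := by simp [c, leftMul, ← hu]
  obtain ⟨r, ⟨hr, hrδ⟩, hc1⟩ := hc.exists_tsum_lt_one hc0 hδ
  have hcr : IsNormallyConvergent r c := hc.mono hr.le hrδ
  have hb := isNormallyConvergent_geomCoeff hr hcr hc1
  refine ⟨r, ⟨hr, hrδ⟩, rightMul ∘ geomCoeff c, hb.clm_comp rightMul hr.le, fun w hw ↦ ?_⟩
  have hcw : 1 - hahnSum c w = ↑u⁻¹ * hahnSum a w := by
    rw [hahnSum_sub (isNormallyConvergent_single_zero δ 1) (ha.clm_comp leftMul hδ.le)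
      (hw.trans hrδ), hahnSum_single_zero, hahnSum_clm_comp leftMul ha (hw.trans hrδ),
      sub_sub_cancel]
    rfl
  obtain ⟨v, hv⟩ := isUnit_one_sub_hahnSum hcr hc1 hw
  have haw : hahnSum a w = ↑(u * v) := by rw [Units.val_mul, hv, hcw, Units.mul_inv_cancel_left]
  have hbw : hahnSum (rightMul ∘ geomCoeff c) w = ↑(v⁻¹ * u⁻¹) := by
    rw [hahnSum_clm_comp rightMul hb hw, hahnSum_geomCoeff hcr hc1 hw, ← hv, Ring.inverse_unit]
    rfl
  exact ⟨haw ▸ (u * v).isUnit, by rw [haw, hbw, Ring.inverse_unit, mul_inv_rev]⟩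

end Inversion

section IndexSet

variable {E : Type*} [NormedAddCommGroup E] {δ : ℝ} {S : Set ℝ} {a : ℝ → E}

lemma summable_subtype_norm_mul_rpow_iff (hS : support a ⊆ S) :
    (Summable fun α : S ↦ ‖a α‖ * δ ^ (α : ℝ)) ↔ Summable fun α ↦ ‖a α‖ * δ ^ α :=
  exists_congr fun _ ↦ hasSum_subtype_iff_of_support_subset fun _ hα ↦
    hS <| norm_ne_zero_iff.1 <| left_ne_zero_of_mul hα

lemma tsum_subtype_cexp_smul_eq_hahnSum [NormedSpace ℂ E] (hS : support a ⊆ S) (w : ℂ) :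
    ∑' α : S, Complex.exp (((α : ℝ) : ℂ) * w) • a α = hahnSum a w :=
  tsum_subtype_eq_of_support_subset (f := fun α ↦ cexpMulChar w α • a α) <|
    (support_smul_subset_right _ _).trans hS

end IndexSet

theorem inverse_zHahn_holomorphic_general
    {R : Type*} [NormedRing R] [NormedAlgebra ℂ R] [CompleteSpace R]
    {σ : ENNReal} {δ : ℝ} (hδ : 0 < δ)
    {S : Set ℝ} (hSwf : S.IsWF) (hS0 : S ⊆ Ici 0)
    {a : ℝ → R} (hsupp : ∀ α ∉ S, a α = 0)
    (hsum : Summable fun α : S ↦ ‖a (α : ℝ)‖ * δ ^ (α : ℝ))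
    {f : ℂ → R}
    (hf : ∀ w ∈ Omega δ σ, f w = ∑' α : S, Complex.exp (((α : ℝ) : ℂ) * w) • a (α : ℝ))
    (h0 : IsUnit (a 0)) :
    ∃ δ' ∈ Ioc 0 δ, ∃ S' : Set ℝ, S'.Countable ∧ S'.IsWF ∧ S' ⊆ Ici 0 ∧
      ∃ b : ℝ → R,
        (Summable fun γ : S' ↦ ‖b (γ : ℝ)‖ * δ' ^ (γ : ℝ)) ∧
        ∀ w ∈ Omega δ' σ, IsUnit (f w) ∧
          Ring.inverse (f w) = ∑' γ : S', Complex.exp (((γ : ℝ) : ℂ) * w) • b (γ : ℝ) := by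
  have hS : support a ⊆ S := support_subset_iff'.2 hsupp
  have ha : IsNormallyConvergent δ a :=
    ⟨hSwf.mono hS, hS.trans hS0, (summable_subtype_norm_mul_rpow_iff hS).1 hsum⟩
  obtain ⟨r, ⟨hr, hrδ⟩, b, hb, hab⟩ := ha.exists_inverse hδ h0
  refine ⟨r, ⟨hr, hrδ⟩, support b, hb.countable_support hr, hb.isWF_support, hb.support_subset, b,
    (summable_subtype_norm_mul_rpow_iff subset_rfl).2 hb.summable, fun w ⟨hre, him⟩ ↦ ?_⟩
  have hwδ : w ∈ Omega δ σ := ⟨hre.trans_le (Real.log_le_log hr hrδ), him⟩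
  rw [hf w hwδ, tsum_subtype_cexp_smul_eq_hahnSum hS, tsum_subtype_cexp_smul_eq_hahnSum subset_rfl]
  exact hab w ((Real.lt_log_iff_exp_lt hr).1 hre).le

/-- Inverses of z-Hahn holomorphic functions (Theorem 2.12, z-case). -/
theorem inverse_zHahn_holomorphic
    {R : Type*} [NormedRing R] [NormedAlgebra ℂ R] [CompleteSpace R]
    (δ : ℝ) (hδ : 0 < δ) (σ : ENNReal) (hσ : 0 < σ)
    (δ' : ℝ) (hδ' : δ' ∈ Set.Ioc 0 δ)
    (S : Set ℝ) (hSc : S.Countable) (hSwf : S.IsWF) (hS0 : S ⊆ Set.Ici 0)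
    (a : ℝ → R) (hsupp : ∀ α ∉ S, a α = 0)
    (hsum : Summable fun α : S => ‖a (α : ℝ)‖ * δ' ^ (α : ℝ))
    (f : ℂ → R)
    (hhol : DifferentiableOn ℂ f (Omega δ σ))
    (hf : ∀ w ∈ Omega δ' σ, f w = ∑' α : S, Complex.exp (((α : ℝ) : ℂ) * w) • a (α : ℝ))
    (hinv : ∀ w ∈ Omega δ σ, IsUnit (f w))
    (h0 : IsUnit (a 0)) :
    ∃ δ'' ∈ Set.Ioc 0 δ', ∃ S' : Set ℝ, S'.Countable ∧ S'.IsWF ∧ S' ⊆ Set.Ici 0 ∧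
      ∃ b : ℝ → R,
        (Summable fun γ : S' => ‖b (γ : ℝ)‖ * δ'' ^ (γ : ℝ)) ∧
        ∀ w ∈ Omega δ'' σ,
          Ring.inverse (f w) = ∑' γ : S', Complex.exp (((γ : ℝ) : ℂ) * w) • b (γ : ℝ) := by
  obtain ⟨r, hr, S', hS'c, hS'wf, hS'0, b, hb, hfb⟩ :=
    inverse_zHahn_holomorphic_general hδ'.1 hSwf hS0 hsupp hsum hf h0
  exact ⟨r, hr, S', hS'c, hS'wf, hS'0, b, hb, fun w hw ↦ (hfb w hw).2⟩
end
end

section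
/- Composition with holomorphic functions (Theorem 2.13, z-case): Let δ > 0, σ ∈ (0,∞], let f : Ω(δ,σ) → ℂ be z-Hahn holomorphic with value f(0) at zero, and let h be a holomorphic function on an open set U ⊂ ℂ containing f(0). Then h∘f is z-Hahn holomorphic on its domain: there exist δ'' > 0 with f(Ω(δ'',σ)) ⊂ U, a countable well-ordered set S' ⊂ [0,∞), and complex coefficients (c_γ)_{γ∈S'} with ∑_{γ∈S'} |c_γ| (δ'')^γ < ∞ such that h(f(w)) = ∑_{γ∈S'} c_γ e^{γw} for all w ∈ Ω(δ'',σ). -/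
noncomputable section

/-!
Write `f = f(0) + g`. All exponents of `g` are positive, so the majorant `∑ ‖a_α‖ x ^ α` of `g`
tends to `0` with `x`; choose `x` for which it is smaller than the radius of convergence of the
Taylor series `∑ p n` of `h` at `f(0)`. Substituting the expansion of `g` and multiplying out gives
an absolutely convergent series over `Σ n, (Fin n → S)`, in which the tuple `(α₁, …, αₙ)` carries
the exponent `α₁ + ⋯ + αₙ`. These exponents lie in the additive monoid generated by `S`, which is
well-ordered by Higman's lemma, and grouping the terms with equal exponents yields the expansion
of `h ∘ f`.
-/

open Filter Set Topology

section MultilinearSeries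

variable {κ : Type*} {ι : κ → Type*}

theorem hasSum_multilinear_apply [Finite κ] {𝕜 : Type*} [Semiring 𝕜] {E : κ → Type*}
    [∀ k, AddCommMonoid (E k)] [∀ k, Module 𝕜 (E k)] [∀ k, TopologicalSpace (E k)] {F : Type*}
    [AddCommMonoid F] [Module 𝕜 F] [TopologicalSpace F] [T2Space F]
    (m : ContinuousMultilinearMap 𝕜 E F) {t : ∀ k, ι k → E k} {s : ∀ k, E k}
    (ht : ∀ k, HasSum (t k) (s k))
    (hm : Summable fun v : ∀ k, ι k => m fun k => t k (v k)) :
    HasSum (fun v : ∀ k, ι k => m fun k => t k (v k)) (m s) := by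
  classical
  cases nonempty_fintype κ
  have boxes_atTop : Tendsto (Fintype.piFinset : (∀ k, Finset (ι k)) → Finset (∀ k, ι k))
      atTop atTop :=
    tendsto_atTop_finset_of_monotone (fun _ _ hAB => Fintype.piFinset_subset _ _ hAB)
      fun v => ⟨fun k => {v k}, by simp⟩
  have partial_sums : Tendsto (fun A : ∀ k, Finset (ι k) => fun k => ∑ i ∈ A k, t k i)
      atTop (𝓝 s) :=
    tendsto_pi_nhds.2 fun k => (ht k).comp <|
      tendsto_atTop_atTop_of_monotone (Function.monotone_eval k)
        fun A => (Function.surjective_eval k A).imp fun _ hB => hB.ge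
  have box_sums : Tendsto (fun A : ∀ k, Finset (ι k) =>
      ∑ v ∈ Fintype.piFinset A, m fun k => t k (v k)) atTop (𝓝 (m s)) := by
    simpa only [Function.comp_def, m.map_sum_finset] using
      (m.coe_continuous.tendsto s).comp partial_sums
  rw [← tendsto_nhds_unique (hm.hasSum.comp boxes_atTop) box_sums]
  exact hm.hasSum

theorem summable_prod_apply [Fintype κ] {u : ∀ k, ι k → ℝ} (hu₀ : ∀ k i, 0 ≤ u k i)
    (hu : ∀ k, Summable (u k)) : Summable fun v : ∀ k, ι k => ∏ k, u k (v k) := by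
  classical
  refine summable_of_sum_le (c := ∏ k, ∑' i, u k i)
    (fun v => Finset.prod_nonneg fun k _ => hu₀ k (v k)) fun B => ?_
  calc ∑ v ∈ B, ∏ k, u k (v k)
      ≤ ∑ v ∈ Fintype.piFinset fun k => B.image (· k), ∏ k, u k (v k) :=
        Finset.sum_le_sum_of_subset_of_nonneg
          (fun v hv => Fintype.mem_piFinset.2 fun k => Finset.mem_image_of_mem (· k) hv)
          fun v _ _ => Finset.prod_nonneg fun k _ => hu₀ k (v k)
    _ = ∏ k, ∑ i ∈ B.image (· k), u k i := (Finset.prod_univ_sum _ _).symm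
    _ ≤ ∏ k, ∑' i, u k i :=
        Finset.prod_le_prod (fun k _ => Finset.sum_nonneg fun i _ => hu₀ k i)
          fun k _ => (hu k).sum_le_tsum _ fun i _ => hu₀ k i

theorem hasSum_prod_apply [Fintype κ] {u : ∀ k, ι k → ℝ} (hu₀ : ∀ k i, 0 ≤ u k i)
    (hu : ∀ k, Summable (u k)) :
    HasSum (fun v : ∀ k, ι k => ∏ k, u k (v k)) (∏ k, ∑' i, u k i) :=
  hasSum_multilinear_apply (ContinuousMultilinearMap.mkPiAlgebra ℝ κ ℝ)
    (fun k => (hu k).hasSum) (summable_prod_apply hu₀ hu)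

end MultilinearSeries

section PowerSeries

variable {𝕜 E F ι : Type*} [NontriviallyNormedField 𝕜] [NormedAddCommGroup E] [NormedSpace 𝕜 E]
  [NormedAddCommGroup F] [NormedSpace 𝕜 F] {p : FormalMultilinearSeries 𝕜 E F} {u : ι → ℝ}

theorem summable_sigma_norm_mul_prod (hu₀ : ∀ i, 0 ≤ u i) (hu : Summable u)
    (hup : ENNReal.ofReal (∑' i, u i) < p.radius) :
    Summable fun v : Σ n, (Fin n → ι) => ‖p v.1‖ * ∏ j, u (v.2 j) := by
  have tuple_sum (n : ℕ) : HasSum (fun v : Fin n → ι => ‖p n‖ * ∏ j, u (v j))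
      (‖p n‖ * (∑' i, u i) ^ n) := by
    simpa using (hasSum_prod_apply (fun _ : Fin n => hu₀) fun _ => hu).mul_left ‖p n‖
  refine (summable_sigma_of_nonneg fun v =>
    mul_nonneg (norm_nonneg _) (Finset.prod_nonneg fun j _ => hu₀ _)).2
      ⟨fun n => (tuple_sum n).summable, ?_⟩
  simp only [(tuple_sum _).tsum_eq]
  simpa only [Real.coe_toNNReal _ (tsum_nonneg hu₀)] using p.summable_norm_mul_pow hup

theorem hasSum_sigma_powerSeries_apply [CompleteSpace F] {h : E → F} {y s : E} {r : ENNReal}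
    (hp : HasFPowerSeriesOnBall h p y r) {t : ι → E} (ht : HasSum t s) (htu : ∀ i, ‖t i‖ ≤ u i)
    (hu : Summable u) (hur : ENNReal.ofReal (∑' i, u i) < r) :
    HasSum (fun v : Σ n, (Fin n → ι) => p v.1 fun j => t (v.2 j)) (h (y + s)) := by
  have hu₀ (i : ι) : 0 ≤ u i := (norm_nonneg _).trans (htu i)
  have summable_tuples : Summable fun v : Σ n, (Fin n → ι) => p v.1 fun j => t (v.2 j) :=
    .of_norm_bounded (summable_sigma_norm_mul_prod hu₀ hu (hur.trans_le hp.r_le)) fun v =>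
      (p v.1).le_opNorm_mul_prod_of_le fun j => htu (v.2 j)
  have hs : s ∈ Metric.eball (0 : E) r := by
    rw [Metric.mem_eball, edist_zero_right, ← ofReal_norm]
    exact (ENNReal.ofReal_le_ofReal (ht.norm_le_of_bounded hu.hasSum htu)).trans_lt hur
  have tuple_sum (n : ℕ) :
      HasSum (fun v : Fin n → ι => p n fun j => t (v j)) (p n fun _ => s) :=
    hasSum_multilinear_apply (p n) (fun _ => ht) (summable_tuples.sigma_factor n)
  exact (hp.hasSum hs).sigma_of_hasSum tuple_sum summable_tuples

end PowerSeries

theorem hasSum_subtype_sdiff_singleton {ι G : Type*} [AddCommGroup G] [TopologicalSpace G]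
    [IsTopologicalAddGroup G] {f : ι → G} {S : Set ι} (hf : ∀ i ∉ S, f i = 0) {s : G}
    (hs : HasSum (fun i : S => f i) s) (b : ι) :
    HasSum (fun i : ↥(S \ {b}) => f i) (s - f b) := by
  classical
  have sum_all : HasSum f s :=
    (hasSum_subtype_iff_of_support_subset (Function.support_subset_iff'.2 hf)).1 hs
  have sum_update : HasSum (Function.update f b 0) (s - f b) := by
    simpa [sub_eq_neg_add] using sum_all.update b 0
  have support_update : Function.support (Function.update f b 0) ⊆ S \ {b} := by
    refine Function.support_subset_iff'.2 fun i hi => ?_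
    rcases eq_or_ne i b with rfl | hib
    · simp
    · simpa [hib] using hf i fun hiS => hi ⟨hiS, hib⟩
  exact ((hasSum_subtype_iff_of_support_subset support_update).2 sum_update).congr_fun
    fun i => (Function.update_of_ne i.2.2 _ _).symm

theorem hasSum_range_tsum_fiber {ι κ G : Type*} [AddCommGroup G] [UniformSpace G]
    [IsUniformAddGroup G] [CompleteSpace G] [T2Space G] {f : ι → G} {s : G} {g : ι → κ}
    (hf : HasSum f s) : HasSum (fun k : range g => ∑' i : g ⁻¹' {(k : κ)}, f i) s := by
  refine (hasSum_subtype_iff_of_support_subset ?_).2 (hf.tsum_fiberwise g)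
  refine Function.support_subset_iff'.2 fun k hk => ?_
  rw [preimage_singleton_eq_empty.2 hk, tsum_empty]

theorem tendsto_tsum_mul_rpow_zero {ι : Type*} {u E : ι → ℝ} (hE : ∀ i, 0 < E i)
    (hu₀ : ∀ i, 0 ≤ u i) {x : ℝ} (hx : 0 < x) (hu : Summable fun i => u i * x ^ E i) :
    Tendsto (fun y : ℝ => ∑' i, u i * y ^ E i) (𝓝[>] 0) (𝓝 0) := by
  have termwise (i : ι) : Tendsto (fun y : ℝ => u i * y ^ E i) (𝓝[>] 0) (𝓝 0) := by
    have rpow_zero : Tendsto (fun y : ℝ => y ^ E i) (𝓝 0) (𝓝 0) := by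
      simpa [(hE i).ne'] using (Real.continuousAt_rpow_const 0 (E i) (.inr (hE i).le)).tendsto
    simpa using (rpow_zero.mono_left nhdsWithin_le_nhds).const_mul (u i)
  have dominated : ∀ᶠ y : ℝ in 𝓝[>] 0, ∀ i, ‖u i * y ^ E i‖ ≤ u i * x ^ E i := by
    filter_upwards [Ioc_mem_nhdsGT hx] with y hy i
    rw [Real.norm_of_nonneg (mul_nonneg (hu₀ i) (Real.rpow_nonneg hy.1.le _))]
    exact mul_le_mul_of_nonneg_left (Real.rpow_le_rpow hy.1.le hy.2 (hE i).le) (hu₀ i)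
  simpa using tendsto_tsum_of_dominated_convergence hu termwise dominated

theorem norm_cexp_smul_le {X : Type*} [NormedAddCommGroup X] [NormedSpace ℂ X] {x : ℝ} (hx : 0 < x)
    {σ : ENNReal} {w : ℂ} (hw : w ∈ Omega x σ) {α : ℝ} (hα : 0 ≤ α) (b : X) :
    ‖Complex.exp (α * w) • b‖ ≤ ‖b‖ * x ^ α := by
  have norm_cexp_le : ‖Complex.exp (α * w)‖ ≤ x ^ α := by
    rw [Complex.norm_exp, Complex.re_ofReal_mul, Real.rpow_def_of_pos hx, mul_comm (Real.log x)]
    exact Real.exp_le_exp.2 (mul_le_mul_of_nonneg_left hw.1.le hα)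
  rw [norm_smul, mul_comm]
  exact mul_le_mul_of_nonneg_left norm_cexp_le (norm_nonneg b)

theorem Omega_subset_Omega {x y : ℝ} (hy : 0 < y) (hyx : y ≤ x) (σ : ENNReal) :
    Omega y σ ⊆ Omega x σ :=
  fun _ hw => ⟨hw.1.trans_le (Real.log_le_log hy hyx), hw.2⟩

/-- `HasNormalExpansion x σ E d f` says that the series `∑ i, e ^ (E i * w) • d i` with nonnegative
exponents converges normally on `Omega x σ`, with sum `f`. The exponents form a family that may
repeat values, because multiplying out powers of an expansion produces repeated exponents; a
generalized power series with exponents in `S` is the case where `E` is the inclusion of `S`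
into `ℝ`. -/
structure HasNormalExpansion {ι X : Type*} [NormedAddCommGroup X] [NormedSpace ℂ X]
    (x : ℝ) (σ : ENNReal) (E : ι → ℝ) (d : ι → X) (f : ℂ → X) : Prop where
  radius_pos : 0 < x
  exponent_nonneg : ∀ i, 0 ≤ E i
  summable_majorant : Summable fun i => ‖d i‖ * x ^ E i
  hasSum : ∀ w ∈ Omega x σ, HasSum (fun i => Complex.exp (E i * w) • d i) (f w)

/-- The coefficient of `e ^ (γ * w)` after terms with equal exponents are collected in the series
`∑ i, e ^ (E i * w) • d i`. It is `0` when `γ` is not an exponent. -/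
def collectedCoeff {ι X : Type*} [AddCommMonoid X] [TopologicalSpace X] (E : ι → ℝ) (d : ι → X)
    (γ : ℝ) : X :=
  ∑' i : E ⁻¹' {γ}, d i

namespace HasNormalExpansion

variable {ι X : Type*} [NormedAddCommGroup X] [NormedSpace ℂ X] {x : ℝ} {σ : ENNReal}
  {E : ι → ℝ} {d : ι → X} {f : ℂ → X}

theorem of_eq_tsum [CompleteSpace X] (hx : 0 < x) (hE : ∀ i, 0 ≤ E i)
    (hd : Summable fun i => ‖d i‖ * x ^ E i)
    (hf : ∀ w ∈ Omega x σ, f w = ∑' i, Complex.exp (E i * w) • d i) :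
    HasNormalExpansion x σ E d f where
  radius_pos := hx
  exponent_nonneg := hE
  summable_majorant := hd
  hasSum w hw := by
    rw [hf w hw]
    exact (Summable.of_norm_bounded hd fun i => norm_cexp_smul_le hx hw (hE i) (d i)).hasSum

theorem norm_term_le (hf : HasNormalExpansion x σ E d f) {w : ℂ} (hw : w ∈ Omega x σ) (i : ι) :
    ‖Complex.exp (E i * w) • d i‖ ≤ ‖d i‖ * x ^ E i :=
  norm_cexp_smul_le hf.radius_pos hw (hf.exponent_nonneg i) (d i)

theorem norm_apply_le (hf : HasNormalExpansion x σ E d f) {w : ℂ} (hw : w ∈ Omega x σ) :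
    ‖f w‖ ≤ ∑' i, ‖d i‖ * x ^ E i :=
  (hf.hasSum w hw).norm_le_of_bounded hf.summable_majorant.hasSum (hf.norm_term_le hw)

theorem mono (hf : HasNormalExpansion x σ E d f) {y : ℝ} (hy : 0 < y) (hyx : y ≤ x) :
    HasNormalExpansion y σ E d f where
  radius_pos := hy
  exponent_nonneg := hf.exponent_nonneg
  summable_majorant := by
    refine .of_nonneg_of_le (fun i => by positivity) (fun i => ?_) hf.summable_majorant
    exact mul_le_mul_of_nonneg_left (Real.rpow_le_rpow hy.le hyx (hf.exponent_nonneg i))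
      (norm_nonneg _)
  hasSum w hw := hf.hasSum w (Omega_subset_Omega hy hyx σ hw)

theorem exists_radius_majorant_lt (hf : HasNormalExpansion x σ E d f) (hE : ∀ i, 0 < E i)
    {r : ENNReal} (hr : 0 < r) :
    ∃ y ∈ Ioc 0 x, ENNReal.ofReal (∑' i, ‖d i‖ * y ^ E i) < r := by
  have majorant_zero : Tendsto (fun y : ℝ => ENNReal.ofReal (∑' i, ‖d i‖ * y ^ E i))
      (𝓝[>] 0) (𝓝 0) := by
    simpa using ENNReal.tendsto_ofReal (tendsto_tsum_mul_rpow_zero hE (fun i => norm_nonneg (d i))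
      hf.radius_pos hf.summable_majorant)
  exact ((eventually_mem_set.2 (Ioc_mem_nhdsGT hf.radius_pos)).and
    (majorant_zero.eventually_lt_const hr)).exists

theorem sub_constantTerm {S : Set ℝ} {a : ℝ → X} (ha : ∀ α ∉ S, a α = 0)
    (hf : HasNormalExpansion x σ ((↑) : S → ℝ) (fun α => a α) f) :
    HasNormalExpansion x σ ((↑) : ↥(S \ {0}) → ℝ) (fun α => a α) fun w => f w - a 0 where
  radius_pos := hf.radius_pos
  exponent_nonneg α := hf.exponent_nonneg ⟨α, α.2.1⟩
  summable_majorant :=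
    hf.summable_majorant.comp_injective (inclusion_injective (sdiff_subset (s := S) (t := {0})))
  hasSum w hw := by
    simpa using hasSum_subtype_sdiff_singleton (f := fun α : ℝ => Complex.exp (α * w) • a α)
      (fun α hα => by rw [ha α hα, smul_zero]) (hf.hasSum w hw) 0

theorem comp_powerSeries {F : Type*} [NormedAddCommGroup F] [NormedSpace ℂ F] [CompleteSpace F]
    {h : X → F} {p : FormalMultilinearSeries ℂ X F} {y : X} {r : ENNReal}
    (hp : HasFPowerSeriesOnBall h p y r) (hf : HasNormalExpansion x σ E d f)
    (hr : ENNReal.ofReal (∑' i, ‖d i‖ * x ^ E i) < r) :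
    HasNormalExpansion x σ (fun v : Σ n, (Fin n → ι) => ∑ j, E (v.2 j))
      (fun v => p v.1 fun j => d (v.2 j)) fun w => h (y + f w) where
  radius_pos := hf.radius_pos
  exponent_nonneg v := Finset.sum_nonneg fun j _ => hf.exponent_nonneg (v.2 j)
  summable_majorant := by
    have hx := hf.radius_pos
    refine .of_nonneg_of_le (fun v => by positivity) (fun v => ?_) <|
      summable_sigma_norm_mul_prod (fun i => by positivity) hf.summable_majorant
        (hr.trans_le hp.r_le)
    calc ‖p v.1 fun j => d (v.2 j)‖ * x ^ ∑ j, E (v.2 j)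
        ≤ (‖p v.1‖ * ∏ j, ‖d (v.2 j)‖) * x ^ ∑ j, E (v.2 j) := by
          gcongr
          exact (p v.1).le_opNorm _
      _ = ‖p v.1‖ * ∏ j, ‖d (v.2 j)‖ * x ^ E (v.2 j) := by
          rw [Real.rpow_sum_of_pos hx, Finset.prod_mul_distrib, mul_assoc]
  hasSum w hw := by
    refine (hasSum_sigma_powerSeries_apply hp (hf.hasSum w hw) (hf.norm_term_le hw)
      hf.summable_majorant hr).congr_fun fun v => ?_
    rw [(p v.1).map_smul_univ, Complex.ofReal_sum, Finset.sum_mul, Complex.exp_sum]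

theorem collect_exponents [CompleteSpace X] (hf : HasNormalExpansion x σ E d f) :
    HasNormalExpansion x σ ((↑) : range E → ℝ) (fun γ => collectedCoeff E d γ) f where
  radius_pos := hf.radius_pos
  exponent_nonneg := by
    rintro ⟨_, i, rfl⟩
    exact hf.exponent_nonneg i
  summable_majorant := by
    have hx := hf.radius_pos
    refine .of_nonneg_of_le (fun γ => by positivity) (fun γ => ?_)
      (hasSum_range_tsum_fiber hf.summable_majorant.hasSum).summable
    have norm_term (i : E ⁻¹' {(γ : ℝ)}) : ‖x ^ (γ : ℝ) • d i‖ = ‖d i‖ * x ^ E i := by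
      rw [norm_smul, Real.norm_of_nonneg (by positivity), mul_comm, i.2]
    calc ‖collectedCoeff E d γ‖ * x ^ (γ : ℝ)
        = ‖∑' i : E ⁻¹' {(γ : ℝ)}, x ^ (γ : ℝ) • d i‖ := by
          rw [collectedCoeff, tsum_const_smul'', norm_smul,
            Real.norm_of_nonneg (by positivity), mul_comm]
      _ ≤ ∑' i : E ⁻¹' {(γ : ℝ)}, ‖x ^ (γ : ℝ) • d i‖ :=
          norm_tsum_le_tsum_norm <|
            (hf.summable_majorant.subtype (E ⁻¹' {(γ : ℝ)})).congr fun i => (norm_term i).symm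
      _ = ∑' i : E ⁻¹' {(γ : ℝ)}, ‖d i‖ * x ^ E i := tsum_congr norm_term
  hasSum w hw := by
    refine (hasSum_range_tsum_fiber (hf.hasSum w hw)).congr_fun fun γ => ?_
    rw [collectedCoeff, ← tsum_const_smul'']
    exact tsum_congr fun i => by rw [i.2]

end HasNormalExpansion

theorem isPWO_range_sum {ι α : Type*} [AddCommMonoid α] [PartialOrder α]
    [IsOrderedCancelAddMonoid α] {S : Set α} (hS : S.IsPWO) (hS₀ : ∀ s ∈ S, 0 ≤ s) {E : ι → α}
    (hE : ∀ i, E i ∈ S) : (range fun v : Σ n, (Fin n → ι) => ∑ j, E (v.2 j)).IsPWO := by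
  refine (hS.addSubmonoid_closure hS₀).mono ?_
  rintro _ ⟨v, rfl⟩
  exact AddSubmonoid.sum_mem _ fun j _ => AddSubmonoid.subset_closure (hE (v.2 j))

theorem comp_holomorphic_zHahn_holomorphic_general {X F : Type*} [NormedAddCommGroup X]
    [NormedSpace ℂ X] [NormedAddCommGroup F] [NormedSpace ℂ F] [CompleteSpace F] {x : ℝ}
    {σ : ENNReal} {S : Set ℝ} (hSc : S.Countable) (hSwf : S.IsWF) {a : ℝ → X}
    (ha : ∀ α ∉ S, a α = 0) {f : ℂ → X}
    (hf : HasNormalExpansion x σ ((↑) : S → ℝ) (fun α => a α) f) {U : Set X} (hU : U ∈ 𝓝 (a 0))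
    {h : X → F} (hh : AnalyticAt ℂ h (a 0)) :
    ∃ y ∈ Ioc 0 x, MapsTo f (Omega y σ) U ∧
      ∃ S' : Set ℝ, S'.Countable ∧ S'.IsWF ∧
        ∃ c : ℝ → F, HasNormalExpansion y σ ((↑) : S' → ℝ) (fun γ => c γ) (h ∘ f) := by
  obtain ⟨p, r, hp⟩ := hh
  obtain ⟨ε, hε, hεU⟩ := EMetric.mem_nhds_iff.1 hU
  have hg := hf.sub_constantTerm ha
  have exponent_pos (α : ↥(S \ {0})) : 0 < (α : ℝ) :=
    (hg.exponent_nonneg α).lt_of_ne' α.2.2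
  obtain ⟨y, hy, hy_lt⟩ := hg.exists_radius_majorant_lt exponent_pos (lt_min hp.r_pos hε)
  obtain ⟨hyr, hyε⟩ := lt_min_iff.1 hy_lt
  have hgy := hg.mono hy.1 hy.2
  have : Countable ↥(S \ {0}) := hSc.mono sdiff_subset
  have hh_expansion := (hgy.comp_powerSeries hp hyr).collect_exponents
  simp only [add_sub_cancel] at hh_expansion
  have exponents_isWF :
      (range fun v : Σ n, (Fin n → ↥(S \ {0})) => ∑ j, (v.2 j : ℝ)).IsWF :=
    (isPWO_range_sum hSwf.isPWO (fun α hα => hf.exponent_nonneg ⟨α, hα⟩) fun α => α.2.1).isWF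
  refine ⟨y, hy, fun w hw => hεU ?_, _, countable_range _, exponents_isWF, _, hh_expansion⟩
  rw [Metric.mem_eball, edist_eq_enorm_sub, ← ofReal_norm]
  exact (ENNReal.ofReal_le_ofReal (hgy.norm_apply_le hw)).trans_lt hyε

/-- Composition of a z-Hahn holomorphic function with a holomorphic function
(Theorem 2.13, z-case). -/
theorem comp_holomorphic_zHahn_holomorphic
    (δ : ℝ) (hδ : 0 < δ) (σ : ENNReal) (hσ : 0 < σ)
    (δ' : ℝ) (hδ' : δ' ∈ Set.Ioc 0 δ)
    (S : Set ℝ) (hSc : S.Countable) (hSwf : S.IsWF) (hS0 : S ⊆ Set.Ici 0)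
    (a : ℝ → ℂ) (hsupp : ∀ α ∉ S, a α = 0)
    (hsum : Summable fun α : S => ‖a (α : ℝ)‖ * δ' ^ (α : ℝ))
    (f : ℂ → ℂ)
    (hhol : DifferentiableOn ℂ f (Omega δ σ))
    (hf : ∀ w ∈ Omega δ' σ, f w = ∑' α : S, Complex.exp (((α : ℝ) : ℂ) * w) * a (α : ℝ))
    (U : Set ℂ) (hU : IsOpen U) (h : ℂ → ℂ)
    (hh : DifferentiableOn ℂ h U)
    (hmem : a 0 ∈ U) :
    ∃ δ'' ∈ Set.Ioc 0 δ',
      (∀ w ∈ Omega δ'' σ, f w ∈ U) ∧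
      ∃ S' : Set ℝ, S'.Countable ∧ S'.IsWF ∧ S' ⊆ Set.Ici 0 ∧
        ∃ c : ℝ → ℂ,
          (Summable fun γ : S' => ‖c (γ : ℝ)‖ * δ'' ^ (γ : ℝ)) ∧
          ∀ w ∈ Omega δ'' σ,
            h (f w) = ∑' γ : S', Complex.exp (((γ : ℝ) : ℂ) * w) * c (γ : ℝ) := by
  obtain ⟨δ'', hδ'', hfU, S', hS'c, hS'wf, c, hc⟩ :=
    comp_holomorphic_zHahn_holomorphic_general hSc hSwf hsupp
      (.of_eq_tsum hδ'.1 (fun α => hS0 α.2) hsum hf) (hU.mem_nhds hmem)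
      (hh.analyticAt (hU.mem_nhds hmem))
  exact ⟨δ'', hδ'', hfU, S', hS'c, hS'wf, fun γ hγ => hc.exponent_nonneg ⟨γ, hγ⟩, c,
    hc.summable_majorant, fun w hw => (hc.hasSum w hw).tsum_eq.symm⟩
end
end

section
/- Limits of z-Hahn holomorphic functions (Theorem 5.5): Let R > 0, let V be a complex Banach space, and let f_k : Ω(R,∞) → V be a sequence of bounded functions, each holomorphic and represented on some Ω(δ_k,∞), δ_k > 0, by a normally convergent generalized power series f_k(w) = ∑_{α∈S_k} a_α^{(k)} e^{αw} with countable well-ordered support S_k ⊂ [0,∞). Assume: (1) f_k converges uniformly on Ω(R,∞) to a bounded function f; (2) there are constants C > 0 and ε̂ > 0 with ∑_{α∈S_k} ε̂^α < C for every k; (3) there is a set I ⊂ ℝ such that for every compact K ⊂ ℝ there is N with S_k ∩ K = I ∩ K for all k ≥ N. Then f is z-Hahn holomorphic on Ω(R,∞) with support contained in I: I is well-ordered, for each α ∈ I the limit a_α := lim_{k→∞} a_α^{(k)} exists in V, and there is δ > 0 such that (a_α)_{α∈I} converges normally on Ω(δ,∞) and f(w) = ∑_{α∈I} a_α e^{αw}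 for w ∈ Ω(δ,∞). -/
noncomputable section

/-!
In logarithmic coordinates a coefficient `a_β` of a generalized power series `f` is the mean value
of `e^{-βw} f(w)` along a vertical line. When `f` is holomorphic on `Re w < L`, Cauchy's theorem on
rectangles of height `2T → ∞` moves that line up to `Re w = L`, so that `‖a_β‖ e^{βL} ≤ sup ‖f‖`,
no matter how small the half-plane is on which the series is known to converge. Applied to the
differences `f_k - f_j`, this makes `a_β^{(k)} e^{βL}` Cauchy uniformly in `β`, and since
`∑_{α ∈ S_k} e^{αq}` is bounded uniformly in `k`, the coefficients converge in `ℓ¹` with weight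
`e^{α(L+q)}`. The differences `f_k - f_j` being bounded is enough: one fixed `f_{k₀}` is added back
at the end.
-/

section

open Filter Topology Function

section FiniteBelow

lemma isWF_of_forall_finite_inter_Iic {α : Type*} [Preorder α] {s : Set α}
    (h : ∀ x, (s ∩ Set.Iic x).Finite) : s.IsWF := by
  rw [Set.isWF_iff_no_descending_seq]
  intro u hu hus
  refine Set.infinite_range_of_injective hu.injective ((h (u 0)).subset ?_)
  rintro _ ⟨n, rfl⟩
  exact ⟨hus n, hu.antitone n.zero_le⟩

lemma countable_of_forall_finite_inter_Iic {s : Set ℝ}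
    (h : ∀ x, (s ∩ Set.Iic x).Finite) : s.Countable := by
  refine (Set.countable_iUnion fun n : ℕ => (h n).countable).mono fun x hx => ?_
  obtain ⟨n, hn⟩ := exists_nat_ge x
  exact Set.mem_iUnion.2 ⟨n, hx, hn⟩

end FiniteBelow

/-- The bound `∑_{α ∈ T} e^{αq} ≤ C` on a set of exponents. It is imposed on finite subsets of `T`,
so that it includes summability and passes to pointwise limits of sets. -/
def ExpSumLE (q C : ℝ) (T : Set ℝ) : Prop :=
  ∀ F : Finset ℝ, ↑F ⊆ T → ∑ α ∈ F, Real.exp (α * q) ≤ C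

namespace ExpSumLE

variable {q C C' : ℝ} {T T' : Set ℝ}

lemma nonneg (h : ExpSumLE q C T) : 0 ≤ C := by
  simpa using h ∅ (by simp)

lemma mono (h : ExpSumLE q C T) (hT : T' ⊆ T) : ExpSumLE q C T' :=
  fun F hF => h F (hF.trans hT)

lemma union (h : ExpSumLE q C T) (h' : ExpSumLE q C' T') : ExpSumLE q (C + C') (T ∪ T') := by
  classical
  intro F hF
  rw [← Finset.sum_filter_add_sum_filter_not F (· ∈ T)]
  refine add_le_add (h _ fun α hα => (Finset.mem_filter.1 hα).2) (h' _ fun α hα => ?_)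
  obtain ⟨hαF, hαT⟩ := Finset.mem_filter.1 hα
  exact (hF hαF).resolve_left hαT

lemma of_eventually_mem {ι : Type*} {p : Filter ι} [NeBot p] {S : ι → Set ℝ}
    (hS : ∀ k, ExpSumLE q C (S k)) (hT : ∀ α ∈ T, ∀ᶠ k in p, α ∈ S k) : ExpSumLE q C T := by
  intro F hF
  obtain ⟨k, hk⟩ := ((eventually_all_finset F).2 fun α hα => hT α (hF hα)).exists
  exact hS k F hk

lemma finite_inter_Iic (h : ExpSumLE q C T) (hq : q ≤ 0) (x : ℝ) : (T ∩ Set.Iic x).Finite := by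
  by_contra hinf
  obtain ⟨n, hn⟩ := exists_nat_gt (C / Real.exp (x * q))
  obtain ⟨F, hF, rfl⟩ := Set.Infinite.exists_subset_card_eq hinf n
  refine ((div_lt_iff₀ (Real.exp_pos _)).1 hn).not_ge ?_
  calc (F.card : ℝ) * Real.exp (x * q) = ∑ _α ∈ F, Real.exp (x * q) := by simp
    _ ≤ ∑ α ∈ F, Real.exp (α * q) := Finset.sum_le_sum fun α hα =>
        Real.exp_le_exp.2 (mul_le_mul_of_nonpos_right (hF hα).2 hq)
    _ ≤ C := h F fun α hα => (hF hα).1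

lemma of_tsum_ofReal_rpow_lt {ε : ℝ} (hε : 0 < ε) (hT : T ⊆ Set.Ici 0)
    (h : ∑' α : T, ENNReal.ofReal (ε ^ (α : ℝ)) < ENNReal.ofReal C) :
    ExpSumLE (min 0 (Real.log ε)) C T := by
  intro F hF
  have hC : 0 < C := ENNReal.ofReal_pos.1 (pos_of_gt h)
  rw [← ENNReal.ofReal_le_ofReal_iff hC.le,
    ENNReal.ofReal_sum_of_nonneg fun _ _ => (Real.exp_pos _).le]
  calc ∑ α ∈ F, ENNReal.ofReal (Real.exp (α * min 0 (Real.log ε)))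
      ≤ ∑ α ∈ F, T.indicator (fun α => ENNReal.ofReal (ε ^ α)) α := by
        refine Finset.sum_le_sum fun α hα => ?_
        have hα0 : 0 ≤ α := hT (hF hα)
        rw [Set.indicator_of_mem (hF hα), Real.rpow_def_of_pos hε, mul_comm (Real.log ε)]
        gcongr
        exact min_le_right _ _
    _ ≤ ∑' α, T.indicator (fun α => ENNReal.ofReal (ε ^ α)) α := ENNReal.sum_le_tsum F
    _ = ∑' α : T, ENNReal.ofReal (ε ^ (α : ℝ)) := (tsum_subtype T _).symm
    _ ≤ ENNReal.ofReal C := h.le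

lemma sum_norm_mul_exp_le {V : Type*} [NormedAddCommGroup V] {b : ℝ → V} {L M m : ℝ}
    (h : ExpSumLE q C (support b)) (hb : ∀ α < 0, b α = 0)
    (hM : ∀ α, ‖b α‖ * Real.exp (α * L) ≤ M) (hm : m ≤ L + q) (F : Finset ℝ) :
    ∑ α ∈ F, ‖b α‖ * Real.exp (α * m) ≤ M * C := by
  classical
  have hM0 : 0 ≤ M := le_trans (by positivity) (hM 0)
  have hterm (α : ℝ) : ‖b α‖ * Real.exp (α * m) ≤ M * Real.exp (α * q) := by
    rcases lt_or_ge α 0 with hα | hα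
    · simp only [hb α hα, norm_zero, zero_mul]
      positivity
    calc ‖b α‖ * Real.exp (α * m) ≤ ‖b α‖ * Real.exp (α * (L + q)) := by gcongr
      _ = ‖b α‖ * Real.exp (α * L) * Real.exp (α * q) := by rw [mul_add, Real.exp_add, mul_assoc]
      _ ≤ M * Real.exp (α * q) := by gcongr; exact hM α
  calc ∑ α ∈ F, ‖b α‖ * Real.exp (α * m)
      = ∑ α ∈ F with b α ≠ 0, ‖b α‖ * Real.exp (α * m) :=
        (Finset.sum_filter_of_ne fun α _ hα => norm_ne_zero_iff.1 (left_ne_zero_of_mul hα)).symm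
    _ ≤ ∑ α ∈ F with b α ≠ 0, M * Real.exp (α * q) := Finset.sum_le_sum fun α _ => hterm α
    _ = M * ∑ α ∈ F with b α ≠ 0, Real.exp (α * q) := (Finset.mul_sum _ _ _).symm
    _ ≤ M * C := by
        gcongr
        exact h _ fun α hα => (Finset.mem_filter.1 hα).2

end ExpSumLE

variable {V : Type*} [NormedAddCommGroup V] [NormedSpace ℂ V]

section MeanValue

lemma norm_intervalAverage_le {E : Type*} [NormedAddCommGroup E] [NormedSpace ℝ E] {F : ℝ → E}
    {M : ℝ} (hF : ∀ y, ‖F y‖ ≤ M) (a b : ℝ) : ‖⨍ y in a..b, F y‖ ≤ M := by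
  have hM : 0 ≤ M := (norm_nonneg _).trans (hF 0)
  rw [interval_average_eq, norm_smul, norm_inv, Real.norm_eq_abs]
  calc |b - a|⁻¹ * ‖∫ y in a..b, F y‖ ≤ |b - a|⁻¹ * (M * |b - a|) := by
        gcongr
        exact intervalIntegral.norm_integral_le_of_norm_le_const fun y _ => hF y
    _ = M * (|b - a|⁻¹ * |b - a|) := by ring
    _ ≤ M := mul_le_of_le_one_right hM (inv_mul_le_one_of_le₀ le_rfl (abs_nonneg _))

lemma norm_cexp_mul_I_mul (c y : ℝ) : ‖Complex.exp (c * Complex.I * y)‖ = 1 := by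
  simp [Complex.norm_exp]

lemma tendsto_inv_two_mul_mul_atTop (K : ℝ) :
    Tendsto (fun T : ℝ => (2 * T)⁻¹ * K) atTop (𝓝 0) := by
  have h : Tendsto (fun T : ℝ => (2 * T)⁻¹) atTop (𝓝 0) :=
    tendsto_inv_atTop_zero.comp (tendsto_id.const_mul_atTop two_pos)
  simpa using h.mul_const K

lemma tendsto_intervalAverage_cexp {c : ℝ} (hc : c ≠ 0) :
    Tendsto (fun T : ℝ => ⨍ y in (-T)..T, Complex.exp (c * Complex.I * y)) atTop (𝓝 0) := by
  have hcI : (c * Complex.I : ℂ) ≠ 0 := mul_ne_zero (by exact_mod_cast hc) Complex.I_ne_zero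
  refine squeeze_zero_norm' ?_ (tendsto_inv_two_mul_mul_atTop (2 / |c|))
  filter_upwards [eventually_gt_atTop 0] with T hT
  rw [interval_average_eq, integral_exp_mul_complex hcI, norm_smul, sub_neg_eq_add, ← two_mul,
    Real.norm_of_nonneg (by positivity), norm_div]
  gcongr
  · calc _ ≤ _ := norm_sub_le _ _
      _ = 2 := by rw [norm_cexp_mul_I_mul, norm_cexp_mul_I_mul]; norm_num
  · simp

variable {ι : Type*} {c : ι → ℝ} {v : ι → V} {F : ℝ → V}

lemma hasSum_intervalAverage_cexp_smul [Countable ι] (hv : Summable fun i => ‖v i‖)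
    (hF : ∀ y : ℝ, HasSum (fun i => Complex.exp (c i * Complex.I * y) • v i) (F y)) (s t : ℝ) :
    HasSum (fun i => ⨍ y in s..t, Complex.exp (c i * Complex.I * y) • v i) (⨍ y in s..t, F y) := by
  simp only [interval_average_eq]
  refine (intervalIntegral.hasSum_integral_of_dominated_convergence (fun i _ => ‖v i‖)
    (fun i => ?_) (fun i => ?_) (.of_forall fun y _ => hv) intervalIntegrable_const
    (.of_forall fun y _ => hF y)).const_smul _
  · exact Continuous.aestronglyMeasurable (by fun_prop)
  · exact .of_forall fun y _ => by rw [norm_smul, norm_cexp_mul_I_mul, one_mul]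

lemma tendsto_intervalAverage_of_hasSum_cexp_smul [CompleteSpace V] [Countable ι]
    (hv : Summable fun i => ‖v i‖)
    (hF : ∀ y : ℝ, HasSum (fun i => Complex.exp (c i * Complex.I * y) • v i) (F y)) {i₀ : ι}
    (hc : ∀ i, c i = 0 ↔ i = i₀) :
    Tendsto (fun T : ℝ => ⨍ y in (-T)..T, F y) atTop (𝓝 (v i₀)) := by
  classical
  have hterm (i : ι) : Tendsto
      (fun T : ℝ => ⨍ y in (-T)..T, Complex.exp (c i * Complex.I * y) • v i) atTop
      (𝓝 (if i = i₀ then v i₀ else 0)) := by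
    split_ifs with hi
    · subst hi
      refine tendsto_const_nhds.congr' ?_
      filter_upwards [eventually_gt_atTop 0] with T hT
      have hT' : T - -T ≠ 0 := by linarith
      simp only [interval_average_eq, (hc i).2 rfl, Complex.ofReal_zero, zero_mul, Complex.exp_zero,
        one_smul, intervalIntegral.integral_const, inv_smul_smul₀ hT']
    · have hci : c i ≠ 0 := mt (hc i).1 hi
      simpa only [interval_average_eq, intervalIntegral.integral_smul_const, smul_assoc, zero_smul]
        using (tendsto_intervalAverage_cexp hci).smul_const (v i)
  have hsum := tendsto_tsum_of_dominated_convergence hv hterm <| .of_forall fun T i =>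
    norm_intervalAverage_le
      (fun y => by rw [norm_smul, norm_cexp_mul_I_mul, one_mul]) (-T) T
  rw [tsum_ite_eq] at hsum
  exact hsum.congr fun T => (hasSum_intervalAverage_cexp_smul hv hF (-T) T).tsum_eq

end MeanValue

section ContourShift

variable {h : ℂ → V} {x₀ x A B : ℝ}

lemma norm_integral_vertical_le (hx : x₀ ≤ x)
    (hd : DifferentiableOn ℂ h (Complex.re ⁻¹' Set.Icc x₀ x))
    (hA : ∀ w : ℂ, w.re ∈ Set.Icc x₀ x → ‖h w‖ ≤ A) (hB : ∀ w : ℂ, w.re = x → ‖h w‖ ≤ B)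
    {T : ℝ} (hT : 0 ≤ T) :
    ‖∫ y in (-T)..T, h (x₀ + y * Complex.I)‖ ≤ B * (2 * T) + 2 * (A * (x - x₀)) := by
  have hhorizontal (t : ℝ) : ‖∫ s in x₀..x, h (s + t * Complex.I)‖ ≤ A * (x - x₀) := by
    rw [← abs_of_nonneg (sub_nonneg.2 hx)]
    refine intervalIntegral.norm_integral_le_of_norm_le_const fun s hs => hA _ ?_
    rw [Set.uIoc_of_le hx] at hs
    simpa using Set.Ioc_subset_Icc_self hs
  have hright : ‖∫ y in (-T)..T, h (x + y * Complex.I)‖ ≤ B * (2 * T) := by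
    rw [← abs_of_nonneg (by positivity : 0 ≤ 2 * T), two_mul, ← sub_neg_eq_add]
    exact intervalIntegral.norm_integral_le_of_norm_le_const fun y _ => hB _ (by simp)
  have hCauchy : Complex.I • ∫ y in (-T)..T, h (x₀ + y * Complex.I) =
      (∫ s in x₀..x, h (s + (-T : ℝ) * Complex.I)) - (∫ s in x₀..x, h (s + T * Complex.I)) +
        Complex.I • ∫ y in (-T)..T, h (x + y * Complex.I) := by
    have := Complex.integral_boundary_rect_eq_zero_of_differentiableOn h ⟨x₀, -T⟩ ⟨x, T⟩
      (hd.mono fun w hw => Set.uIcc_of_le hx ▸ hw.1)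
    exact (sub_eq_zero.1 this).symm
  calc ‖∫ y in (-T)..T, h (x₀ + y * Complex.I)‖
      = ‖Complex.I • ∫ y in (-T)..T, h (x₀ + y * Complex.I)‖ := by simp [norm_smul]
    _ ≤ A * (x - x₀) + A * (x - x₀) + B * (2 * T) := by
        rw [hCauchy]
        refine norm_add_le_of_le (norm_sub_le_of_le (hhorizontal _) (hhorizontal _)) ?_
        simpa [norm_smul] using hright
    _ = _ := by ring

lemma norm_le_of_tendsto_intervalAverage_vertical (hx : x₀ ≤ x)
    (hd : DifferentiableOn ℂ h (Complex.re ⁻¹' Set.Icc x₀ x))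
    (hA : ∀ w : ℂ, w.re ∈ Set.Icc x₀ x → ‖h w‖ ≤ A) (hB : ∀ w : ℂ, w.re = x → ‖h w‖ ≤ B) {v : V}
    (hv : Tendsto (fun T : ℝ => ⨍ y in (-T)..T, h (x₀ + y * Complex.I)) atTop (𝓝 v)) :
    ‖v‖ ≤ B := by
  have hbound : Tendsto (fun T : ℝ => B + (2 * T)⁻¹ * (2 * (A * (x - x₀)))) atTop (𝓝 B) := by
    simpa using (tendsto_inv_two_mul_mul_atTop (2 * (A * (x - x₀)))).const_add B
  refine le_of_tendsto_of_tendsto hv.norm hbound ?_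
  filter_upwards [eventually_gt_atTop 0] with T hT
  rw [interval_average_eq, norm_smul, sub_neg_eq_add, ← two_mul,
    Real.norm_of_nonneg (by positivity)]
  calc _ ≤ (2 * T)⁻¹ * (B * (2 * T) + 2 * (A * (x - x₀))) := by
        gcongr
        exact norm_integral_vertical_le hx hd hA hB hT.le
    _ = _ := by field_simp

end ContourShift

/-- The function `g` is represented on the half-plane `Re w < l` by the generalized power series
`∑ b_α e^{αw}`, normally convergent there. The coefficients are indexed by all of `ℝ`, the support
of the series being that of `b`, which must consist of nonnegative exponents. -/
structure HasHahnSeriesOn (g : ℂ → V) (b : ℝ → V) (l : ℝ) : Prop where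
  eq_zero_of_neg : ∀ α < 0, b α = 0
  summable : Summable fun α => ‖b α‖ * Real.exp (α * l)
  hasSum : ∀ w : ℂ, w.re < l → HasSum (fun α : ℝ => Complex.exp (α * w) • b α) (g w)

lemma norm_cexp_smul_le_s5 {b : ℝ → V} (hb : ∀ α < 0, b α = 0) {l : ℝ} {w : ℂ} (hw : w.re ≤ l)
    (α : ℝ) : ‖Complex.exp (α * w) • b α‖ ≤ ‖b α‖ * Real.exp (α * l) := by
  rcases lt_or_ge α 0 with hα | hα
  · simp [hb α hα]
  · rw [norm_smul, Complex.norm_exp, Complex.re_ofReal_mul, mul_comm]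
    gcongr

lemma isOpen_re_lt (r : ℝ) : IsOpen {w : ℂ | w.re < r} :=
  isOpen_lt Complex.continuous_re continuous_const

namespace HasHahnSeriesOn

variable {g g' : ℂ → V} {b b' : ℝ → V} {l m : ℝ}

lemma mono (h : HasHahnSeriesOn g b l) (hm : m ≤ l) : HasHahnSeriesOn g b m where
  eq_zero_of_neg := h.eq_zero_of_neg
  summable := by
    refine h.summable.of_nonneg_of_le (fun _ => by positivity) fun α => ?_
    rcases lt_or_ge α 0 with hα | hα
    · simp [h.eq_zero_of_neg α hα]
    · gcongr
  hasSum w hw := h.hasSum w (hw.trans_le hm)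

lemma add (h : HasHahnSeriesOn g b l) (h' : HasHahnSeriesOn g' b' l) :
    HasHahnSeriesOn (g + g') (b + b') l where
  eq_zero_of_neg α hα := by simp [h.eq_zero_of_neg α hα, h'.eq_zero_of_neg α hα]
  summable := by
    refine (h.summable.add h'.summable).of_nonneg_of_le (fun _ => by positivity) fun α => ?_
    rw [← add_mul]
    gcongr
    exact norm_add_le _ _
  hasSum w hw := by simpa using (h.hasSum w hw).add (h'.hasSum w hw)

lemma neg (h : HasHahnSeriesOn g b l) : HasHahnSeriesOn (-g) (-b) l where
  eq_zero_of_neg α hα := by simp [h.eq_zero_of_neg α hα]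
  summable := by simpa using h.summable
  hasSum w hw := by simpa using (h.hasSum w hw).neg

lemma sub (h : HasHahnSeriesOn g b l) (h' : HasHahnSeriesOn g' b' m) :
    HasHahnSeriesOn (g - g') (b - b') (min l m) := by
  simpa only [sub_eq_add_neg] using (h.mono (min_le_left l m)).add (h'.mono (min_le_right l m)).neg

lemma countable_support (h : HasHahnSeriesOn g b l) : (support b).Countable := by
  refine h.summable.countable_support.mono fun α hα => ?_
  exact mul_ne_zero (norm_ne_zero_iff.2 hα) (Real.exp_pos _).ne'

variable [CompleteSpace V]

lemma of_summable (hb : ∀ α < 0, b α = 0) (hs : Summable fun α => ‖b α‖ * Real.exp (α * l))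
    (hg : ∀ w : ℂ, w.re < l → g w = ∑' α : ℝ, Complex.exp (α * w) • b α) :
    HasHahnSeriesOn g b l where
  eq_zero_of_neg := hb
  summable := hs
  hasSum w hw := hg w hw ▸ (Summable.of_norm_bounded hs (norm_cexp_smul_le_s5 hb hw.le)).hasSum

lemma of_differentiableOn (h : HasHahnSeriesOn g b l)
    (hg : DifferentiableOn ℂ g {w | w.re < m})
    (hs : Summable fun α => ‖b α‖ * Real.exp (α * m)) : HasHahnSeriesOn g b m := by
  have hseries : DifferentiableOn ℂ (fun w : ℂ => ∑' α : ℝ, Complex.exp (α * w) • b α)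
      {w | w.re < m} :=
    Complex.differentiableOn_tsum_of_summable_norm hs
      (fun α => Differentiable.differentiableOn (by fun_prop)) (isOpen_re_lt m)
      fun α w hw => norm_cexp_smul_le_s5 h.eq_zero_of_neg (le_of_lt hw) α
  have hz₀ : ((min l m - 1 : ℝ) : ℂ).re < min l m := by
    rw [Complex.ofReal_re]
    linarith
  refine of_summable h.eq_zero_of_neg hs fun w hw =>
    (hg.analyticOnNhd (isOpen_re_lt m)).eqOn_of_preconnected_of_eventuallyEq
      (hseries.analyticOnNhd (isOpen_re_lt m)) (convex_halfSpace_re_lt m).isPreconnected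
      (hz₀.trans_le (min_le_right l m)) ?_ hw
  filter_upwards [(isOpen_re_lt (min l m)).mem_nhds hz₀] with z hz
  exact (h.hasSum z (lt_of_lt_of_le hz (min_le_left l m))).tsum_eq.symm

lemma tendsto_intervalAverage (h : HasHahnSeriesOn g b l) {x : ℝ} (hx : x < l) (β : ℝ) :
    Tendsto (fun T : ℝ => ⨍ y in (-T)..T,
      Complex.exp (-β * (x + y * Complex.I)) • g (x + y * Complex.I)) atTop (𝓝 (b β)) := by
  let E : Set ℝ := insert β (support b)
  have : Countable E := (h.countable_support.insert β).to_subtype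
  let v : ℝ → V := fun α => Complex.exp (((α - β) * x : ℝ)) • b α
  have hv : Summable fun α : E => ‖v α‖ := by
    refine Summable.subtype (f := fun α => ‖v α‖) ?_ E
    refine ((h.mono hx.le).summable.mul_left (Real.exp (-β * x))).congr fun α => ?_
    rw [norm_smul, Complex.norm_exp, Complex.ofReal_re, sub_mul, sub_eq_neg_add, ← neg_mul,
      Real.exp_add]
    ring
  have hsum (y : ℝ) : HasSum
      (fun α : E => Complex.exp (((α - β : ℝ) : ℂ) * Complex.I * y) • v α)
      (Complex.exp (-β * (x + y * Complex.I)) • g (x + y * Complex.I)) := by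
    have hall : HasSum (fun α : ℝ => Complex.exp (((α - β : ℝ) : ℂ) * Complex.I * y) • v α)
        (Complex.exp (-β * (x + y * Complex.I)) • g (x + y * Complex.I)) := by
      convert (h.hasSum (x + y * Complex.I) (by simpa using hx)).const_smul
        (Complex.exp (-β * (x + y * Complex.I))) using 2 with α
      rw [smul_smul, smul_smul, ← Complex.exp_add, ← Complex.exp_add]
      congr 2
      push_cast
      ring
    refine (hasSum_subtype_iff_of_support_subset fun α hα => Set.mem_insert_of_mem β ?_).2 hall
    exact fun hbα => hα (by simp [v, hbα])
  have hβ := tendsto_intervalAverage_of_hasSum_cexp_smul (i₀ := (⟨β, Set.mem_insert _ _⟩ : E))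
    hv hsum fun α => by rw [sub_eq_zero, Subtype.ext_iff]
  simpa [v] using hβ

lemma norm_coeff_mul_exp_le_of_lt {L M x : ℝ} (h : HasHahnSeriesOn g b l)
    (hg : DifferentiableOn ℂ g {w | w.re < L}) (hM : ∀ w : ℂ, w.re < L → ‖g w‖ ≤ M)
    {β : ℝ} (hβ : 0 ≤ β) (hx : x < L) : ‖b β‖ * Real.exp (β * x) ≤ M := by
  let x₀ := min l x - 1
  have hx₀l : x₀ < l := by linarith [min_le_left l x]
  have hx₀x : x₀ ≤ x := by linarith [min_le_right l x]
  have hM0 : 0 ≤ M := (norm_nonneg _).trans (hM x (by simpa using hx))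
  have hd : DifferentiableOn ℂ (fun w => Complex.exp (-β * w) • g w)
      (Complex.re ⁻¹' Set.Icc x₀ x) :=
    DifferentiableOn.smul (by fun_prop) (hg.mono fun w hw => hw.2.trans_lt hx)
  have hnorm {w : ℂ} (hw : w.re < L) :
      ‖Complex.exp (-β * w) • g w‖ ≤ Real.exp (-β * w.re) * M := by
    rw [norm_smul, Complex.norm_exp, ← Complex.ofReal_neg, Complex.re_ofReal_mul]
    gcongr
    exact hM w hw
  have hstrip (w : ℂ) (hw : w.re ∈ Set.Icc x₀ x) :
      ‖Complex.exp (-β * w) • g w‖ ≤ Real.exp (-β * x₀) * M := by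
    refine (hnorm (hw.2.trans_lt hx)).trans (mul_le_mul_of_nonneg_right ?_ hM0)
    exact Real.exp_le_exp.2 (mul_le_mul_of_nonpos_left hw.1 (neg_nonpos.2 hβ))
  have hb : ‖b β‖ ≤ Real.exp (-β * x) * M :=
    norm_le_of_tendsto_intervalAverage_vertical hx₀x hd hstrip
      (fun w hw => hw ▸ hnorm (hw ▸ hx)) (h.tendsto_intervalAverage hx₀l β)
  rwa [neg_mul, Real.exp_neg, ← div_eq_inv_mul, le_div_iff₀ (Real.exp_pos _)] at hb

lemma norm_coeff_mul_exp_le {L M : ℝ} (h : HasHahnSeriesOn g b l)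
    (hg : DifferentiableOn ℂ g {w | w.re < L}) (hM : ∀ w : ℂ, w.re < L → ‖g w‖ ≤ M) (β : ℝ) :
    ‖b β‖ * Real.exp (β * L) ≤ M := by
  rcases lt_or_ge β 0 with hβ | hβ
  · have hM0 : 0 ≤ M := (norm_nonneg _).trans (hM (L - 1 : ℝ) (by simp))
    simpa [h.eq_zero_of_neg β hβ] using hM0
  have hcont : Continuous fun x : ℝ => ‖b β‖ * Real.exp (β * x) := by fun_prop
  refine le_of_tendsto (hcont.continuousWithinAt (s := Set.Iio L)) ?_
  filter_upwards [self_mem_nhdsWithin] with x hx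
  exact h.norm_coeff_mul_exp_le_of_lt hg hM hβ hx

lemma extend_of_norm_le {L M q C : ℝ} (h : HasHahnSeriesOn g b l)
    (hg : DifferentiableOn ℂ g {w | w.re < L}) (hM : ∀ w : ℂ, w.re < L → ‖g w‖ ≤ M)
    (hq : q ≤ 0) (hC : ExpSumLE q C (support b)) : HasHahnSeriesOn g b (L + q) := by
  have hmono : {w : ℂ | w.re < L + q} ⊆ {w | w.re < L} :=
    fun w (hw : w.re < L + q) => hw.trans_le (by linarith)
  exact h.of_differentiableOn (hg.mono hmono) <| summable_of_sum_le (fun _ => by positivity) <|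
    hC.sum_norm_mul_exp_le h.eq_zero_of_neg (h.norm_coeff_mul_exp_le hg hM) le_rfl

end HasHahnSeriesOn

section Limit

variable {ι : Type*} {p : Filter ι} {f : ι → ℂ → V} {flim : ℂ → V} {a : ι → ℝ → V} {aL : ℝ → V}
  {l : ι → ℝ} {L q C m : ℝ}

lemma eventually_sum_norm_sub_mul_exp_le
    (hlim : TendstoUniformly (fun k β => Real.exp (β * L) • a k β)
      (fun β => Real.exp (β * L) • aL β) p)
    (ha : ∀ k, ∀ α < 0, a k α = 0) (haL : ∀ α < 0, aL α = 0)
    (hC : ∀ k, ExpSumLE q C (support (a k))) (hCL : ExpSumLE q C (support aL))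
    (hm : m ≤ L + q) {ε : ℝ} (hε : 0 < ε) :
    ∀ᶠ k in p, ∀ F : Finset ℝ, ∑ α ∈ F, ‖(aL - a k) α‖ * Real.exp (α * m) ≤ ε := by
  have hC0 : 0 ≤ C := hCL.nonneg
  filter_upwards [Metric.tendstoUniformly_iff.1 hlim (ε / (C + C + 1)) (by positivity)] with k hk F
  have hcoeff (α : ℝ) : ‖(aL - a k) α‖ * Real.exp (α * L) ≤ ε / (C + C + 1) := by
    have := (hk α).le
    rwa [dist_eq_norm, ← smul_sub, norm_smul, Real.norm_of_nonneg (Real.exp_pos _).le,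
      mul_comm] at this
  calc _ ≤ ε / (C + C + 1) * (C + C) :=
        ((hCL.union (hC k)).mono (support_sub _ _)).sum_norm_mul_exp_le
          (fun α hα => by simp [ha k α hα, haL α hα]) hcoeff hm F
    _ ≤ ε := by
        rw [div_mul_eq_mul_div, div_le_iff₀ (by positivity)]
        exact mul_le_mul_of_nonneg_left (by linarith) hε.le

variable [CompleteSpace V] [NeBot p]

lemma exists_tendstoUniformly_coeff (hf : ∀ k, DifferentiableOn ℂ (f k) {w | w.re < L})
    (ha : ∀ k, HasHahnSeriesOn (f k) (a k) (l k))
    (hlim : TendstoUniformlyOn f flim p {w | w.re < L}) :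
    ∃ aL : ℝ → V, TendstoUniformly (fun k β => Real.exp (β * L) • a k β)
      (fun β => Real.exp (β * L) • aL β) p := by
  have hCauchy : UniformCauchySeqOn (fun k β => Real.exp (β * L) • a k β) p Set.univ := by
    intro u hu
    obtain ⟨ε, hε, hεu⟩ := Metric.mem_uniformity_dist.1 hu
    filter_upwards [hlim.uniformCauchySeqOn _ (Metric.dist_mem_uniformity (half_pos hε))]
      with ⟨j, k⟩ hjk β _
    refine hεu (lt_of_le_of_lt ?_ (half_lt_self hε))
    rw [dist_eq_norm, ← smul_sub, norm_smul, Real.norm_of_nonneg (Real.exp_pos _).le, mul_comm]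
    refine ((ha j).sub (ha k)).norm_coeff_mul_exp_le ((hf j).sub (hf k)) (fun w hw => ?_) β
    rw [Pi.sub_apply, ← dist_eq_norm]
    exact (hjk w hw).le
  choose c hc using fun β => CompleteSpace.complete (hCauchy.cauchy_map (Set.mem_univ β))
  refine ⟨fun β => (Real.exp (β * L))⁻¹ • c β, ?_⟩
  simp only [smul_inv_smul₀ (Real.exp_pos _).ne']
  exact tendstoUniformlyOn_univ.1 (hCauchy.tendstoUniformlyOn_of_tendsto fun β _ => hc β)

lemma exists_eventually_hasHahnSeriesOn (hf : ∀ k, DifferentiableOn ℂ (f k) {w | w.re < L})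
    (ha : ∀ k, HasHahnSeriesOn (f k) (a k) (l k))
    (hlim : TendstoUniformlyOn f flim p {w | w.re < L}) (hq : q ≤ 0)
    (hC : ∀ k, ExpSumLE q C (support (a k))) :
    ∃ m ≤ L + q, ∀ᶠ k in p, HasHahnSeriesOn (f k) (a k) m := by
  have hnear := Metric.tendstoUniformlyOn_iff.1 hlim 1 one_pos
  obtain ⟨k₀, hk₀⟩ := hnear.exists
  refine ⟨min (l k₀) (L + q), min_le_right _ _, ?_⟩
  filter_upwards [hnear] with k hk
  have hdist (w : ℂ) (hw : w.re < L) : ‖(f k - f k₀) w‖ ≤ 1 + 1 := by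
    rw [Pi.sub_apply, ← dist_eq_norm]
    exact (dist_triangle_left _ _ (flim w)).trans (add_le_add (hk w hw).le (hk₀ w hw).le)
  have hdiff : HasHahnSeriesOn (f k - f k₀) (a k - a k₀) (L + q) :=
    ((ha k).sub (ha k₀)).extend_of_norm_le ((hf k).sub (hf k₀)) hdist hq
      (((hC k).union (hC k₀)).mono (support_sub _ _))
  simpa only [sub_add_cancel] using
    (hdiff.mono (min_le_right _ _)).add ((ha k₀).mono (min_le_left _ _))

lemma HasHahnSeriesOn.of_tendsto (ha : ∀ᶠ k in p, HasHahnSeriesOn (f k) (a k) m)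
    (hℓ : ∀ ε > 0, ∀ᶠ k in p, ∀ F : Finset ℝ, ∑ α ∈ F, ‖(aL - a k) α‖ * Real.exp (α * m) ≤ ε)
    (haL : ∀ α < 0, aL α = 0)
    (hf : ∀ w : ℂ, w.re < m → Tendsto (fun k => f k w) p (𝓝 (flim w))) :
    HasHahnSeriesOn flim aL m := by
  have hs {b : ℝ → V} {ε : ℝ} (h : ∀ F : Finset ℝ, ∑ α ∈ F, ‖b α‖ * Real.exp (α * m) ≤ ε) :
      Summable fun α => ‖b α‖ * Real.exp (α * m) :=
    summable_of_sum_le (fun _ => by positivity) h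
  have hsL : Summable fun α => ‖aL α‖ * Real.exp (α * m) := by
    obtain ⟨k, hak, hk⟩ := (ha.and (hℓ 1 one_pos)).exists
    refine ((hs hk).add hak.summable).of_nonneg_of_le (fun _ => by positivity) fun α => ?_
    rw [← add_mul]
    gcongr
    exact norm_le_norm_sub_add _ _
  refine .of_summable haL hsL fun w hw => tendsto_nhds_unique (hf w hw) ?_
  have hwL := Summable.of_norm_bounded hsL (norm_cexp_smul_le_s5 haL hw.le)
  refine Metric.tendsto_nhds.2 fun ε hε => ?_
  filter_upwards [ha, hℓ (ε / 2) (half_pos hε)] with k hak hk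
  have hneg (α : ℝ) (hα : α < 0) : (aL - a k) α = 0 := by
    simp [haL α hα, hak.eq_zero_of_neg α hα]
  have hdiff : HasSum (fun α : ℝ => Complex.exp (α * w) • (aL - a k) α)
      (∑' α : ℝ, Complex.exp (α * w) • aL α - f k w) := by
    simpa only [Pi.sub_apply, smul_sub] using hwL.hasSum.sub (hak.hasSum w hw)
  rw [dist_comm, dist_eq_norm, ← hdiff.tsum_eq]
  calc _ ≤ ∑' α : ℝ, ‖(aL - a k) α‖ * Real.exp (α * m) :=
        tsum_of_norm_bounded (hs hk).hasSum (norm_cexp_smul_le_s5 hneg hw.le)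
    _ ≤ ε / 2 := Real.tsum_le_of_sum_le (fun _ => by positivity) hk
    _ < ε := half_lt_self hε

theorem exists_hasHahnSeriesOn_of_tendstoUniformlyOn
    (hf : ∀ k, DifferentiableOn ℂ (f k) {w | w.re < L})
    (ha : ∀ k, HasHahnSeriesOn (f k) (a k) (l k))
    (hlim : TendstoUniformlyOn f flim p {w | w.re < L}) (hq : q ≤ 0)
    (hC : ∀ k, ExpSumLE q C (support (a k))) :
    ∃ aL : ℝ → V, (∀ α, Tendsto (fun k => a k α) p (𝓝 (aL α))) ∧
      ∃ m ≤ L, HasHahnSeriesOn flim aL m := by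
  obtain ⟨aL, haL⟩ := exists_tendstoUniformly_coeff hf ha hlim
  obtain ⟨m, hm, ham⟩ := exists_eventually_hasHahnSeriesOn hf ha hlim hq hC
  have htendsto (α : ℝ) : Tendsto (fun k => a k α) p (𝓝 (aL α)) :=
    (tendsto_const_smul_iff₀ (Real.exp_pos (α * L)).ne').1 (haL.tendsto_at α)
  have hneg (α : ℝ) (hα : α < 0) : aL α = 0 :=
    tendsto_nhds_unique (htendsto α) <|
      tendsto_const_nhds.congr fun k => ((ha k).eq_zero_of_neg α hα).symm
  have hCL : ExpSumLE q C (support aL) :=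
    .of_eventually_mem hC fun α hα => (htendsto α).eventually_ne hα
  refine ⟨aL, htendsto, m, by linarith, .of_tendsto ham (fun ε hε => ?_) hneg fun w hw => ?_⟩
  · exact eventually_sum_norm_sub_mul_exp_le haL (fun k => (ha k).eq_zero_of_neg) hneg hC hCL hm hε
  · exact hlim.tendsto_at (lt_of_lt_of_le hw (by linarith))

end Limit

lemma Omega_top (δ : ℝ) : Omega δ ⊤ = {w | w.re < Real.log δ} := by
  ext w
  simp [Omega]

lemma hasHahnSeriesOn_log_iff [CompleteSpace V] {g : ℂ → V} {b : ℝ → V} {T : Set ℝ} {δ : ℝ}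
    (hδ : 0 < δ) (hT : T ⊆ Set.Ici 0) (hb : ∀ α ∉ T, b α = 0) :
    HasHahnSeriesOn g b (Real.log δ) ↔
      (Summable fun α : T => ‖b α‖ * δ ^ (α : ℝ)) ∧
        ∀ w ∈ Omega δ ⊤, g w = ∑' α : T, Complex.exp (((α : ℝ) : ℂ) * w) • b α := by
  have hneg (α : ℝ) (hα : α < 0) : b α = 0 := hb α fun h => (hT h).not_gt hα
  have hsupp : support (fun α => ‖b α‖ * Real.exp (α * Real.log δ)) ⊆ T :=
    support_subset_iff'.2 fun α hα => by simp [hb α hα]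
  have hsummable : (Summable fun α : T => ‖b α‖ * δ ^ (α : ℝ)) ↔
      Summable fun α => ‖b α‖ * Real.exp (α * Real.log δ) := by
    simp only [Real.rpow_def_of_pos hδ, mul_comm (Real.log δ)]
    exact summable_subtype_iff_indicator.trans (by rw [Set.indicator_eq_self.2 hsupp])
  have htsum (w : ℂ) : ∑' α : T, Complex.exp (((α : ℝ) : ℂ) * w) • b α =
      ∑' α : ℝ, Complex.exp (α * w) • b α :=
    tsum_subtype_eq_of_support_subset (f := fun α : ℝ => Complex.exp (α * w) • b α) <|
      support_subset_iff'.2 fun α hα => by simp [hb α hα]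
  simp only [hsummable, htsum, Omega_top]
  exact ⟨fun h => ⟨h.summable, fun w hw => (h.hasSum w hw).tsum_eq.symm⟩,
    fun h => .of_summable hneg h.1 h.2⟩

lemma eventually_mem_iff_of_inter_isCompact_eq {S : ℕ → Set ℝ} {I : Set ℝ}
    (h : ∀ K : Set ℝ, IsCompact K → ∃ N : ℕ, ∀ k ≥ N, S k ∩ K = I ∩ K) (α : ℝ) :
    ∀ᶠ k in atTop, α ∈ S k ↔ α ∈ I := by
  obtain ⟨N, hN⟩ := h {α} isCompact_singleton
  filter_upwards [eventually_ge_atTop N] with k hk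
  simpa using Set.ext_iff.1 (hN k hk) α

theorem limit_of_zHahn_holomorphic_general [CompleteSpace V] {ι : Type*} {p : Filter ι} [NeBot p]
    {R : ℝ} (hR : 0 < R) {f : ι → ℂ → V} (hhol : ∀ k, DifferentiableOn ℂ (f k) (Omega R ⊤))
    {δ : ι → ℝ} (hδ : ∀ k, 0 < δ k) {S : ι → Set ℝ} (hS0 : ∀ k, S k ⊆ Set.Ici 0)
    {a : ι → ℝ → V} (hsupp : ∀ k, ∀ α ∉ S k, a k α = 0)
    (hsum : ∀ k, Summable fun α : S k => ‖a k α‖ * δ k ^ (α : ℝ))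
    (hfk : ∀ k, ∀ w ∈ Omega (δ k) ⊤,
      f k w = ∑' α : S k, Complex.exp (((α : ℝ) : ℂ) * w) • a k α)
    {flim : ℂ → V} (huniform : TendstoUniformlyOn f flim p (Omega R ⊤))
    {C ε : ℝ} (hε : 0 < ε)
    (hunif : ∀ k, ∑' α : S k, ENNReal.ofReal (ε ^ (α : ℝ)) < ENNReal.ofReal C)
    {I : Set ℝ} (hI : ∀ α, ∀ᶠ k in p, α ∈ S k ↔ α ∈ I) :
    I.Countable ∧ I.IsWF ∧ I ⊆ Set.Ici 0 ∧
    ∃ aL : ℝ → V,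
      (∀ α ∈ I, Tendsto (fun k => a k α) p (𝓝 (aL α))) ∧
      ∃ δ : ℝ, 0 < δ ∧ δ ≤ R ∧
        (Summable fun α : I => ‖aL α‖ * δ ^ (α : ℝ)) ∧
        ∀ w ∈ Omega δ ⊤, flim w = ∑' α : I, Complex.exp (((α : ℝ) : ℂ) * w) • aL α := by
  have hC (k : ι) := ExpSumLE.of_tsum_ofReal_rpow_lt hε (hS0 k) (hunif k)
  have hIS (α : ℝ) (hα : α ∈ I) : ∀ᶠ k in p, α ∈ S k := (hI α).mono fun k hk => hk.2 hα
  have hIfin := (ExpSumLE.of_eventually_mem hC hIS).finite_inter_Iic (min_le_left _ _)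
  have hI0 : I ⊆ Set.Ici 0 := fun α hα =>
    let ⟨k, hk⟩ := (hIS α hα).exists
    hS0 k hk
  refine ⟨countable_of_forall_finite_inter_Iic hIfin, isWF_of_forall_finite_inter_Iic hIfin,
    hI0, ?_⟩
  rw [Omega_top] at huniform
  simp only [Omega_top R] at hhol
  obtain ⟨aL, haL, m, hm, hseries⟩ := exists_hasHahnSeriesOn_of_tendstoUniformlyOn hhol
    (fun k => (hasHahnSeriesOn_log_iff (hδ k) (hS0 k) (hsupp k)).2 ⟨hsum k, hfk k⟩) huniform
    (min_le_left _ _) fun k => (hC k).mono (support_subset_iff'.2 (hsupp k))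
  have haLI (α : ℝ) (hα : α ∉ I) : aL α = 0 :=
    tendsto_nhds_unique (haL α) <| tendsto_const_nhds.congr' <|
      (hI α).mono fun k hk => (hsupp k α (mt hk.1 hα)).symm
  refine ⟨aL, fun α _ => haL α, Real.exp m, Real.exp_pos m, (Real.le_log_iff_exp_le hR).1 hm, ?_⟩
  exact (hasHahnSeriesOn_log_iff (Real.exp_pos m) hI0 haLI).1 (by rwa [Real.log_exp])

end

/-- Limits of z-Hahn holomorphic functions (Theorem 5.5). -/
theorem limit_of_zHahn_holomorphic
    {V : Type*} [NormedAddCommGroup V] [NormedSpace ℂ V] [CompleteSpace V]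
    (R : ℝ) (hR : 0 < R)
    (f : ℕ → ℂ → V)
    (hhol : ∀ k, DifferentiableOn ℂ (f k) (Omega R ⊤))
    (hbdd : ∀ k, ∃ M : ℝ, ∀ w ∈ Omega R ⊤, ‖f k w‖ ≤ M)
    (δseq : ℕ → ℝ) (hδseq : ∀ k, δseq k ∈ Set.Ioc 0 R)
    (S : ℕ → Set ℝ)
    (hSc : ∀ k, (S k).Countable) (hSwf : ∀ k, (S k).IsWF) (hS0 : ∀ k, S k ⊆ Set.Ici 0)
    (a : ℕ → ℝ → V) (hsupp : ∀ k, ∀ α ∉ S k, a k α = 0)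
    (hsum : ∀ k, Summable fun α : S k => ‖a k (α : ℝ)‖ * δseq k ^ (α : ℝ))
    (hfk : ∀ k, ∀ w ∈ Omega (δseq k) ⊤,
      f k w = ∑' α : S k, Complex.exp (((α : ℝ) : ℂ) * w) • a k (α : ℝ))
    -- (1) uniform convergence to a bounded function f∞
    (flim : ℂ → V)
    (huniform : TendstoUniformlyOn f flim Filter.atTop (Omega R ⊤))
    (hlimbdd : ∃ M : ℝ, ∀ w ∈ Omega R ⊤, ‖flim w‖ ≤ M)
    -- (2) uniform bound  ∑_{α ∈ S_k} ε̂^α < C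
    (C εhat : ℝ) (hC : 0 < C) (hεhat : 0 < εhat)
    (hunif : ∀ k, (∑' α : S k, ENNReal.ofReal (εhat ^ (α : ℝ))) < ENNReal.ofReal C)
    -- (3) supports converge to I
    (I : Set ℝ)
    (hconv : ∀ K : Set ℝ, IsCompact K → ∃ N : ℕ, ∀ k ≥ N, S k ∩ K = I ∩ K) :
    I.Countable ∧ I.IsWF ∧ I ⊆ Set.Ici 0 ∧
    ∃ aL : ℝ → V,
      (∀ α ∈ I, Filter.Tendsto (fun k => a k α) Filter.atTop (nhds (aL α))) ∧
      ∃ δ : ℝ, 0 < δ ∧ δ ≤ R ∧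
        (Summable fun α : I => ‖aL (α : ℝ)‖ * δ ^ (α : ℝ)) ∧
        ∀ w ∈ Omega δ ⊤,
          flim w = ∑' α : I, Complex.exp (((α : ℝ) : ℂ) * w) • aL (α : ℝ) := by
  exact limit_of_zHahn_holomorphic_general hR hhol (fun k => (hδseq k).1) hS0 hsupp hsum hfk
    huniform hεhat hunif (eventually_mem_iff_of_inter_isCompact_eq hconv)
end
end

section
/- Hahn holomorphic Fredholm theorem (Theorem 4.1, z-case): Let H be a complex Hilbert space, δ > 0, σ ∈ (0,∞], and let f : Ω(δ,σ) → K(H) (compact operators on H) be z-Hahn holomorphic, represented on Ω(δ',σ) by a normally convergent series f(w) = ∑_{α∈S} A_α e^{αw} with countable well-ordered S ⊂ [0,∞), and with limit value f(0) = A_0. Then exactly one of the following holds. Either Id − f(w) is not invertible in B(H) for any w ∈ Ω(δ,σ) and Id − f(0) is not invertible; or the set D := {w ∈ Ω(δ,σ) : Id − f(w) is not invertible} is discrete in Ω(δ,σ), there is δ'' > 0 with D ∩ Ω(δ'',σ) = ∅, and the inverse is z-Hahn meromorphic at 0: there exist μ ≥ 0 in the additive subgroup of ℝ generated by S, a countable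 well-ordered set S' ⊂ [0,∞), and operators (B_γ)_{γ∈S'} in B(H) with ∑_{γ∈S'} ‖B_γ‖ (δ'')^γ < ∞ such that (Id − f(w))^{-1} = e^{−μw} ∑_{γ∈S'} B_γ e^{γw} for all w ∈ Ω(δ'',σ); moreover every coefficient B_γ with γ < μ (i.e. every coefficient of e^{γ'w} with γ' < 0 in the expansion of the inverse) is a finite-rank operator, and at every point of D the coefficients of the principal part of the Laurent expansion of (Id − f(w))^{-1} are finite-rank operators. -/
noncomputable section

/-- A continuous linear operator has finite rank. -/
def FiniteRank {H : Type*} [NormedAddCommGroup H] [InnerProductSpace ℂ H]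
    (T : H →L[ℂ] H) : Prop :=
  FiniteDimensional ℂ (LinearMap.range T.toLinearMap)

/-!
Write `A₀ = f(0)` as a finite-rank operator `VU`, factoring through a finite-dimensional space `E`,
plus an operator of norm `< 1`. Then `G = 1 - f + VU` is invertible near `0`, with an inverse given
by a Neumann series of generalized power series, and Woodbury's formula
`(G - VU)⁻¹ = G⁻¹ + G⁻¹V (1 - UG⁻¹V)⁻¹ UG⁻¹` reduces the problem to the endomorphism `1 - UG⁻¹V`
of `E`. Its determinant is a scalar generalized power series: either it vanishes identically, or
dividing by its leading power `e^{μw}` leaves a series with nonzero constant term, whose inverse is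
again a Neumann series. The negative powers of the full inverse come only from the summand passing
through `E`, so their coefficients have finite rank.

The substitution `w = w₀ + e^s` turns a Taylor expansion at an ordinary point `w₀` into a
generalized power series with natural exponents, so the same local statement gives the Laurent
expansions at the poles. Connectedness of `Ω(δ, σ)` makes the local alternatives at all points
agree.
-/

open Filter Topology

section Exponents

theorem nonneg_of_mem_of_isPWO {M : Type*} [AddCommMonoid M] [LinearOrder M]
    [IsOrderedCancelAddMonoid M] {Γ : AddSubmonoid M} (hΓ : (Γ : Set M).IsPWO) {γ : M}
    (hγ : γ ∈ Γ) : 0 ≤ γ := by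
  have hne : (Γ : Set M).Nonempty := ⟨0, Γ.zero_mem⟩
  exact (le_add_iff_nonneg_right _).1
    (hΓ.isWF.min_le hne (Γ.add_mem (hΓ.isWF.min_mem hne) hγ))

theorem exists_isPWO_addSubmonoid_sub_mem {G : Type*} [AddCommGroup G] [LinearOrder G]
    [IsOrderedAddMonoid G] {Γ : AddSubmonoid G} (hΓ : (Γ : Set G).IsPWO) {μ : G} (hμ : μ ∈ Γ) :
    ∃ Γ' : AddSubmonoid G, (Γ' : Set G).IsPWO ∧ Γ ≤ Γ' ∧
      Γ' ≤ (AddSubgroup.closure (Γ : Set G)).toAddSubmonoid ∧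
      ∀ γ ∈ Γ, μ ≤ γ → γ - μ ∈ Γ' := by
  let T : Set G := (· - μ) '' {γ | γ ∈ Γ ∧ μ ≤ γ}
  have hT : T.IsPWO := (hΓ.mono fun γ hγ => hγ.1).image_of_monotone
    fun x y hxy => sub_le_sub_right hxy μ
  have hnonneg : ∀ γ ∈ (Γ : Set G) ∪ T, 0 ≤ γ := by
    rintro γ (hγ | ⟨γ, hγ, rfl⟩)
    · exact nonneg_of_mem_of_isPWO hΓ hγ
    · exact sub_nonneg.2 hγ.2
  refine ⟨AddSubmonoid.closure (Γ ∪ T), Set.IsPWO.addSubmonoid_closure hnonneg (hΓ.union hT),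
    fun γ hγ => AddSubmonoid.subset_closure (Or.inl hγ), AddSubmonoid.closure_le.2 ?_,
    fun γ hγ hμγ => AddSubmonoid.subset_closure (Or.inr ⟨γ, ⟨hγ, hμγ⟩, rfl⟩)⟩
  rintro γ (hγ | ⟨γ, hγ, rfl⟩)
  · exact AddSubgroup.subset_closure hγ
  · exact AddSubgroup.sub_mem _ (AddSubgroup.subset_closure hγ.1) (AddSubgroup.subset_closure hμ)

end Exponents

section DoubleSums

theorem hasSum_tsum_sub {G X : Type*} [AddCommGroup G] [NormedAddCommGroup X] [CompleteSpace X]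
    {u : G × G → X} {s : X} (hu : HasSum u s) : HasSum (fun γ => ∑' i, u (i, γ - i)) s := by
  let e : G × G ≃ G × G := (Equiv.prodComm G G).trans
    ((Equiv.refl G).prodShear fun i => Equiv.subRight i)
  have hue : HasSum (fun q : G × G => u (q.2, q.1 - q.2)) s := e.hasSum_iff.2 hu
  exact hue.prod_fiberwise fun γ => (hue.summable.prod_factor γ).hasSum

theorem hasSum_bilinear {ι κ X Y Z : Type*} [NormedAddCommGroup X] [NormedSpace ℂ X]
    [NormedAddCommGroup Y] [NormedSpace ℂ Y] [NormedAddCommGroup Z] [NormedSpace ℂ Z]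
    [CompleteSpace Z] (L : X →L[ℂ] Y →L[ℂ] Z)
    {u : ι → X} {v : κ → Y} {x : X} {y : Y} (hu : HasSum u x) (hv : HasSum v y)
    (hu' : Summable fun i => ‖u i‖) (hv' : Summable fun j => ‖v j‖) :
    HasSum (fun q : ι × κ => L (u q.1) (v q.2)) (L x y) := by
  have hsum : Summable fun q : ι × κ => L (u q.1) (v q.2) := by
    refine .of_norm_bounded ((hu'.mul_of_nonneg hv' (fun _ => norm_nonneg _)
      fun _ => norm_nonneg _).mul_left ‖L‖) fun q => ?_
    simpa only [mul_assoc] using L.le_opNorm₂ (u q.1) (v q.2)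
  have hrows : HasSum (fun i => L (u i) y) (∑' q : ι × κ, L (u q.1) (v q.2)) :=
    hsum.hasSum.prod_fiberwise fun i => (L (u i)).hasSum hv
  have hcols : HasSum (fun i => L (u i) y) (L x y) := (L.flip y).hasSum hu
  rw [hcols.unique hrows]
  exact hsum.hasSum

end DoubleSums

/-- The weighted `ℓ¹`-norm `∑ ‖a_γ‖ r ^ γ` of a generalized power series, which bounds its sum on
`Re w < log r`. Its value is `0` if the series does not converge normally. -/
def hahnNorm {X : Type*} [NormedAddCommGroup X] (r : ℝ) (a : ℝ → X) : ℝ :=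
  ∑' γ : ℝ, ‖a γ‖ * r ^ γ

/-- The generalized power series `∑ a_γ e^{γw}` with exponents in `Γ` converges normally for
`Re w < log r`, and `f` is its sum there. The coefficients are indexed by all of `ℝ` and vanish off
`Γ`; a well-ordered submonoid of `ℝ` automatically lies in `[0, ∞)`. -/
structure HasHahnExpansion {X : Type*} [NormedAddCommGroup X] [NormedSpace ℂ X]
    (Γ : AddSubmonoid ℝ) (r : ℝ) (a : ℝ → X) (f : ℂ → X) : Prop where
  isPWO : (Γ : Set ℝ).IsPWO
  radius_pos : 0 < r
  eq_zero_of_notMem : ∀ γ ∉ Γ, a γ = 0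
  summable : Summable fun γ : ℝ => ‖a γ‖ * r ^ γ
  hasSum : ∀ w : ℂ, w.re < Real.log r →
    HasSum (fun γ : ℝ => Complex.exp ((γ : ℂ) * w) • a γ) (f w)

theorem norm_exp_mul_le_rpow {r γ : ℝ} (hr : 0 < r) (hγ : 0 ≤ γ) {w : ℂ}
    (hw : w.re ≤ Real.log r) : ‖Complex.exp ((γ : ℂ) * w)‖ ≤ r ^ γ := by
  rw [Complex.norm_exp, Real.rpow_def_of_pos hr, Complex.re_ofReal_mul, mul_comm]
  gcongr

namespace HasHahnExpansion

variable {X Y Z : Type*} [NormedAddCommGroup X] [NormedSpace ℂ X]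
  [NormedAddCommGroup Y] [NormedSpace ℂ Y] [NormedAddCommGroup Z] [NormedSpace ℂ Z]
  {Γ Γ' : AddSubmonoid ℝ} {r r' : ℝ} {a b : ℝ → X} {f g : ℂ → X}

theorem mem_of_ne_zero (h : HasHahnExpansion Γ r a f) {γ : ℝ} (hγ : a γ ≠ 0) : γ ∈ Γ :=
  not_imp_comm.1 (h.eq_zero_of_notMem γ) hγ

theorem nonneg_of_ne_zero (h : HasHahnExpansion Γ r a f) {γ : ℝ} (hγ : a γ ≠ 0) : 0 ≤ γ :=
  nonneg_of_mem_of_isPWO h.isPWO (h.mem_of_ne_zero hγ)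

theorem norm_mul_rpow_le (h : HasHahnExpansion Γ r a f) (hr' : 0 ≤ r') (hle : r' ≤ r) (γ : ℝ) :
    ‖a γ‖ * r' ^ γ ≤ ‖a γ‖ * r ^ γ := by
  by_cases hγ : a γ = 0
  · simp [hγ]
  · gcongr
    exact h.nonneg_of_ne_zero hγ

theorem norm_term_le (h : HasHahnExpansion Γ r a f) {w : ℂ} (hw : w.re < Real.log r) (γ : ℝ) :
    ‖Complex.exp ((γ : ℂ) * w) • a γ‖ ≤ ‖a γ‖ * r ^ γ := by
  by_cases hγ : a γ = 0
  · simp [hγ]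
  · rw [norm_smul, mul_comm]
    gcongr
    exact norm_exp_mul_le_rpow h.radius_pos (h.nonneg_of_ne_zero hγ) hw.le

theorem summable_norm_term (h : HasHahnExpansion Γ r a f) {w : ℂ} (hw : w.re < Real.log r) :
    Summable fun γ : ℝ => ‖Complex.exp ((γ : ℂ) * w) • a γ‖ :=
  .of_nonneg_of_le (fun _ => norm_nonneg _) (h.norm_term_le hw) h.summable

theorem norm_le_hahnNorm (h : HasHahnExpansion Γ r a f) {w : ℂ} (hw : w.re < Real.log r) :
    ‖f w‖ ≤ hahnNorm r a := by
  rw [← (h.hasSum w hw).tsum_eq]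
  exact tsum_of_norm_bounded h.summable.hasSum (h.norm_term_le hw)

theorem congr (h : HasHahnExpansion Γ r a f)
    (hfg : ∀ w : ℂ, w.re < Real.log r → f w = g w) : HasHahnExpansion Γ r a g :=
  { h with hasSum := fun w hw => hfg w hw ▸ h.hasSum w hw }

theorem mono (h : HasHahnExpansion Γ r a f) (hΓ' : (Γ' : Set ℝ).IsPWO) (hle : Γ ≤ Γ')
    (hr' : r' ∈ Set.Ioc 0 r) : HasHahnExpansion Γ' r' a f where
  isPWO := hΓ'
  radius_pos := hr'.1
  eq_zero_of_notMem γ hγ := h.eq_zero_of_notMem γ fun hγΓ => hγ (hle hγΓ)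
  summable := .of_nonneg_of_le (fun γ => mul_nonneg (norm_nonneg _) (Real.rpow_nonneg hr'.1.le γ))
    (h.norm_mul_rpow_le hr'.1.le hr'.2) h.summable
  hasSum w hw := h.hasSum w (hw.trans_le (Real.log_le_log hr'.1 hr'.2))

theorem restrict (h : HasHahnExpansion Γ r a f) (hr' : r' ∈ Set.Ioc 0 r) :
    HasHahnExpansion Γ r' a f :=
  h.mono h.isPWO le_rfl hr'

theorem const (hΓ : (Γ : Set ℝ).IsPWO) (hr : 0 < r) (x : X) :
    HasHahnExpansion Γ r (Pi.single 0 x) fun _ => x where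
  isPWO := hΓ
  radius_pos := hr
  eq_zero_of_notMem γ hγ := by
    have hne : γ ≠ 0 := fun h => hγ (h ▸ Γ.zero_mem)
    simp [hne]
  summable := summable_of_ne_finset_zero (s := {0}) fun γ hγ => by
    simp [Pi.single_eq_of_ne (Finset.notMem_singleton.1 hγ)]
  hasSum w _ := by
    convert hasSum_single (f := fun γ : ℝ => Complex.exp ((γ : ℂ) * w) •
      (Pi.single 0 x : ℝ → X) γ) 0 fun γ hγ => by simp [Pi.single_eq_of_ne hγ]
    simp

theorem add (h : HasHahnExpansion Γ r a f) (h' : HasHahnExpansion Γ r b g) :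
    HasHahnExpansion Γ r (a + b) (f + g) where
  isPWO := h.isPWO
  radius_pos := h.radius_pos
  eq_zero_of_notMem γ hγ := by
    simp [h.eq_zero_of_notMem γ hγ, h'.eq_zero_of_notMem γ hγ]
  summable := by
    have hr := h.radius_pos
    refine .of_nonneg_of_le (fun γ => by positivity) (fun γ => ?_) (h.summable.add h'.summable)
    rw [← add_mul]
    gcongr
    exact norm_add_le _ _
  hasSum w hw := by simpa using (h.hasSum w hw).add (h'.hasSum w hw)

theorem map (h : HasHahnExpansion Γ r a f) (L : X →L[ℂ] Y) :
    HasHahnExpansion Γ r (fun γ => L (a γ)) (fun w => L (f w)) where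
  isPWO := h.isPWO
  radius_pos := h.radius_pos
  eq_zero_of_notMem γ hγ := by simp [h.eq_zero_of_notMem γ hγ]
  summable := by
    have hr := h.radius_pos
    refine .of_nonneg_of_le (fun γ => by positivity) (fun γ => ?_) (h.summable.mul_left ‖L‖)
    rw [← mul_assoc]
    gcongr
    exact L.le_opNorm _
  hasSum w hw := by simpa using L.hasSum (h.hasSum w hw)

theorem sum (hΓ : (Γ : Set ℝ).IsPWO) (hr : 0 < r) {ι : Type*} (s : Finset ι)
    {a : ι → ℝ → X} {f : ι → ℂ → X} (h : ∀ i ∈ s, HasHahnExpansion Γ r (a i) (f i)) :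
    HasHahnExpansion Γ r (∑ i ∈ s, a i) (∑ i ∈ s, f i) := by
  classical
  induction s using Finset.induction_on with
  | empty => simpa using! const hΓ hr (0 : X)
  | insert i s hi ih =>
    rw [Finset.sum_insert hi, Finset.sum_insert hi]
    exact (h i (s.mem_insert_self i)).add (ih fun j hj => h j (Finset.mem_insert_of_mem hj))

theorem exp_smul (h : HasHahnExpansion Γ r a f) {μ : ℝ} (hΓ' : (Γ' : Set ℝ).IsPWO)
    (hμ : ∀ γ, a γ ≠ 0 → γ + μ ∈ Γ') :
    HasHahnExpansion Γ' r (fun γ => a (γ - μ)) (fun w => Complex.exp ((μ : ℂ) * w) • f w) where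
  isPWO := hΓ'
  radius_pos := h.radius_pos
  eq_zero_of_notMem γ hγ := by
    by_contra hne
    exact hγ (by simpa using hμ _ hne)
  summable := by
    refine (((Equiv.subRight μ).summable_iff.2 h.summable).mul_right (r ^ μ)).congr fun γ => ?_
    simp [mul_assoc, ← Real.rpow_add h.radius_pos]
  hasSum w hw := by
    convert ((Equiv.subRight μ).hasSum_iff.2 (h.hasSum w hw)).const_smul
      (Complex.exp ((μ : ℂ) * w)) using 2 with γ
    simp [smul_smul, ← Complex.exp_add, ← add_mul]

theorem tendsto_hahnNorm (h : HasHahnExpansion Γ r a f) :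
    Tendsto (fun s => hahnNorm s a) (𝓝[>] 0) (𝓝 ‖a 0‖) := by
  have hterm (γ : ℝ) :
      Tendsto (fun s : ℝ => ‖a γ‖ * s ^ γ) (𝓝[>] 0) (𝓝 (if γ = 0 then ‖a 0‖ else 0)) := by
    rcases eq_or_ne γ 0 with rfl | hγ
    · simp
    rcases eq_or_ne (a γ) 0 with ha | ha
    · simp [ha, hγ]
    have hlim := (Real.continuousAt_rpow_const 0 γ (.inr (h.nonneg_of_ne_zero ha))).tendsto
    simpa [hγ] using (hlim.const_mul ‖a γ‖).mono_left nhdsWithin_le_nhds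
  have hbound : ∀ᶠ s in 𝓝[>] (0 : ℝ), ∀ γ, ‖‖a γ‖ * s ^ γ‖ ≤ ‖a γ‖ * r ^ γ := by
    filter_upwards [Ioc_mem_nhdsGT h.radius_pos] with s hs γ
    have hs0 := hs.1
    rw [Real.norm_of_nonneg (by positivity)]
    exact h.norm_mul_rpow_le hs0.le hs.2 γ
  have hlim := tendsto_tsum_of_dominated_convergence h.summable hterm hbound
  rwa [tsum_ite_eq] at hlim

theorem exists_hahnNorm_lt (h : HasHahnExpansion Γ r a f) {c : ℝ} (hc : ‖a 0‖ < c) :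
    ∃ r' ∈ Set.Ioc 0 r, hahnNorm r' a < c := by
  have hmem : ∀ᶠ s in 𝓝[>] (0 : ℝ), s ∈ Set.Ioc 0 r := Ioc_mem_nhdsGT h.radius_pos
  exact (hmem.and (h.tendsto_hahnNorm.eventually_lt_const hc)).exists

theorem tendsto_comap_re_atBot [CompleteSpace X] (h : HasHahnExpansion Γ r a f) :
    Tendsto f (comap Complex.re atBot) (𝓝 (a 0)) := by
  have hterm (γ : ℝ) : Tendsto (fun w : ℂ => Complex.exp ((γ : ℂ) * w) • a γ)
      (comap Complex.re atBot) (𝓝 (if γ = 0 then a 0 else 0)) := by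
    rcases eq_or_ne γ 0 with rfl | hγ
    · simpa using tendsto_const_nhds
    rcases eq_or_ne (a γ) 0 with ha | ha
    · simpa [ha, hγ] using tendsto_const_nhds
    have hexp : Tendsto (fun w : ℂ => Complex.exp ((γ : ℂ) * w)) (comap Complex.re atBot)
        (𝓝 0) := by
      rw [Complex.tendsto_exp_nhds_zero_iff]
      simpa only [Complex.re_ofReal_mul] using tendsto_comap.const_mul_atBot
        ((h.nonneg_of_ne_zero ha).lt_of_ne' hγ)
    simpa [hγ] using hexp.smul_const (a γ)
  have hre : ∀ᶠ w in comap Complex.re atBot, w.re < Real.log r :=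
    tendsto_comap.eventually_lt_atBot (Real.log r)
  have hlim := tendsto_tsum_of_dominated_convergence h.summable hterm
    (hre.mono fun w hw => h.norm_term_le hw)
  rw [tsum_ite_eq] at hlim
  exact hlim.congr' (hre.mono fun w hw => (h.hasSum w hw).tsum_eq)

end HasHahnExpansion

section Product

variable {X Y Z : Type*} [NormedAddCommGroup X] [NormedSpace ℂ X]
  [NormedAddCommGroup Y] [NormedSpace ℂ Y] [NormedAddCommGroup Z] [NormedSpace ℂ Z]
  {Γ : AddSubmonoid ℝ} {r : ℝ} {a : ℝ → X} {b : ℝ → Y} {f : ℂ → X} {g : ℂ → Y}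

/-- The Cauchy product of two generalized power series with respect to a bilinear map. For
coefficients supported in well-ordered sets the sum has only finitely many nonzero terms. -/
def hahnConv (L : X →L[ℂ] Y →L[ℂ] Z) (a : ℝ → X) (b : ℝ → Y) (γ : ℝ) : Z :=
  ∑' i : ℝ, L (a i) (b (γ - i))

namespace HasHahnExpansion

theorem finite_setOf_sub_ne_zero (hf : HasHahnExpansion Γ r a f) (hg : HasHahnExpansion Γ r b g)
    (γ : ℝ) : {i : ℝ | a i ≠ 0 ∧ b (γ - i) ≠ 0}.Finite := by
  refine ((Set.AddAntidiagonal.finite_of_isPWO hf.isPWO hg.isPWO γ).image Prod.fst).subset ?_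
  rintro i ⟨hai, hbi⟩
  exact ⟨(i, γ - i), ⟨hf.mem_of_ne_zero hai, hg.mem_of_ne_zero hbi, by simp⟩, rfl⟩

theorem hahnConv_mem (hf : HasHahnExpansion Γ r a f) (hg : HasHahnExpansion Γ r b g)
    (L : X →L[ℂ] Y →L[ℂ] Z) (p : AddSubmonoid Z) {γ : ℝ}
    (hp : ∀ i, L (a i) (b (γ - i)) ∈ p) : hahnConv L a b γ ∈ p := by
  rw [hahnConv, tsum_eq_sum (s := (hf.finite_setOf_sub_ne_zero hg γ).toFinset)]
  · exact p.sum_mem fun i _ => hp i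
  · intro i hi
    rw [Set.Finite.mem_toFinset, Set.mem_ofPred_eq, not_and_or, not_not, not_not] at hi
    rcases hi with hi | hi <;> simp [hi]

theorem norm_hahnConv_mul_rpow_le (hf : HasHahnExpansion Γ r a f)
    (hg : HasHahnExpansion Γ r b g) (L : X →L[ℂ] Y →L[ℂ] Z) (γ : ℝ) :
    ‖hahnConv L a b γ‖ * r ^ γ ≤
      ‖L‖ * ∑' i, (‖a i‖ * r ^ i) * (‖b (γ - i)‖ * r ^ (γ - i)) := by
  have hr := hf.radius_pos
  have hfin : Summable fun i => (‖a i‖ * r ^ i) * (‖b (γ - i)‖ * r ^ (γ - i)) := by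
    refine summable_of_hasFiniteSupport ((hf.finite_setOf_sub_ne_zero hg γ).subset fun i hi => ?_)
    constructor <;> intro h0 <;> simp [h0] at hi
  rw [hahnConv, ← Real.norm_of_nonneg (Real.rpow_nonneg hr.le γ), mul_comm, ← norm_smul,
    ← tsum_const_smul'']
  refine tsum_of_norm_bounded (hfin.hasSum.mul_left ‖L‖) fun i => ?_
  rw [norm_smul, Real.norm_of_nonneg (Real.rpow_nonneg hr.le γ)]
  calc r ^ γ * ‖L (a i) (b (γ - i))‖
      ≤ r ^ γ * (‖L‖ * ‖a i‖ * ‖b (γ - i)‖) := by gcongr; exact L.le_opNorm₂ _ _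
    _ = r ^ (i + (γ - i)) * (‖L‖ * ‖a i‖ * ‖b (γ - i)‖) := by rw [add_sub_cancel]
    _ = ‖L‖ * ((‖a i‖ * r ^ i) * (‖b (γ - i)‖ * r ^ (γ - i))) := by
      rw [Real.rpow_add hr]; ring

theorem hasSum_norm_mul_norm_sub (hf : HasHahnExpansion Γ r a f)
    (hg : HasHahnExpansion Γ r b g) :
    HasSum (fun γ => ∑' i, (‖a i‖ * r ^ i) * (‖b (γ - i)‖ * r ^ (γ - i)))
      (hahnNorm r a * hahnNorm r b) := by
  have hr := hf.radius_pos
  exact hasSum_tsum_sub (u := fun q : ℝ × ℝ => (‖a q.1‖ * r ^ q.1) * (‖b q.2‖ * r ^ q.2))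
    (hf.summable.hasSum.mul hg.summable.hasSum (hf.summable.mul_of_nonneg hg.summable
      (fun _ => by positivity) fun _ => by positivity))

theorem bilinear [CompleteSpace Z] (hf : HasHahnExpansion Γ r a f)
    (hg : HasHahnExpansion Γ r b g) (L : X →L[ℂ] Y →L[ℂ] Z) :
    HasHahnExpansion Γ r (hahnConv L a b) (fun w => L (f w) (g w)) where
  isPWO := hf.isPWO
  radius_pos := hf.radius_pos
  eq_zero_of_notMem γ hγ := by
    refine (hf.hahnConv_mem hg L ⊥ fun i => ?_ : hahnConv L a b γ ∈ (⊥ : AddSubmonoid Z))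
    by_contra hne
    have hi : i ∈ Γ := hf.mem_of_ne_zero fun h0 => hne (by simp [h0])
    have hγi : γ - i ∈ Γ := hg.mem_of_ne_zero fun h0 => hne (by simp [h0])
    exact hγ (by simpa using Γ.add_mem hi hγi)
  summable := by
    have hr := hf.radius_pos
    exact .of_nonneg_of_le (fun γ => by positivity) (hf.norm_hahnConv_mul_rpow_le hg L)
      ((hf.hasSum_norm_mul_norm_sub hg).summable.mul_left ‖L‖)
  hasSum w hw := by
    convert hasSum_tsum_sub (hasSum_bilinear L (hf.hasSum w hw) (hg.hasSum w hw)
      (hf.summable_norm_term hw) (hg.summable_norm_term hw)) using 2 with γ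
    rw [hahnConv, ← tsum_const_smul'']
    refine tsum_congr fun i => ?_
    simp [smul_smul, ← Complex.exp_add, ← add_mul]

theorem hahnNorm_hahnConv_le (hf : HasHahnExpansion Γ r a f) (hg : HasHahnExpansion Γ r b g)
    (L : X →L[ℂ] Y →L[ℂ] Z) :
    hahnNorm r (hahnConv L a b) ≤ ‖L‖ * (hahnNorm r a * hahnNorm r b) := by
  have hr := hf.radius_pos
  have hbound := (hf.hasSum_norm_mul_norm_sub hg).mul_left ‖L‖
  rw [← hbound.tsum_eq]
  exact Summable.tsum_le_tsum (hf.norm_hahnConv_mul_rpow_le hg L)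
    (.of_nonneg_of_le (fun γ => by positivity) (hf.norm_hahnConv_mul_rpow_le hg L)
      hbound.summable) hbound.summable

end HasHahnExpansion

end Product

section Inverse

variable {Γ : AddSubmonoid ℝ} {r : ℝ}

theorem hahnNorm_nonneg {X : Type*} [NormedAddCommGroup X] (hr : 0 ≤ r) (a : ℝ → X) :
    0 ≤ hahnNorm r a :=
  tsum_nonneg fun γ => mul_nonneg (norm_nonneg _) (Real.rpow_nonneg hr γ)

theorem hahnNorm_single {X : Type*} [NormedAddCommGroup X] (r : ℝ) (x : X) :
    hahnNorm r (Pi.single 0 x) = ‖x‖ := by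
  rw [hahnNorm, tsum_eq_single 0 fun γ hγ => by simp [hγ]]
  simp

namespace HasHahnExpansion

theorem tsum {X : Type*} [NormedAddCommGroup X] [NormedSpace ℂ X] [CompleteSpace X]
    {ι : Type*} [Nonempty ι] {a : ι → ℝ → X} {f : ι → ℂ → X}
    (h : ∀ i, HasHahnExpansion Γ r (a i) (f i)) (hs : Summable fun i => hahnNorm r (a i)) :
    HasHahnExpansion Γ r (fun γ => ∑' i, a i γ) (fun w => ∑' i, f i w) := by
  obtain ⟨i₀⟩ := ‹Nonempty ι›
  have hr := (h i₀).radius_pos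
  have hdouble : Summable fun q : ι × ℝ => ‖a q.1 q.2‖ * r ^ q.2 :=
    (summable_prod_of_nonneg fun q => by positivity).2 ⟨fun i => (h i).summable, hs⟩
  have hcol (γ : ℝ) : Summable fun i => ‖a i γ‖ := by
    have hγ := (hdouble.prod_symm.prod_factor γ).mul_right (r ^ γ)⁻¹
    simpa [mul_assoc, (Real.rpow_pos_of_pos hr γ).ne'] using hγ
  refine ⟨(h i₀).isPWO, hr, fun γ hγ => ?_, ?_, fun w hw => ?_⟩
  · simp [(h _).eq_zero_of_notMem γ hγ]
  · refine .of_nonneg_of_le (fun γ => by positivity) (fun γ => ?_) hdouble.prod_symm.prod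
    change _ ≤ ∑' i, ‖a i γ‖ * r ^ γ
    rw [tsum_mul_right]
    gcongr
    exact norm_tsum_le_tsum_norm (hcol γ)
  · have hterms : Summable fun q : ι × ℝ => Complex.exp ((q.2 : ℂ) * w) • a q.1 q.2 :=
      .of_norm_bounded hdouble fun q => (h q.1).norm_term_le hw q.2
    have hrows := hterms.hasSum.prod_fiberwise fun i => (h i).hasSum w hw
    rw [hrows.tsum_eq]
    exact ((Equiv.prodComm ℝ ι).hasSum_iff.2 hterms.hasSum).prod_fiberwise fun γ =>
      ((hcol γ).of_norm.hasSum).const_smul (Complex.exp ((γ : ℂ) * w))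

variable {R : Type*} [NormedRing R] [NormedAlgebra ℂ R] [CompleteSpace R]
  {a : ℝ → R} {f : ℂ → R}

theorem exists_pow (h : HasHahnExpansion Γ r a f) (n : ℕ) :
    ∃ b, HasHahnExpansion Γ r b (fun w => f w ^ n) ∧
      hahnNorm r b ≤ ‖(1 : R)‖ * hahnNorm r a ^ n := by
  induction n with
  | zero => exact ⟨_, by simpa using const h.isPWO h.radius_pos (1 : R), by simp [hahnNorm_single]⟩
  | succ n ih =>
    obtain ⟨b, hb, hbn⟩ := ih
    have ha : 0 ≤ hahnNorm r a := hahnNorm_nonneg h.radius_pos.le a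
    have hb₀ : 0 ≤ hahnNorm r b := hahnNorm_nonneg h.radius_pos.le b
    refine ⟨_, by simpa [pow_succ] using hb.bilinear h (ContinuousLinearMap.mul ℂ R), ?_⟩
    calc hahnNorm r (hahnConv (ContinuousLinearMap.mul ℂ R) b a)
        ≤ ‖ContinuousLinearMap.mul ℂ R‖ * (hahnNorm r b * hahnNorm r a) :=
          hb.hahnNorm_hahnConv_le h _
      _ ≤ 1 * (‖(1 : R)‖ * hahnNorm r a ^ n * hahnNorm r a) := by
          gcongr
          exact ContinuousLinearMap.opNorm_mul_le ℂ R
      _ = ‖(1 : R)‖ * hahnNorm r a ^ (n + 1) := by ring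

theorem exists_inverse_one_sub (h : HasHahnExpansion Γ r a f) (ha : hahnNorm r a < 1) :
    ∃ b, HasHahnExpansion Γ r b (fun w => Ring.inverse (1 - f w)) := by
  choose b hb hbn using h.exists_pow
  have hnonneg (c : ℝ → R) : 0 ≤ hahnNorm r c := hahnNorm_nonneg h.radius_pos.le c
  have hs : Summable fun n => hahnNorm r (b n) := .of_nonneg_of_le (fun n => hnonneg _) hbn
    ((summable_geometric_of_lt_one (hnonneg a) ha).mul_left _)
  exact ⟨_, (tsum hb hs).congr fun w hw =>
    geom_series_eq_inverse _ ((h.norm_le_hahnNorm hw).trans_lt ha)⟩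

theorem exists_ringInverse (h : HasHahnExpansion Γ r a f) (ha : IsUnit (a 0)) :
    ∃ r' ∈ Set.Ioc 0 r, (∀ w : ℂ, w.re < Real.log r' → IsUnit (f w)) ∧
      ∃ b, HasHahnExpansion Γ r' b (fun w => Ring.inverse (f w)) := by
  obtain ⟨u, hu⟩ := ha
  have hk : HasHahnExpansion Γ r _ (fun w => 1 - ↑u⁻¹ * f w) :=
    ((const h.isPWO h.radius_pos (1 : R)).add
      (h.map (-ContinuousLinearMap.mul ℂ R ↑u⁻¹))).congr fun w _ => by simp [sub_eq_add_neg]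
  obtain ⟨r', hr', hlt⟩ := hk.exists_hahnNorm_lt (c := 1) (by simp [← hu])
  have hfactor (w : ℂ) : f w = u * (1 - (1 - ↑u⁻¹ * f w)) := by simp
  obtain ⟨b, hb⟩ := (hk.restrict hr').exists_inverse_one_sub hlt
  refine ⟨r', hr', fun w hw => ?_, _,
    (hb.map ((ContinuousLinearMap.mul ℂ R).flip ↑u⁻¹)).congr fun w _ => ?_⟩
  · rw [hfactor w]
    exact u.isUnit.mul (isUnit_one_sub_of_norm_lt_one
      (((hk.restrict hr').norm_le_hahnNorm hw).trans_lt hlt))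
  · rw [hfactor w, Ring.inverse_mul (Or.inl u.isUnit), Ring.inverse_unit, ← hfactor w]
    simp

end HasHahnExpansion

end Inverse

section MeromorphicInverse

/-- `T w` is invertible for `Re w < log r` and its inverse is `e^{-μw} ∑ b_γ e^{γw}` there, where
`μ ∈ Γ` and the series has exponents in a well-ordered monoid `Γ'` between `Γ` and the group
generated by `Γ`. -/
structure HasHahnMeromorphicInverse {R : Type*} [NormedRing R] [NormedAlgebra ℂ R]
    (Γ Γ' : AddSubmonoid ℝ) (r μ : ℝ) (b : ℝ → R) (T : ℂ → R) : Prop where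
  isUnit : ∀ w : ℂ, w.re < Real.log r → IsUnit (T w)
  order_mem : μ ∈ Γ
  le : Γ ≤ Γ'
  le_closure : Γ' ≤ (AddSubgroup.closure (Γ : Set ℝ)).toAddSubmonoid
  hasHahnExpansion :
    HasHahnExpansion Γ' r b fun w => Complex.exp ((μ : ℂ) * w) • Ring.inverse (T w)

variable {Γ : AddSubmonoid ℝ} {r : ℝ}

theorem HasHahnExpansion.exists_scalar_meromorphicInverse {a : ℝ → ℂ} {f : ℂ → ℂ}
    (h : HasHahnExpansion Γ r a f) :
    ∃ r' ∈ Set.Ioc 0 r, (∀ w : ℂ, w.re < Real.log r' → ¬ IsUnit (f w)) ∨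
      ∃ Γ' μ b, HasHahnMeromorphicInverse Γ Γ' r' μ b f := by
  by_cases ha : a = 0
  · refine ⟨r, ⟨h.radius_pos, le_rfl⟩, Or.inl fun w hw => ?_⟩
    have hzero : f w = 0 := by simpa [ha] using (h.hasSum w hw).tsum_eq.symm
    simp [hzero]
  have hpwo : (Function.support a).IsPWO := h.isPWO.mono fun γ hγ => h.mem_of_ne_zero hγ
  have hne : (Function.support a).Nonempty := Function.support_nonempty_iff.2 ha
  set μ := hpwo.isWF.min hne
  have haμ : a μ ≠ 0 := hpwo.isWF.min_mem hne
  have hμ : μ ∈ Γ := h.mem_of_ne_zero haμ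
  obtain ⟨Γ', hΓ', hle, hle_closure, hsub⟩ := exists_isPWO_addSubmonoid_sub_mem h.isPWO hμ
  have hshift := h.exp_smul (μ := -μ) hΓ' fun γ hγ => by
    simpa [sub_eq_add_neg] using hsub γ (h.mem_of_ne_zero hγ) (hpwo.isWF.min_le hne hγ)
  obtain ⟨r', hr', hunit, b, hb⟩ := hshift.exists_ringInverse (by simpa using haμ)
  refine ⟨r', hr', Or.inr ⟨Γ', μ, b, fun w hw => ?_, hμ, hle, hle_closure,
    hb.congr fun w _ => ?_⟩⟩
  · simpa using hunit w hw
  · simp [mul_comm, Complex.exp_neg]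

end MeromorphicInverse

section Determinant

theorem map_ringInverse {F M N : Type*} [MonoidWithZero M] [MonoidWithZero N] [FunLike F M N]
    [MonoidHomClass F M N] (φ : F) {x : M} (hx : IsUnit x) :
    φ (Ring.inverse x) = Ring.inverse (φ x) := by
  obtain ⟨u, rfl⟩ := hx
  rw [Ring.inverse_unit]
  exact (Ring.inverse_unit (Units.map (φ : M →* N) u)).symm

variable {ι n K : Type*} [CommRing K] [Fintype n] [DecidableEq n] {S : Subring (ι → K)}
  {M : ι → Matrix n n K}

theorem det_mem_of_entries_mem (hM : ∀ i j, (fun w => M w i j) ∈ S) :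
    (fun w => (M w).det) ∈ S := by
  let M' : Matrix n n S := .of fun i j => ⟨fun w => M w i j, hM i j⟩
  convert M'.det.2 with w
  exact (((Pi.evalRingHom (fun _ => K) w).comp S.subtype).map_det M').symm

theorem adjugate_mem_of_entries_mem (hM : ∀ i j, (fun w => M w i j) ∈ S) (i j : n) :
    (fun w => (M w).adjugate i j) ∈ S := by
  let M' : Matrix n n S := .of fun i j => ⟨fun w => M w i j, hM i j⟩
  convert (M'.adjugate i j).2 with w
  exact congr_fun₂ (((Pi.evalRingHom (fun _ => K) w).comp S.subtype).map_adjugate M').symm i j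

/-- The scalar functions with a generalized power series expansion for `Re w < log r` and exponents
in `Γ`, so that the determinant and the adjugate can be expanded along with matrix entries. -/
def hahnSubring {Γ : AddSubmonoid ℝ} {r : ℝ} (hΓ : (Γ : Set ℝ).IsPWO) (hr : 0 < r) :
    Subring (ℂ → ℂ) where
  carrier := {f | ∃ a, HasHahnExpansion Γ r a f}
  zero_mem' := ⟨_, .const hΓ hr 0⟩
  one_mem' := ⟨_, .const hΓ hr 1⟩
  add_mem' := fun ⟨_, ha⟩ ⟨_, hb⟩ => ⟨_, ha.add hb⟩
  neg_mem' := fun ⟨_, ha⟩ => ⟨_, ha.map (-ContinuousLinearMap.id ℂ ℂ)⟩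
  mul_mem' := fun ⟨_, ha⟩ ⟨_, hb⟩ => ⟨_, ha.bilinear hb (ContinuousLinearMap.mul ℂ ℂ)⟩

end Determinant

section FiniteDimensional

variable {Γ : AddSubmonoid ℝ} {r : ℝ}

theorem exists_hasHahnExpansion_of_coord {ι X : Type*} [Finite ι] [NormedAddCommGroup X]
    [NormedSpace ℂ X] (hΓ : (Γ : Set ℝ).IsPWO) (hr : 0 < r) (v : Module.Basis ι ℂ X) {f : ℂ → X}
    (hf : ∀ i, ∃ a, HasHahnExpansion Γ r a fun w => v.repr (f w) i) :
    ∃ a, HasHahnExpansion Γ r a f := by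
  have := Fintype.ofFinite ι
  choose a ha using hf
  refine ⟨_, (HasHahnExpansion.sum hΓ hr Finset.univ fun i _ =>
    (ha i).map (ContinuousLinearMap.toSpanSingleton ℂ (v i))).congr fun w _ => ?_⟩
  simp [v.sum_repr]

theorem HasHahnExpansion.exists_matrix_meromorphicInverse {n R : Type*} [Fintype n]
    [DecidableEq n] [NormedRing R] [NormedAlgebra ℂ R] [FiniteDimensional ℂ R]
    (Φ : R ≃ₐ[ℂ] Matrix n n ℂ) {a : ℝ → R} {T : ℂ → R} (h : HasHahnExpansion Γ r a T) :
    ∃ r' ∈ Set.Ioc 0 r, (∀ w : ℂ, w.re < Real.log r' → ¬ IsUnit (T w)) ∨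
      ∃ Γ' μ b, HasHahnMeromorphicInverse Γ Γ' r' μ b T := by
  have hentry (i j : n) : (fun w => Φ (T w) i j) ∈ hahnSubring h.isPWO h.radius_pos :=
    ⟨_, h.map (LinearMap.toContinuousLinearMap
      ((Matrix.entryLinearMap ℂ ℂ i j).comp Φ.toLinearMap))⟩
  have hunit (w : ℂ) : IsUnit (T w) ↔ IsUnit (Φ (T w)).det := by
    rw [← Matrix.isUnit_iff_isUnit_det, isUnit_map_iff]
  obtain ⟨d, hd⟩ := det_mem_of_entries_mem hentry
  obtain ⟨r', hr', hzero | ⟨Γ', μ, b, hb⟩⟩ := hd.exists_scalar_meromorphicInverse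
  · exact ⟨r', hr', Or.inl fun w hw => (hunit w).not.2 (hzero w hw)⟩
  have hΓ' := hb.hasHahnExpansion.isPWO
  obtain ⟨c, hc⟩ := exists_hasHahnExpansion_of_coord hΓ' hr'.1
    ((Matrix.stdBasis ℂ n n).map Φ.symm.toLinearEquiv)
    (f := fun w => Complex.exp ((μ : ℂ) * w) • Ring.inverse (T w)) fun ij => by
      obtain ⟨e, he⟩ := adjugate_mem_of_entries_mem hentry ij.1 ij.2
      refine ⟨_, (hb.hasHahnExpansion.bilinear (he.mono hΓ' hb.le hr')
        (ContinuousLinearMap.mul ℂ ℂ)).congr fun w hw => ?_⟩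
      have hinv : Φ (Ring.inverse (T w)) = (Φ (T w))⁻¹ := by
        rw [map_ringInverse Φ ((hunit w).2 (hb.isUnit w hw)), Matrix.nonsing_inv_eq_ringInverse]
      simp [hinv, Matrix.inv_def, mul_assoc, Matrix.stdBasis]
  exact ⟨r', hr', Or.inr ⟨Γ', μ, c, fun w hw => (hunit w).2 (hb.isUnit w hw),
    hb.order_mem, hb.le, hb.le_closure, hc⟩⟩

end FiniteDimensional

section Woodbury

variable {𝕜 M N : Type*} [Ring 𝕜] [AddCommGroup M] [Module 𝕜 M] [TopologicalSpace M]
  [IsTopologicalAddGroup M] [AddCommGroup N] [Module 𝕜 N] [TopologicalSpace N]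

theorem sub_comp_eq_mul_one_sub {G : M →L[𝕜] M} (U : M →L[𝕜] N) (V : N →L[𝕜] M)
    (hG : IsUnit G) :
    G - V ∘L U = G * (1 - (Ring.inverse G ∘L V) ∘L U) := by
  rw [mul_sub, mul_one, ContinuousLinearMap.comp_assoc]
  exact congrArg (G - ·) (Ring.mul_inverse_cancel_left G (V ∘L U) hG).symm

variable [IsTopologicalAddGroup N]

theorem isUnit_and_inverse_one_sub_comp (U : M →L[𝕜] N) (V : N →L[𝕜] M)
    (h : IsUnit (1 - U ∘L V)) :
    IsUnit (1 - V ∘L U) ∧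
      Ring.inverse (1 - V ∘L U) = 1 + V ∘L Ring.inverse (1 - U ∘L V) ∘L U := by
  set K := Ring.inverse (1 - U ∘L V)
  have hright : K - U ∘L V ∘L K = 1 := by
    simpa [sub_mul, ContinuousLinearMap.mul_def] using! Ring.mul_inverse_cancel _ h
  have hleft : K - K ∘L U ∘L V = 1 := by
    simpa [mul_sub, ContinuousLinearMap.mul_def] using! Ring.inverse_mul_cancel _ h
  have hmul : (1 - V ∘L U) * (1 + V ∘L K ∘L U) = 1 := by
    calc (1 - V ∘L U) * (1 + V ∘L K ∘L U)
        = 1 + V ∘L (K - U ∘L V ∘L K - 1) ∘L U := by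
          ext x
          simp only [mul_apply_eq_comp, add_apply, sub_apply, one_apply_eq_self,
            ContinuousLinearMap.comp_apply, map_add, map_sub]
          abel
      _ = 1 := by simp [hright]
  have hmul' : (1 + V ∘L K ∘L U) * (1 - V ∘L U) = 1 := by
    calc (1 + V ∘L K ∘L U) * (1 - V ∘L U)
        = 1 + V ∘L (K - K ∘L U ∘L V - 1) ∘L U := by
          ext x
          simp only [mul_apply_eq_comp, add_apply, sub_apply, one_apply_eq_self,
            ContinuousLinearMap.comp_apply, map_sub]
          abel
      _ = 1 := by simp [hleft]
  exact ⟨⟨⟨_, _, hmul, hmul'⟩, rfl⟩, Ring.inverse_unit ⟨_, _, hmul, hmul'⟩⟩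

theorem isUnit_one_sub_comp_comm (U : M →L[𝕜] N) (V : N →L[𝕜] M) :
    IsUnit (1 - V ∘L U) ↔ IsUnit (1 - U ∘L V) :=
  ⟨fun h => (isUnit_and_inverse_one_sub_comp V U h).1,
    fun h => (isUnit_and_inverse_one_sub_comp U V h).1⟩

variable {G : M →L[𝕜] M} (U : M →L[𝕜] N) (V : N →L[𝕜] M)

theorem isUnit_sub_comp_iff (hG : IsUnit G) :
    IsUnit (G - V ∘L U) ↔ IsUnit (1 - U ∘L Ring.inverse G ∘L V) := by
  rw [sub_comp_eq_mul_one_sub U V hG, hG.mul_left_iff, isUnit_one_sub_comp_comm]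

theorem inverse_sub_comp (hG : IsUnit G) (hN : IsUnit (1 - U ∘L Ring.inverse G ∘L V)) :
    Ring.inverse (G - V ∘L U) = Ring.inverse G + (Ring.inverse G ∘L V) ∘L
      Ring.inverse (1 - U ∘L Ring.inverse G ∘L V) ∘L (U ∘L Ring.inverse G) := by
  rw [sub_comp_eq_mul_one_sub U V hG, Ring.inverse_mul (Or.inl hG),
    (isUnit_and_inverse_one_sub_comp U _ hN).2, add_mul, one_mul]
  rfl

end Woodbury

section FiniteRankPerturbation

/-- The operators with finite-dimensional range, as a submonoid, so that finite sums of them stay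
finite-rank. On a Hilbert space, membership unfolds to `FiniteRank`. -/
def finiteRankOperators (X : Type*) [NormedAddCommGroup X] [NormedSpace ℂ X] :
    AddSubmonoid (X →L[ℂ] X) where
  carrier := {T | FiniteDimensional ℂ (LinearMap.range T.toLinearMap)}
  zero_mem' := by
    change FiniteDimensional ℂ (LinearMap.range (0 : X →ₗ[ℂ] X))
    rw [LinearMap.range_zero]
    exact finiteDimensional_bot ℂ X
  add_mem' {S T} (_ : FiniteDimensional ℂ _) (_ : FiniteDimensional ℂ _) :=
    Submodule.finiteDimensional_of_le (LinearMap.range_add_le S.toLinearMap T.toLinearMap)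

variable {Γ : AddSubmonoid ℝ} {r : ℝ} {X E : Type*} [NormedAddCommGroup X] [NormedSpace ℂ X]
  [NormedAddCommGroup E] [NormedSpace ℂ E] [FiniteDimensional ℂ E]

theorem comp_mem_finiteRankOperators (V : E →L[ℂ] X) (U : X →L[ℂ] E) :
    V ∘L U ∈ finiteRankOperators X :=
  Submodule.finiteDimensional_of_le (LinearMap.range_comp_le_range U.toLinearMap V.toLinearMap)

variable [CompleteSpace X]

theorem HasHahnExpansion.exists_comp_mem_finiteRankOperators {a : ℝ → E →L[ℂ] X}
    {b : ℝ → E →L[ℂ] E} {c : ℝ → X →L[ℂ] E} {V : ℂ → E →L[ℂ] X} {K : ℂ → E →L[ℂ] E}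
    {U : ℂ → X →L[ℂ] E} (hV : HasHahnExpansion Γ r a V) (hK : HasHahnExpansion Γ r b K)
    (hU : HasHahnExpansion Γ r c U) :
    ∃ d, HasHahnExpansion Γ r d (fun w => V w ∘L K w ∘L U w) ∧
      ∀ γ, d γ ∈ finiteRankOperators X := by
  have hE : CompleteSpace E := FiniteDimensional.complete ℂ E
  have hKU := hK.bilinear hU (ContinuousLinearMap.compL ℂ X E E)
  exact ⟨_, hV.bilinear hKU (ContinuousLinearMap.compL ℂ X E X),
    fun γ => hV.hahnConv_mem hKU _ _ fun i => comp_mem_finiteRankOperators _ _⟩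

theorem HasHahnExpansion.exists_end_meromorphicInverse {a : ℝ → E →L[ℂ] E} {T : ℂ → E →L[ℂ] E}
    (h : HasHahnExpansion Γ r a T) :
    ∃ r' ∈ Set.Ioc 0 r, (∀ w : ℂ, w.re < Real.log r' → ¬ IsUnit (T w)) ∨
      ∃ Γ' μ b, HasHahnMeromorphicInverse Γ Γ' r' μ b T :=
  h.exists_matrix_meromorphicInverse ((Module.End.toContinuousLinearMap E).symm.trans
    (LinearMap.toMatrixAlgEquiv (Module.finBasis ℂ E)))

theorem HasHahnExpansion.exists_meromorphicInverse_of_isUnit_add_comp {a : ℝ → X →L[ℂ] X}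
    {T : ℂ → X →L[ℂ] X} (h : HasHahnExpansion Γ r a T) (U : X →L[ℂ] E) (V : E →L[ℂ] X)
    (hUV : IsUnit (a 0 + V ∘L U)) :
    ∃ r' ∈ Set.Ioc 0 r, (∀ w : ℂ, w.re < Real.log r' → ¬ IsUnit (T w)) ∨
      ∃ Γ' μ b, HasHahnMeromorphicInverse Γ Γ' r' μ b T ∧
        ∀ γ < μ, b γ ∈ finiteRankOperators X := by
  -- `G = T + VU` is invertible near `0`, and by Woodbury's formula `T⁻¹ - G⁻¹` factors through `E`:
  -- only this finite-rank summand contributes negative powers.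
  obtain ⟨r₁, hr₁, hG, c, hc⟩ := (h.add (const h.isPWO h.radius_pos (V ∘L U))).exists_ringInverse
    (by simpa using hUV)
  set G := T + fun _ => V ∘L U
  have hT (w : ℂ) : T w = G w - V ∘L U := by simp [G]
  have hN : HasHahnExpansion Γ r₁ _ (fun w => 1 - U ∘L Ring.inverse (G w) ∘L V) :=
    ((const hc.isPWO hc.radius_pos 1).add (hc.map (-((ContinuousLinearMap.compL ℂ E X E U).comp
      ((ContinuousLinearMap.compL ℂ E X X).flip V))))).congr fun w _ => by
        simp [sub_eq_add_neg]
  obtain ⟨r₂, hr₂, hsing | ⟨Γ', μ, d, hd⟩⟩ := hN.exists_end_meromorphicInverse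
  · refine ⟨r₂, ⟨hr₂.1, hr₂.2.trans hr₁.2⟩, Or.inl fun w hw => ?_⟩
    rw [hT w, isUnit_sub_comp_iff U V (hG w (hw.trans_le (Real.log_le_log hr₂.1 hr₂.2)))]
    exact hsing w hw
  have hGw (w : ℂ) (hw : w.re < Real.log r₂) : IsUnit (G w) :=
    hG w (hw.trans_le (Real.log_le_log hr₂.1 hr₂.2))
  have hΓ' := hd.hasHahnExpansion.isPWO
  have hc' := hc.mono hΓ' hd.le hr₂
  obtain ⟨e, he, hfin⟩ := exists_comp_mem_finiteRankOperators
    (hc'.map ((ContinuousLinearMap.compL ℂ E X X).flip V)) hd.hasHahnExpansion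
    (hc'.map (ContinuousLinearMap.compL ℂ X X E U))
  have hreg := hc'.exp_smul (μ := μ) hΓ' fun γ hγ =>
    Γ'.add_mem (hc'.mem_of_ne_zero hγ) (hd.le hd.order_mem)
  refine ⟨r₂, ⟨hr₂.1, hr₂.2.trans hr₁.2⟩, Or.inr ⟨Γ', μ, _, ⟨fun w hw => ?_, hd.order_mem, hd.le,
    hd.le_closure, (hreg.add he).congr fun w hw => ?_⟩, fun γ hγ => ?_⟩⟩
  · rw [hT w, isUnit_sub_comp_iff U V (hGw w hw)]
    exact hd.isUnit w hw
  · rw [hT w, inverse_sub_comp U V (hGw w hw) (hd.isUnit w hw)]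
    simp
  · have hzero : c (γ - μ) = 0 := by
      by_contra hne
      exact (sub_nonneg.1 (hc'.nonneg_of_ne_zero hne)).not_gt hγ
    simpa [hzero] using hfin γ

end FiniteRankPerturbation

section CompactPerturbation

variable {H : Type*} [NormedAddCommGroup H] [InnerProductSpace ℂ H]

theorem exists_norm_sub_starProjection_comp_lt {A : H →L[ℂ] H} (hA : IsCompactOperator A)
    {ε : ℝ} (hε : 0 < ε) :
    ∃ (V : Submodule ℂ H) (_ : FiniteDimensional ℂ V), ‖A - V.starProjection ∘L A‖ < ε := by
  have hbdd : TotallyBounded (A '' Metric.closedBall 0 1) :=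
    (hA.isCompact_closure_image_closedBall (f := A.toLinearMap) 1).totallyBounded.subset
      subset_closure
  obtain ⟨t, ht, hcover⟩ := Metric.totallyBounded_iff.1 hbdd (ε / 2) (half_pos hε)
  have hfin : FiniteDimensional ℂ (Submodule.span ℂ t) := FiniteDimensional.span_of_finite ℂ ht
  refine ⟨Submodule.span ℂ t, hfin, (ContinuousLinearMap.opNorm_le_of_unit_norm (half_pos hε).le
    fun x hx => ?_).trans_lt (half_lt_self hε)⟩
  obtain ⟨y, hyt, hy⟩ := Set.mem_iUnion₂.1 (hcover ⟨x, by simp [hx], rfl⟩)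
  rw [sub_apply, ContinuousLinearMap.comp_apply, Submodule.starProjection_minimal]
  refine (ciInf_le ⟨0, ?_⟩ (⟨y, Submodule.subset_span hyt⟩ : Submodule.span ℂ t)).trans ?_
  · rintro _ ⟨z, rfl⟩
    exact norm_nonneg _
  · rw [← dist_eq_norm]
    exact (Metric.mem_ball.1 hy).le

variable [CompleteSpace H] {Γ : AddSubmonoid ℝ} {r : ℝ}

theorem HasHahnExpansion.exists_meromorphicInverse_one_sub {a : ℝ → H →L[ℂ] H}
    {f : ℂ → H →L[ℂ] H} (h : HasHahnExpansion Γ r a f) (ha : IsCompactOperator (a 0)) :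
    ∃ r' ∈ Set.Ioc 0 r, (∀ w : ℂ, w.re < Real.log r' → ¬ IsUnit (1 - f w)) ∨
      ∃ Γ' μ b, HasHahnMeromorphicInverse Γ Γ' r' μ b (fun w => 1 - f w) ∧
        ∀ γ < μ, FiniteRank (b γ) := by
  obtain ⟨V, _, hV⟩ := exists_norm_sub_starProjection_comp_lt ha one_pos
  have hsub : HasHahnExpansion Γ r _ (fun w => 1 - f w) :=
    ((const h.isPWO h.radius_pos 1).add (h.map (-ContinuousLinearMap.id ℂ (H →L[ℂ] H)))).congr
      fun w _ => by simp [sub_eq_add_neg]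
  refine hsub.exists_meromorphicInverse_of_isUnit_add_comp (V.orthogonalProjectionOnto ∘L a 0)
    V.subtypeL ?_
  convert isUnit_one_sub_of_norm_lt_one hV using 1
  ext x
  simp [← sub_eq_add_neg, sub_add]

end CompactPerturbation

section NaturalExponents

/-- The exponents of ordinary power series: the natural numbers as a submonoid of `ℝ`. -/
def natExponents : AddSubmonoid ℝ :=
  AddMonoidHom.mrange (Nat.castAddMonoidHom ℝ)

theorem isPWO_natExponents : (natExponents : Set ℝ).IsPWO := by
  have hrange : (natExponents : Set ℝ) = (Nat.cast : ℕ → ℝ) '' Set.univ :=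
    Set.image_univ.symm
  rw [hrange]
  exact (Set.IsPWO.of_linearOrder _).image_of_monotone Nat.mono_cast

theorem exists_natCast_eq_of_mem_closure_natExponents {x : ℝ}
    (hx : x ∈ AddSubgroup.closure (natExponents : Set ℝ)) (hx0 : 0 ≤ x) :
    ∃ n : ℕ, (n : ℝ) = x := by
  have hle : AddSubgroup.closure (natExponents : Set ℝ) ≤ (Int.castAddHom ℝ).range := by
    rw [AddSubgroup.closure_le]
    rintro _ ⟨n, rfl⟩
    exact ⟨n, by simp⟩
  obtain ⟨m, rfl⟩ := hle hx
  lift m to ℕ using by simpa using hx0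
  exact ⟨m, by simp⟩

variable {X : Type*} [NormedAddCommGroup X] [NormedSpace ℂ X]

theorem exists_hasHahnExpansion_comp_exp {f : ℂ → X} {w₀ : ℂ} (hf : AnalyticAt ℂ f w₀) :
    ∃ r a, HasHahnExpansion natExponents r a (fun s => f (w₀ + Complex.exp s)) ∧
      a 0 = f w₀ := by
  obtain ⟨p, R, hp⟩ := hf
  obtain ⟨r, hr, hrR⟩ := ENNReal.lt_iff_exists_nnreal_btwn.1 hp.r_pos
  have hr0 : 0 < (r : ℝ) := by simpa using hr
  let a : ℝ → X := Function.extend (Nat.cast : ℕ → ℝ) p.coeff 0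
  have hcast := Nat.cast_injective (R := ℝ)
  have ha (n : ℕ) : a n = p.coeff n := hcast.extend_apply _ _ n
  have ha0 : ∀ γ ∉ Set.range (Nat.cast : ℕ → ℝ), a γ = 0 := fun γ hγ =>
    Function.extend_apply' _ _ γ hγ
  refine ⟨r, a, ⟨isPWO_natExponents, hr0, ha0, ?_, fun s hs => ?_⟩, ?_⟩
  · refine (hcast.summable_iff fun γ hγ => by simp [ha0 γ hγ]).1
      ((p.summable_norm_mul_pow (hrR.trans_le hp.r_le)).congr fun n => ?_)
    simp [ha, FormalMultilinearSeries.norm_apply_eq_norm_coef]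
  · have hexp : Complex.exp s ∈ Metric.eball (0 : ℂ) R := by
      have hnorm : ‖Complex.exp s‖ < r := by
        rw [Complex.norm_exp]
        exact (Real.lt_log_iff_exp_lt hr0).1 hs
      rw [mem_eball_zero_iff]
      exact (ENNReal.coe_lt_coe.2 hnorm).trans hrR
    refine (hcast.hasSum_iff fun γ hγ => by simp [ha0 γ hγ]).1 ?_
    convert hp.hasSum hexp using 2 with n
    simp [ha, Complex.exp_nat_mul]
  · rw [← Nat.cast_zero, ha]
    exact hp.coeff_zero _

theorem HasHahnExpansion.hasSum_pow {Γ : AddSubmonoid ℝ} {r : ℝ} {a : ℝ → X} {f : ℂ → X}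
    (h : HasHahnExpansion Γ r a f) (hΓ : ∀ γ ∈ Γ, ∃ n : ℕ, (n : ℝ) = γ) {s : ℂ}
    (hs : s.re < Real.log r) : HasSum (fun n : ℕ => Complex.exp s ^ n • a n) (f s) := by
  have hsupp : ∀ γ ∉ Set.range (Nat.cast : ℕ → ℝ), Complex.exp ((γ : ℂ) * s) • a γ = 0 :=
    fun γ hγ => by rw [h.eq_zero_of_notMem γ fun hmem => hγ (hΓ γ hmem), smul_zero]
  convert ((Nat.cast_injective (R := ℝ)).hasSum_iff hsupp).2 (h.hasSum s hs) using 2 with n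
  simp [Complex.exp_nat_mul]

end NaturalExponents

section LaurentExpansion

theorem eq_sum_zpow_smul_add_tsum_pow_smul {𝕜 X : Type*} [NormedField 𝕜]
    [NormedAddCommGroup X] [NormedSpace 𝕜 X] {z : 𝕜} (hz : z ≠ 0) {c : ℤ → X} {x : X} {m : ℕ}
    (h : HasSum (fun n : ℕ => z ^ n • c (n - m)) (z ^ m • x)) :
    x = ∑ j ∈ Finset.range m, z ^ (-(j : ℤ) - 1) • c (-(j : ℤ) - 1) + ∑' k : ℕ, z ^ k • c k := by
  have hlaurent : HasSum (fun n : ℕ => z ^ ((n : ℤ) - m) • c (n - m)) x := by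
    convert h.const_smul (z ^ m)⁻¹ using 2 with n
    · rw [smul_smul, zpow_sub₀ hz, zpow_natCast, zpow_natCast, div_eq_inv_mul]
    · rw [inv_smul_smul₀ (pow_ne_zero m hz)]
  rw [← hlaurent.tsum_eq, ← hlaurent.summable.sum_add_tsum_nat_add m, ← Finset.sum_range_reflect]
  congr 1
  · refine Finset.sum_congr rfl fun j hj => ?_
    have hcast : ((m - 1 - j : ℕ) : ℤ) - m = -(j : ℤ) - 1 := by
      have := Finset.mem_range.1 hj
      omega
    rw [hcast]
  · simp

theorem differentiableOn_tsum_pow_smul {X : Type*} [NormedAddCommGroup X] [NormedSpace ℂ X]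
    [CompleteSpace X] {c : ℕ → X} {ε : ℝ} (hc : Summable fun k => ‖c k‖ * ε ^ k) (w₀ : ℂ) :
    DifferentiableOn ℂ (fun w => ∑' k : ℕ, (w - w₀) ^ k • c k) (Metric.ball w₀ ε) := by
  refine Complex.differentiableOn_tsum_of_summable_norm hc (fun k => by fun_prop)
    Metric.isOpen_ball fun k w hw => ?_
  rw [norm_smul, norm_pow, mul_comm]
  gcongr
  exact (mem_ball_iff_norm.1 hw).le

theorem exists_add_exp_eq_of_mem_ball {w₀ w : ℂ} {ε : ℝ} (hw : w ∈ Metric.ball w₀ ε)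
    (hne : w ≠ w₀) : ∃ s : ℂ, s.re < Real.log ε ∧ w₀ + Complex.exp s = w := by
  have hne' : w - w₀ ≠ 0 := sub_ne_zero.2 hne
  refine ⟨Complex.log (w - w₀), ?_, by rw [Complex.exp_log hne', add_sub_cancel]⟩
  rw [Complex.log_re]
  exact Real.log_lt_log (norm_pos_iff.2 hne') (mem_ball_iff_norm.1 hw)

variable {H : Type*} [NormedAddCommGroup H] [InnerProductSpace ℂ H]

/-- On the punctured ball of radius `ε` around `w₀`, the function `h` is the sum of a principal part
with finitely many terms, all of whose coefficients have finite rank, and a function `g` that is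
holomorphic on the whole ball. The coefficient of `(w - w₀) ^ (-(j + 1))` is `P j`. -/
def HasFiniteRankPrincipalPart (h : ℂ → H →L[ℂ] H) (w₀ : ℂ) (ε : ℝ) : Prop :=
  ∃ (n : ℕ) (P : ℕ → H →L[ℂ] H) (g : ℂ → H →L[ℂ] H),
    DifferentiableOn ℂ g (Metric.ball w₀ ε) ∧ (∀ j, FiniteRank (P j)) ∧
      ∀ w ∈ Metric.ball w₀ ε, w ≠ w₀ →
        h w = (∑ j ∈ Finset.range n, ((w - w₀) ^ (-(j : ℤ) - 1)) • P j) + g w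

variable [CompleteSpace H]

theorem HasHahnMeromorphicInverse.hasFiniteRankPrincipalPart {Γ' : AddSubmonoid ℝ} {ε μ : ℝ}
    {b : ℝ → H →L[ℂ] H} {T : ℂ → H →L[ℂ] H} {w₀ : ℂ}
    (h : HasHahnMeromorphicInverse natExponents Γ' ε μ b fun s => T (w₀ + Complex.exp s))
    (hb : ∀ γ < μ, FiniteRank (b γ)) :
    HasFiniteRankPrincipalPart (fun w => Ring.inverse (T w)) w₀ ε := by
  obtain ⟨m, rfl⟩ : ∃ m : ℕ, (m : ℝ) = μ := h.order_mem
  have hε := h.hasHahnExpansion.radius_pos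
  have hΓ' : ∀ γ ∈ Γ', ∃ n : ℕ, (n : ℝ) = γ := fun γ hγ =>
    exists_natCast_eq_of_mem_closure_natExponents (h.le_closure hγ)
      (nonneg_of_mem_of_isPWO h.hasHahnExpansion.isPWO hγ)
  let c (k : ℤ) : H →L[ℂ] H := b (k + m)
  have hsum : Summable fun k : ℕ => ‖c k‖ * ε ^ k := by
    have hshift := (h.hasHahnExpansion.summable.comp_injective
      ((add_left_injective (m : ℝ)).comp Nat.cast_injective)).mul_right (ε ^ m)⁻¹
    refine hshift.congr fun k => ?_
    simp [c, Real.rpow_add hε, hε.ne', mul_assoc]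
  refine ⟨m, fun j => c (-(j : ℤ) - 1), fun w => ∑' k : ℕ, (w - w₀) ^ k • c k,
    differentiableOn_tsum_pow_smul hsum w₀, fun j => hb _ ?_, fun w hw hne => ?_⟩
  · push_cast
    linarith [j.cast_nonneg (α := ℝ)]
  · obtain ⟨s, hs, rfl⟩ := exists_add_exp_eq_of_mem_ball hw hne
    simp only [add_sub_cancel_left]
    refine eq_sum_zpow_smul_add_tsum_pow_smul (c := c) (Complex.exp_ne_zero s) ?_
    convert h.hasHahnExpansion.hasSum_pow hΓ' hs using 2 with n
    · simp [c]
    · simp [Complex.exp_nat_mul]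

end LaurentExpansion

section AnalyticFredholm

theorem isOpen_setOf_eventually_nhdsNE {X : Type*} [TopologicalSpace X] [T1Space X]
    (p : X → Prop) : IsOpen {x | ∀ᶠ y in 𝓝[≠] x, p y} := by
  refine isOpen_iff_eventually.2 fun x hx => ?_
  have hnear := eventually_nhdsWithin_iff.1 (eventually_nhdsNE_eventually_nhds_iff.2 hx)
  filter_upwards [hnear] with y hy
  rcases eq_or_ne y x with rfl | hne
  · exact hx
  · exact (hy hne).filter_mono nhdsWithin_le_nhds

theorem forall_eventually_nhdsNE_or_of_isPreconnected {X : Type*} [TopologicalSpace X] [T1Space X]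
    [∀ x : X, (𝓝[≠] x).NeBot] {U : Set X} (hU : IsPreconnected U) {p : X → Prop}
    (h : ∀ x ∈ U, (∀ᶠ y in 𝓝[≠] x, p y) ∨ ∀ᶠ y in 𝓝[≠] x, ¬ p y) :
    (∀ x ∈ U, ∀ᶠ y in 𝓝[≠] x, p y) ∨ ∀ x ∈ U, ∀ᶠ y in 𝓝[≠] x, ¬ p y := by
  have hdisj : Disjoint {x | ∀ᶠ y in 𝓝[≠] x, p y} {x | ∀ᶠ y in 𝓝[≠] x, ¬ p y} := by
    refine Set.disjoint_left.2 fun x hp hnp => ?_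
    obtain ⟨y, hy, hny⟩ := ((Set.mem_ofPred.1 hp).and (Set.mem_ofPred.1 hnp)).exists
    exact hny hy
  exact hU.subset_or_subset (isOpen_setOf_eventually_nhdsNE p)
    (isOpen_setOf_eventually_nhdsNE fun y => ¬ p y) hdisj h

theorem eventually_nhdsNE_of_forall_mem_ball {X : Type*} [PseudoMetricSpace X] {x : X} {ε : ℝ}
    (hε : 0 < ε) {p : X → Prop} (h : ∀ y ∈ Metric.ball x ε, y ≠ x → p y) :
    ∀ᶠ y in 𝓝[≠] x, p y :=
  eventually_nhdsWithin_iff.2 <| eventually_of_mem (Metric.ball_mem_nhds x hε) h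

variable {H : Type*} [NormedAddCommGroup H] [InnerProductSpace ℂ H] [CompleteSpace H]
  {f : ℂ → H →L[ℂ] H}

theorem exists_ball_not_isUnit_or_hasFiniteRankPrincipalPart {w₀ : ℂ} (hf : AnalyticAt ℂ f w₀)
    (hc : IsCompactOperator (f w₀)) :
    ∃ ε > 0, (∀ w ∈ Metric.ball w₀ ε, w ≠ w₀ → ¬ IsUnit (1 - f w)) ∨
      (∀ w ∈ Metric.ball w₀ ε, w ≠ w₀ → IsUnit (1 - f w)) ∧
        HasFiniteRankPrincipalPart (fun w => Ring.inverse (1 - f w)) w₀ ε := by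
  obtain ⟨r, a, h, ha⟩ := exists_hasHahnExpansion_comp_exp hf
  obtain ⟨ε, hε, hsing | ⟨Γ', μ, b, hinv, hb⟩⟩ :=
    h.exists_meromorphicInverse_one_sub (ha ▸ hc)
  · refine ⟨ε, hε.1, Or.inl fun w hw hne => ?_⟩
    obtain ⟨s, hs, rfl⟩ := exists_add_exp_eq_of_mem_ball hw hne
    exact hsing s hs
  · refine ⟨ε, hε.1, Or.inr ⟨fun w hw hne => ?_,
      hinv.hasFiniteRankPrincipalPart (T := fun w => 1 - f w) hb⟩⟩
    obtain ⟨s, hs, rfl⟩ := exists_add_exp_eq_of_mem_ball hw hne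
    exact hinv.isUnit s hs

theorem analytic_fredholm {U : Set ℂ} (hUo : IsOpen U) (hUc : IsPreconnected U)
    (hf : DifferentiableOn ℂ f U) (hc : ∀ w ∈ U, IsCompactOperator (f w)) :
    (∀ w ∈ U, ¬ IsUnit (1 - f w)) ∨
      ∀ w₀ ∈ U, ∃ ε > 0, (∀ w ∈ Metric.ball w₀ ε, w ≠ w₀ → IsUnit (1 - f w)) ∧
        HasFiniteRankPrincipalPart (fun w => Ring.inverse (1 - f w)) w₀ ε := by
  have hlocal : ∀ w₀ ∈ U, _ := fun w₀ hw₀ => exists_ball_not_isUnit_or_hasFiniteRankPrincipalPart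
    (hf.analyticAt (hUo.mem_nhds hw₀)) (hc w₀ hw₀)
  have halt : ∀ w₀ ∈ U, (∀ᶠ w in 𝓝[≠] w₀, IsUnit (1 - f w)) ∨
      ∀ᶠ w in 𝓝[≠] w₀, ¬ IsUnit (1 - f w) := by
    intro w₀ hw₀
    obtain ⟨ε, hε, hsing | ⟨hunit, -⟩⟩ := hlocal w₀ hw₀
    · exact Or.inr (eventually_nhdsNE_of_forall_mem_ball hε hsing)
    · exact Or.inl (eventually_nhdsNE_of_forall_mem_ball hε hunit)
  rcases forall_eventually_nhdsNE_or_of_isPreconnected hUc halt with hunit | hsing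
  · refine Or.inr fun w₀ hw₀ => ?_
    obtain ⟨ε, hε, hsing | hmero⟩ := hlocal w₀ hw₀
    · obtain ⟨w, hw, hw'⟩ :=
        ((hunit w₀ hw₀).and (eventually_nhdsNE_of_forall_mem_ball hε hsing)).exists
      exact absurd hw hw'
    · exact ⟨ε, hε, hmero⟩
  · refine Or.inl fun w hw hu => ?_
    have hcont : ContinuousAt (fun y => 1 - f y) w :=
      continuousAt_const.sub (hf.continuousOn.continuousAt (hUo.mem_nhds hw))
    have hopen := (hcont.eventually (Units.isOpen.mem_nhds hu)).filter_mono
      (nhdsWithin_le_nhds (s := {w}ᶜ))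
    obtain ⟨y, hy, hy'⟩ := ((hsing w hw).and hopen).exists
    exact hy hy'

end AnalyticFredholm

section Omega

variable {δ δ' : ℝ} {σ : ENNReal}

theorem isOpen_Omega : IsOpen (Omega δ σ) := by
  have him : Continuous fun w : ℂ => ENNReal.ofReal |w.im| :=
    ENNReal.continuous_ofReal.comp Complex.continuous_im.abs
  exact (isOpen_lt Complex.continuous_re continuous_const).inter (isOpen_lt him continuous_const)

theorem convex_Omega : Convex ℝ (Omega δ σ) := by
  have him : Set.OrdConnected {y : ℝ | ENNReal.ofReal |y| < σ} := by
    refine ⟨fun x hx y hy z hz => ?_⟩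
    rcases le_max_iff.1 (abs_le_max_abs_abs hz.1 hz.2) with hle | hle
    · exact (ENNReal.ofReal_le_ofReal hle).trans_lt hx
    · exact (ENNReal.ofReal_le_ofReal hle).trans_lt hy
  exact (convex_halfSpace_re_lt _).inter (him.convex.is_linear_preimage Complex.imLm.isLinear)

theorem Omega_subset_Omega_s6 (hδ' : δ' ∈ Set.Ioc 0 δ) : Omega δ' σ ⊆ Omega δ σ :=
  fun _ hw => ⟨hw.1.trans_le (Real.log_le_log hδ'.1 hδ'.2), hw.2⟩

theorem exists_mem_Omega_of_eventually_comap_re_atBot (δ : ℝ) (hσ : 0 < σ) {p : ℂ → Prop}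
    (hp : ∀ᶠ w in comap Complex.re atBot, p w) : ∃ w ∈ Omega δ σ, p w := by
  have hofReal : Tendsto Complex.ofReal atBot (comap Complex.re atBot) :=
    tendsto_comap_iff.2 tendsto_id
  obtain ⟨x, hx, hpx⟩ := ((eventually_lt_atBot (Real.log δ)).and (hofReal.eventually hp)).exists
  exact ⟨x, ⟨by simpa using hx, by simpa using hσ⟩, hpx⟩

theorem Omega_nonempty (δ : ℝ) (hσ : 0 < σ) : (Omega δ σ).Nonempty :=
  (exists_mem_Omega_of_eventually_comap_re_atBot δ hσ (Eventually.of_forall fun _ => trivial)).imp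
    fun _ => And.left

theorem exists_mem_Omega_of_forall_mem_ball {w₀ : ℂ} (hw₀ : w₀ ∈ Omega δ σ) {ε : ℝ} (hε : 0 < ε)
    {p : ℂ → Prop} (hp : ∀ w ∈ Metric.ball w₀ ε, w ≠ w₀ → p w) : ∃ w ∈ Omega δ σ, p w :=
  (((isOpen_Omega.eventually_mem hw₀).filter_mono nhdsWithin_le_nhds).and
    (eventually_nhdsNE_of_forall_mem_ball hε hp)).exists

theorem HasHahnExpansion.exists_mem_Omega_isUnit_one_sub {R : Type*} [NormedRing R]
    [NormedAlgebra ℂ R] [CompleteSpace R] {Γ : AddSubmonoid ℝ} {r : ℝ} {a : ℝ → R} {f : ℂ → R}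
    (h : HasHahnExpansion Γ r a f) (ha : IsUnit (1 - a 0)) (δ : ℝ) (hσ : 0 < σ) :
    ∃ w ∈ Omega δ σ, IsUnit (1 - f w) :=
  exists_mem_Omega_of_eventually_comap_re_atBot δ hσ <|
    (h.tendsto_comap_re_atBot.const_sub 1).eventually (Units.isOpen.mem_nhds ha)

end Omega

section SupportIndexing

variable {X : Type*} [NormedAddCommGroup X] [NormedSpace ℂ X] {Γ : AddSubmonoid ℝ} {r : ℝ}
  {a : ℝ → X} {f : ℂ → X}

theorem hasHahnExpansion_tsum_subtype [CompleteSpace X] {S : Set ℝ} (hwf : S.IsWF)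
    (hnonneg : S ⊆ Set.Ici 0) (hr : 0 < r) (hsupp : ∀ γ ∉ S, a γ = 0)
    (hsum : Summable fun γ : S => ‖a γ‖ * r ^ (γ : ℝ)) :
    HasHahnExpansion (AddSubmonoid.closure S) r a
      fun w => ∑' γ : S, Complex.exp (((γ : ℝ) : ℂ) * w) • a γ where
  isPWO := Set.IsPWO.addSubmonoid_closure hnonneg hwf.isPWO
  radius_pos := hr
  eq_zero_of_notMem γ hγ := hsupp γ fun hmem => hγ (AddSubmonoid.subset_closure hmem)
  summable := (Subtype.val_injective.summable_iff fun γ hγ => by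
    rw [hsupp γ (by simpa using hγ), norm_zero, zero_mul]).1 hsum
  hasSum w hw := by
    have hterms : Summable fun γ : S => Complex.exp (((γ : ℝ) : ℂ) * w) • a γ := by
      refine .of_norm_bounded hsum fun γ => ?_
      rw [norm_smul, mul_comm]
      gcongr
      exact norm_exp_mul_le_rpow hr (hnonneg γ.2) hw.le
    refine (Subtype.val_injective.hasSum_iff fun γ hγ => ?_).1 hterms.hasSum
    rw [hsupp γ (by simpa using hγ), smul_zero]

theorem HasHahnExpansion.countable_support (h : HasHahnExpansion Γ r a f) :
    (Function.support a).Countable := by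
  refine h.summable.countable_support.mono fun γ hγ => ?_
  exact mul_ne_zero (norm_ne_zero_iff.2 hγ) (Real.rpow_pos_of_pos h.radius_pos γ).ne'

theorem HasHahnExpansion.isWF_support (h : HasHahnExpansion Γ r a f) :
    (Function.support a).IsWF :=
  (h.isPWO.mono fun _ hγ => h.mem_of_ne_zero hγ).isWF

theorem HasHahnMeromorphicInverse.inverse_eq_exp_smul_tsum_support {R : Type*} [NormedRing R]
    [NormedAlgebra ℂ R] {Γ' : AddSubmonoid ℝ} {μ : ℝ} {b : ℝ → R} {T : ℂ → R}
    (h : HasHahnMeromorphicInverse Γ Γ' r μ b T) {w : ℂ} (hw : w.re < Real.log r) :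
    Ring.inverse (T w) = Complex.exp (-(μ : ℂ) * w) •
      ∑' γ : Function.support b, Complex.exp (((γ : ℝ) : ℂ) * w) • b γ := by
  have hsum : HasSum (fun γ : Function.support b => Complex.exp (((γ : ℝ) : ℂ) * w) • b γ)
      (Complex.exp ((μ : ℂ) * w) • Ring.inverse (T w)) :=
    (hasSum_subtype_iff_of_support_subset (Function.support_smul_subset_right _ b)).2
      (h.hasHahnExpansion.hasSum w hw)
  rw [hsum.tsum_eq, smul_smul, ← Complex.exp_add]
  simp

end SupportIndexing

/-- Hahn holomorphic Fredholm theorem (Theorem 4.1, z-case). -/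
theorem hahn_holomorphic_fredholm
    {H : Type*} [NormedAddCommGroup H] [InnerProductSpace ℂ H] [CompleteSpace H]
    (δ : ℝ) (hδ : 0 < δ) (σ : ENNReal) (hσ : 0 < σ)
    (δ' : ℝ) (hδ' : δ' ∈ Set.Ioc 0 δ)
    (S : Set ℝ) (hSc : S.Countable) (hSwf : S.IsWF) (hS0 : S ⊆ Set.Ici 0)
    (A : ℝ → H →L[ℂ] H) (hsupp : ∀ α ∉ S, A α = 0)
    (hAcpt : ∀ α, IsCompactOperator (A α))
    (hsum : Summable fun α : S => ‖A (α : ℝ)‖ * δ' ^ (α : ℝ))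
    (f : ℂ → H →L[ℂ] H)
    (hhol : DifferentiableOn ℂ f (Omega δ σ))
    (hfcpt : ∀ w ∈ Omega δ σ, IsCompactOperator (f w))
    (hf : ∀ w ∈ Omega δ' σ, f w = ∑' α : S, Complex.exp (((α : ℝ) : ℂ) * w) • A (α : ℝ)) :
    -- either Id - f(w) is nowhere invertible (including at the limit point 0) …
    ((∀ w ∈ Omega δ σ, ¬ IsUnit (1 - f w)) ∧ ¬ IsUnit (1 - A 0)) ∨
    -- … or the non-invertibility set is discrete, empty near 0,
    -- and the inverse is z-Hahn meromorphic at 0 with finite rank singular coefficients.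
    ((∀ w₀ ∈ Omega δ σ, ∃ ε > (0 : ℝ), ∀ w ∈ Omega δ σ,
        ¬ IsUnit (1 - f w) → w ∈ Metric.ball w₀ ε → w = w₀) ∧
      ∃ δ'' ∈ Set.Ioc 0 δ',
        (∀ w ∈ Omega δ'' σ, IsUnit (1 - f w)) ∧
        ∃ μ : ℝ, μ ∈ AddSubgroup.closure S ∧ 0 ≤ μ ∧
        ∃ S' : Set ℝ, S'.Countable ∧ S'.IsWF ∧ S' ⊆ Set.Ici 0 ∧
        ∃ B : ℝ → H →L[ℂ] H,
          (Summable fun γ : S' => ‖B (γ : ℝ)‖ * δ'' ^ (γ : ℝ)) ∧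
          (∀ w ∈ Omega δ'' σ,
            Ring.inverse (1 - f w) =
              Complex.exp (-(μ : ℂ) * w) •
                ∑' γ : S', Complex.exp (((γ : ℝ) : ℂ) * w) • B (γ : ℝ)) ∧
          (∀ γ ∈ S', γ < μ → FiniteRank (B γ)) ∧
          -- finite rank principal parts at the poles away from 0
          (∀ w₀ ∈ Omega δ σ, ¬ IsUnit (1 - f w₀) →
            ∃ n : ℕ, ∃ P : ℕ → H →L[ℂ] H, ∃ g : ℂ → H →L[ℂ] H, ∃ ε > (0 : ℝ),
              DifferentiableOn ℂ g (Metric.ball w₀ ε) ∧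
              (∀ j, FiniteRank (P j)) ∧
              ∀ w ∈ Metric.ball w₀ ε ∩ Omega δ σ, w ≠ w₀ →
                Ring.inverse (1 - f w) =
                  (∑ j ∈ Finset.range n, ((w - w₀) ^ (-(j : ℤ) - 1)) • P j) + g w)) := by
  have hA := hasHahnExpansion_tsum_subtype hSwf hS0 hδ'.1 hsupp hsum
  rcases analytic_fredholm isOpen_Omega convex_Omega.isPreconnected hhol hfcpt with hsing | hmero
  · refine Or.inl ⟨hsing, fun hunit => ?_⟩
    obtain ⟨w, hw, hwu⟩ := hA.exists_mem_Omega_isUnit_one_sub hunit δ' hσ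
    exact hsing w (Omega_subset_Omega_s6 hδ' hw) (hf w hw ▸ hwu)
  obtain ⟨r, hr, hsing | ⟨Γ', μ, B, hinv, hfin⟩⟩ := hA.exists_meromorphicInverse_one_sub (hAcpt 0)
  · obtain ⟨w₀, hw₀⟩ := Omega_nonempty r hσ
    obtain ⟨ε, hε, hunit, -⟩ := hmero w₀ (Omega_subset_Omega_s6 hδ' (Omega_subset_Omega_s6 hr hw₀))
    obtain ⟨w, hw, hwu⟩ := exists_mem_Omega_of_forall_mem_ball hw₀ hε hunit
    exact absurd (hf w (Omega_subset_Omega_s6 hr hw) ▸ hwu) (hsing w hw.1)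
  have hB := hinv.hasHahnExpansion
  refine Or.inr ⟨fun w₀ hw₀ => ?_, r, hr,
    fun w hw => hf w (Omega_subset_Omega_s6 hr hw) ▸ hinv.isUnit w hw.1,
    μ, AddSubmonoid.closure_le.2 AddSubgroup.subset_closure hinv.order_mem,
    nonneg_of_mem_of_isPWO hA.isPWO hinv.order_mem,
    Function.support B, hB.countable_support, hB.isWF_support, fun γ => hB.nonneg_of_ne_zero,
    B, hB.summable.comp_injective Subtype.val_injective,
    fun w hw => hf w (Omega_subset_Omega_s6 hr hw) ▸ hinv.inverse_eq_exp_smul_tsum_support hw.1,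
    fun γ _ => hfin γ, fun w₀ hw₀ _ => ?_⟩
  · obtain ⟨ε, hε, hunit, -⟩ := hmero w₀ hw₀
    exact ⟨ε, hε, fun w _ hw hball => not_imp_comm.1 (hunit w hball) hw⟩
  · obtain ⟨ε, hε, -, n, P, g, hg, hP, hsum⟩ := hmero w₀ hw₀
    exact ⟨n, P, g, ε, hε, hg, hP, fun w hw => hsum w hw.1⟩
end
end

section
/- Monotonicity of the functions z^α(−log z)^{−β} (Lemma 6.1 a): Let σ > 0 and N ∈ ℕ₀. There exists r_N ∈ (0,1), depending only on N and σ, such that for every pair (α,β) ∈ ℝ² satisfying both (α,β) > (0,0) in the lexicographic order (i.e. α > 0, or α = 0 and β > 0) and −β ≤ Nα, and for every θ with |θ| < σ, the function r ↦ r^α · ((log r)² + θ²)^{−β/2} is monotone increasing on the interval (0, r_N). -/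
noncomputable section

/-!
Let `K ≥ 0` satisfy `-β ≤ K α`. With `L = (log r)² + θ²` one has
`r ^ α * L ^ (-β/2) = (r * L ^ (K/2)) ^ α * L ^ (-(β + K α)/2)`.
The second factor has a nonpositive exponent, and it increases because `L` decreases on `(0, 1)`.
So everything reduces to the extremal function `r * L ^ (K/2)`. In the variable `t = -log r` it is
`exp (-t) * (t² + θ²) ^ (K/2)`, which decreases on `t > K` whatever `θ` is: passing from `s` to
`t ≥ s` multiplies the power by at most `(t / s) ^ K ≤ exp (t - s)`.
-/

open Real Set

section Antitone

variable {K s t : ℝ}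

theorem sq_add_sq_le_div_sq_mul (hs : 0 < s) (hst : s ≤ t) (θ : ℝ) :
    t ^ 2 + θ ^ 2 ≤ (t / s) ^ 2 * (s ^ 2 + θ ^ 2) := by
  have one_le_ratio : 1 ≤ (t / s) ^ 2 := one_le_pow₀ ((one_le_div hs).2 hst)
  calc t ^ 2 + θ ^ 2 ≤ t ^ 2 + (t / s) ^ 2 * θ ^ 2 := by
        gcongr
        exact le_mul_of_one_le_left (sq_nonneg θ) one_le_ratio
    _ = (t / s) ^ 2 * (s ^ 2 + θ ^ 2) := by field_simp

theorem div_rpow_le_exp_sub (hK : 0 ≤ K) (hs : 0 < s) (hKs : K ≤ s) (hst : s ≤ t) :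
    (t / s) ^ K ≤ exp (t - s) := by
  have one_le_ratio : 1 ≤ t / s := (one_le_div hs).2 hst
  calc (t / s) ^ K ≤ exp (t / s - 1) ^ K := by
        gcongr
        simpa using add_one_le_exp (t / s - 1)
    _ = exp ((t / s - 1) * K) := (exp_mul _ _).symm
    _ ≤ exp ((t / s - 1) * s) :=
        exp_le_exp.2 (mul_le_mul_of_nonneg_left hKs (sub_nonneg.2 one_le_ratio))
    _ = exp (t - s) := by rw [sub_mul, div_mul_cancel₀ t hs.ne', one_mul]

theorem antitoneOn_exp_neg_mul_sq_add_sq_rpow (hK : 0 ≤ K) (θ : ℝ) :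
    AntitoneOn (fun t : ℝ => exp (-t) * (t ^ 2 + θ ^ 2) ^ (K / 2)) (Ioi K) := by
  intro s hs t _ hst
  have s_pos : 0 < s := hK.trans_lt hs
  have ratio_nonneg : 0 ≤ t / s := div_nonneg (s_pos.le.trans hst) s_pos.le
  have power_le : (t ^ 2 + θ ^ 2) ^ (K / 2) ≤ exp (t - s) * (s ^ 2 + θ ^ 2) ^ (K / 2) :=
    calc (t ^ 2 + θ ^ 2) ^ (K / 2) ≤ ((t / s) ^ 2 * (s ^ 2 + θ ^ 2)) ^ (K / 2) := by
          gcongr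
          exact sq_add_sq_le_div_sq_mul s_pos hst θ
      _ = (t / s) ^ K * (s ^ 2 + θ ^ 2) ^ (K / 2) := by
          rw [mul_rpow (by positivity) (by positivity), ← rpow_natCast_mul ratio_nonneg,
            Nat.cast_ofNat, mul_div_cancel₀ K two_ne_zero]
      _ ≤ exp (t - s) * (s ^ 2 + θ ^ 2) ^ (K / 2) := by
          gcongr
          exact div_rpow_le_exp_sub hK s_pos (le_of_lt hs) hst
  calc exp (-t) * (t ^ 2 + θ ^ 2) ^ (K / 2)
      ≤ exp (-t) * (exp (t - s) * (s ^ 2 + θ ^ 2) ^ (K / 2)) := by gcongr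
    _ = exp (-s) * (s ^ 2 + θ ^ 2) ^ (K / 2) := by
        rw [← mul_assoc, ← exp_add, neg_add_eq_sub, sub_sub_cancel_left]

end Antitone

theorem monotoneOn_mul_log_sq_add_sq_rpow {K : ℝ} (hK : 0 ≤ K) (θ : ℝ) :
    MonotoneOn (fun r : ℝ => r * (log r ^ 2 + θ ^ 2) ^ (K / 2)) (Ioo 0 (exp (-K))) := by
  intro x hx y hy hxy
  have lt_neg_log {r : ℝ} (hr : r ∈ Ioo 0 (exp (-K))) : -log r ∈ Ioi K :=
    lt_neg_of_lt_neg ((log_lt_iff_lt_exp hr.1).2 hr.2)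
  have antitone_le := antitoneOn_exp_neg_mul_sq_add_sq_rpow hK θ (lt_neg_log hy) (lt_neg_log hx)
    (neg_le_neg (log_le_log hx.1 hxy))
  simpa only [neg_neg, neg_sq, exp_log hx.1, exp_log hy.1] using antitone_le

theorem log_sq_add_sq_pos {r : ℝ} (hr : r ∈ Ioo 0 1) (θ : ℝ) : 0 < log r ^ 2 + θ ^ 2 :=
  add_pos_of_pos_of_nonneg (sq_pos_of_neg (log_neg hr.1 hr.2)) (sq_nonneg θ)

theorem antitoneOn_log_sq_add_sq (θ : ℝ) :
    AntitoneOn (fun r : ℝ => log r ^ 2 + θ ^ 2) (Ioo 0 1) := by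
  intro x hx y hy hxy
  have log_le : log x ≤ log y := log_le_log hx.1 hxy
  have log_nonpos : log y ≤ 0 := (log_neg hy.1 hy.2).le
  exact add_le_add_left (sq_le_sq.2 (abs_le_abs_of_nonpos log_nonpos log_le)) _

theorem monotoneOn_log_sq_add_sq_rpow {p : ℝ} (hp : p ≤ 0) (θ : ℝ) :
    MonotoneOn (fun r : ℝ => (log r ^ 2 + θ ^ 2) ^ p) (Ioo 0 1) :=
  (antitoneOn_rpow_Ioi_of_exponent_nonpos hp).comp (antitoneOn_log_sq_add_sq θ)
    fun _ hr => log_sq_add_sq_pos hr θ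

theorem rpow_mul_rpow_eq_mul_rpow_rpow_mul {r L : ℝ} (hr : 0 ≤ r) (hL : 0 < L) (K α β : ℝ) :
    r ^ α * L ^ (-β / 2) = (r * L ^ (K / 2)) ^ α * L ^ (-(β + K * α) / 2) := by
  rw [mul_rpow hr (rpow_nonneg hL.le _), ← rpow_mul hL.le, mul_assoc, ← rpow_add hL]
  ring_nf

theorem monotone_zlogz_general {K α β : ℝ} (hK : 0 ≤ K) (hα : 0 ≤ α) (hβ : -β ≤ K * α) (θ : ℝ) :
    MonotoneOn (fun r : ℝ => r ^ α * (log r ^ 2 + θ ^ 2) ^ (-β / 2)) (Ioo 0 (exp (-K))) := by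
  have subset_unit : Ioo 0 (exp (-K)) ⊆ Ioo 0 1 :=
    Ioo_subset_Ioo_right (exp_le_one_iff.2 (neg_nonpos.2 hK))
  have base_nonneg : ∀ r ∈ Ioo 0 (exp (-K)), 0 ≤ r * (log r ^ 2 + θ ^ 2) ^ (K / 2) :=
    fun r hr => mul_nonneg hr.1.le (by positivity)
  have extremal_mono : MonotoneOn (fun r : ℝ => (r * (log r ^ 2 + θ ^ 2) ^ (K / 2)) ^ α)
      (Ioo 0 (exp (-K))) :=
    (monotoneOn_rpow_Ici_of_exponent_nonneg hα).comp (monotoneOn_mul_log_sq_add_sq_rpow hK θ)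
      base_nonneg
  have remainder_mono : MonotoneOn (fun r : ℝ => (log r ^ 2 + θ ^ 2) ^ (-(β + K * α) / 2))
      (Ioo 0 (exp (-K))) :=
    (monotoneOn_log_sq_add_sq_rpow (by linarith) θ).mono subset_unit
  refine (extremal_mono.mul remainder_mono (fun r hr => rpow_nonneg (base_nonneg r hr) α)
    fun r _ => by positivity).congr fun r hr => ?_
  exact (rpow_mul_rpow_eq_mul_rpow_rpow_mul hr.1.le (log_sq_add_sq_pos (subset_unit hr) θ)
    K α β).symm

/-- Monotonicity of the functions `z^α (−log z)^{−β}` on the logarithmic cover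
(Lemma 6.1 a). -/
theorem monotone_zlogz
    (σ : ℝ) (hσ : 0 < σ) (N : ℕ) :
    ∃ rN ∈ Set.Ioo (0 : ℝ) 1, ∀ α β : ℝ,
      (0 < α ∨ (α = 0 ∧ 0 < β)) → -β ≤ N * α →
      ∀ θ : ℝ, |θ| < σ →
      MonotoneOn (fun r : ℝ => r ^ α * ((Real.log r) ^ 2 + θ ^ 2) ^ (-β / 2))
        (Set.Ioo 0 rN) := by
  -- `N + 1` rather than `N`, so that the radius is below `1` also for `N = 0`
  refine ⟨exp (-(N + 1)), ⟨exp_pos _, exp_lt_one_iff.2 (by linarith [N.cast_nonneg (α := ℝ)])⟩,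
    fun α β hαβ hβ θ _ => ?_⟩
  have hα : 0 ≤ α := hαβ.elim le_of_lt fun h => h.1.ge
  exact monotone_zlogz_general (by positivity) hα (by linarith) θ
end
end

section
/- Weak monotonicity of the functions z^α(−log z)^{−β} (Lemma 6.1 b): Let σ > 0 and N ∈ ℕ₀, and let r_N ∈ (0,1) be as in Lemma 6.1 a). For every x with 0 < x < r_N there exists ρ = ρ_N(x) with 0 < ρ ≤ x such that for every pair (α,β) ∈ ℝ² satisfying both (α,β) > (0,0) in the lexicographic order (i.e. α > 0, or α = 0 and β > 0) and −β ≤ Nα, and for all r, θ with 0 < r ≤ ρ and |θ| < σ, one has r^α · ((log r)² + θ²)^{−β/2} ≤ x^α · (−log x)^{−β}. -/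
noncomputable section

/-!
With `l = -log x`, `D = ((log r)² + θ²) / l²` and `M = |N|`, the claim reads
`r ^ α * D ^ (-β / 2) ≤ x ^ α`. If `r ≤ x` then `D ≥ 1`, so `-β ≤ M * α` gives
`r ^ α * D ^ (-β / 2) ≤ (r * D ^ (M / 2)) ^ α`. The pair `(α, β)` is thereby eliminated, and it
remains to make `r * D ^ (M / 2) ≤ x` for all small `r`, which is possible because powers of
`log r` grow more slowly than `1 / r`.
-/

open Filter Set
open scoped Topology

theorem rpow_mul_rpow_le_of_mul_div_rpow_le {r x a t p q α : ℝ} (hr : 0 ≤ r) (ha : 0 < a)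
    (hat : a ≤ t) (hα : 0 ≤ α) (hq : q ≤ p * α) (h : r * (t / a) ^ p ≤ x) :
    r ^ α * t ^ q ≤ x ^ α * a ^ q := by
  have one_le_ratio : 1 ≤ t / a := (one_le_div ha).2 hat
  have ratio_nonneg : 0 ≤ t / a := zero_le_one.trans one_le_ratio
  calc r ^ α * t ^ q = r ^ α * (t / a) ^ q * a ^ q := by
        rw [mul_assoc, ← Real.mul_rpow ratio_nonneg ha.le, div_mul_cancel₀ t ha.ne']
    _ ≤ r ^ α * (t / a) ^ (p * α) * a ^ q := by gcongr
    _ = (r * (t / a) ^ p) ^ α * a ^ q := by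
        rw [Real.mul_rpow hr (by positivity), Real.rpow_mul ratio_nonneg]
    _ ≤ x ^ α * a ^ q := by gcongr

theorem isEquivalent_sq_add_const_atTop (c : ℝ) :
    Asymptotics.IsEquivalent atTop (fun t : ℝ => t ^ 2 + c) (fun t => t ^ 2) :=
  Asymptotics.IsEquivalent.refl.add_isLittleO <|
    Asymptotics.isLittleO_const_left.2 <| .inr <|
      tendsto_norm_atTop_atTop.comp (tendsto_pow_atTop two_ne_zero)

theorem tendsto_exp_neg_mul_sq_add_const_rpow_atTop (c p : ℝ) :
    Tendsto (fun t : ℝ => Real.exp (-t) * (t ^ 2 + c) ^ p) atTop (𝓝 0) := by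
  have equiv_rpow : Asymptotics.IsEquivalent atTop
      (fun t : ℝ => (t ^ 2 + c) ^ p) (fun t => (t ^ 2) ^ p) :=
    (isEquivalent_sq_add_const_atTop c).rpow fun t => sq_nonneg t
  refine (Asymptotics.IsEquivalent.refl.mul equiv_rpow).symm.tendsto_nhds ?_
  refine (tendsto_rpow_mul_exp_neg_mul_atTop_nhds_zero (2 * p) 1 one_pos).congr' ?_
  filter_upwards [eventually_ge_atTop 0] with t ht
  rw [Pi.mul_apply, Real.rpow_mul ht, Real.rpow_two, neg_one_mul, mul_comm]

theorem tendsto_mul_log_sq_add_const_rpow_nhdsGT_zero (c p : ℝ) :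
    Tendsto (fun r : ℝ => r * (Real.log r ^ 2 + c) ^ p) (𝓝[>] 0) (𝓝 0) := by
  have tendsto_neg_log : Tendsto (fun r : ℝ => -Real.log r) (𝓝[>] 0) atTop :=
    tendsto_neg_atBot_atTop.comp Real.tendsto_log_nhdsGT_zero
  refine ((tendsto_exp_neg_mul_sq_add_const_rpow_atTop c p).comp tendsto_neg_log).congr' ?_
  filter_upwards [self_mem_nhdsWithin] with r hr
  rw [Function.comp_apply, neg_neg, neg_sq, Real.exp_log hr]

theorem eventually_forall_mul_log_sq_add_sq_div_rpow_le {x a p : ℝ} (σ : ℝ) (hx : 0 < x)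
    (ha : 0 < a) (hp : 0 ≤ p) :
    ∀ᶠ r in 𝓝[>] 0, ∀ θ : ℝ, |θ| ≤ σ → r * ((Real.log r ^ 2 + θ ^ 2) / a) ^ p ≤ x := by
  have tendsto_zero :
      Tendsto (fun r : ℝ => r * (Real.log r ^ 2 + σ ^ 2) ^ p / a ^ p) (𝓝[>] 0) (𝓝 0) := by
    simpa only [zero_div] using
      (tendsto_mul_log_sq_add_const_rpow_nhdsGT_zero (σ ^ 2) p).div_const (a ^ p)
  filter_upwards [tendsto_zero.eventually_lt_const hx, self_mem_nhdsWithin] with r hrx hr θ hθ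
  have hr_pos : 0 < r := hr
  have hθσ : θ ^ 2 ≤ σ ^ 2 := sq_le_sq' (neg_le_of_abs_le hθ) (le_of_abs_le hθ)
  calc r * ((Real.log r ^ 2 + θ ^ 2) / a) ^ p
      ≤ r * ((Real.log r ^ 2 + σ ^ 2) / a) ^ p := by gcongr
    _ = r * (Real.log r ^ 2 + σ ^ 2) ^ p / a ^ p := by
        rw [Real.div_rpow (by positivity) ha.le, mul_div_assoc]
    _ ≤ x := hrx.le

theorem weak_monotonicity_zlogz_general (σ N : ℝ) {x : ℝ} (hx : x ∈ Ioo (0 : ℝ) 1) :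
    ∃ ρ ∈ Ioc 0 x, ∀ α β : ℝ, 0 ≤ α → -β ≤ N * α → ∀ r ∈ Ioc 0 ρ, ∀ θ : ℝ, |θ| ≤ σ →
      r ^ α * (Real.log r ^ 2 + θ ^ 2) ^ (-β / 2) ≤ x ^ α * (-Real.log x) ^ (-β) := by
  have hl : 0 < -Real.log x := neg_pos.2 (Real.log_neg hx.1 hx.2)
  have ratio_small := eventually_forall_mul_log_sq_add_sq_div_rpow_le σ hx.1
    (pow_pos hl 2) (show 0 ≤ |N| / 2 by positivity)
  obtain ⟨ρ, hρ, hρ_sub⟩ := mem_nhdsGT_iff_exists_Ioc_subset.1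
    (ratio_small.and (Ioc_mem_nhdsGT hx.1))
  refine ⟨ρ, (hρ_sub ⟨hρ, le_rfl⟩).2, fun α β hα hβ r hr θ hθ => ?_⟩
  obtain ⟨hr_small, -, hrx⟩ := hρ_sub hr
  have exponent_le : -β / 2 ≤ |N| / 2 * α := by
    linarith [mul_le_mul_of_nonneg_right (le_abs_self N) hα]
  have log_sq_le : (-Real.log x) ^ 2 ≤ Real.log r ^ 2 + θ ^ 2 := by
    have : (-Real.log x) ^ 2 ≤ (-Real.log r) ^ 2 := by gcongr; exact hr.1
    linarith [neg_sq (Real.log r), sq_nonneg θ]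
  have sq_rpow_half : ((-Real.log x) ^ 2) ^ (-β / 2) = (-Real.log x) ^ (-β) := by
    rw [Real.rpow_div_two_eq_sqrt _ (sq_nonneg _), Real.sqrt_sq hl.le]
  rw [← sq_rpow_half]
  exact rpow_mul_rpow_le_of_mul_div_rpow_le hr.1.le (pow_pos hl 2) log_sq_le hα exponent_le
    (hr_small θ hθ)

/-- Weak monotonicity of the functions `z^α (−log z)^{−β}` (Lemma 6.1 b),
assuming the monotonicity statement of Lemma 6.1 a) for the radius `rN`. -/
theorem weak_monotonicity_zlogz
    (σ : ℝ) (hσ : 0 < σ) (N : ℕ)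
    (rN : ℝ) (hrN : rN ∈ Set.Ioo (0 : ℝ) 1)
    (hmono : ∀ α β : ℝ,
      (0 < α ∨ (α = 0 ∧ 0 < β)) → -β ≤ N * α →
      ∀ θ : ℝ, |θ| < σ →
      MonotoneOn (fun r : ℝ => r ^ α * ((Real.log r) ^ 2 + θ ^ 2) ^ (-β / 2))
        (Set.Ioo 0 rN)) :
    ∀ x : ℝ, 0 < x → x < rN →
      ∃ ρ : ℝ, 0 < ρ ∧ ρ ≤ x ∧
        ∀ α β : ℝ, (0 < α ∨ (α = 0 ∧ 0 < β)) → -β ≤ N * α →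
        ∀ r θ : ℝ, 0 < r → r ≤ ρ → |θ| < σ →
          r ^ α * ((Real.log r) ^ 2 + θ ^ 2) ^ (-β / 2) ≤
            x ^ α * (-Real.log x) ^ (-β) := by
  intro x hx hxr
  obtain ⟨ρ, hρ, h⟩ := weak_monotonicity_zlogz_general σ N ⟨hx, hxr.trans hrN.2⟩
  exact ⟨ρ, hρ.1, hρ.2, fun α β hαβ hβ r θ hr hrρ hθ =>
    h α β (hαβ.elim le_of_lt fun h => h.1.ge) hβ r ⟨hr, hrρ⟩ θ hθ.le⟩
end
end

section
/- κ-suitability of square roots of integers (Lemma 7.7): For every κ > 0, the set { 1 / ((2κ)^{√q} · |sin(√q · π)| · Γ(√q + 1)) : q ∈ ℕ, √q ∉ ℕ } is a bounded subset of ℝ. Equivalently, for every κ > 0 there exists M > 0 such that (2κ)^{√q} · |sin(√q π)| · Γ(√q + 1) ≥ 1/M for every positive integer q that is not a perfect square. -/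
noncomputable section

/-!
The distance from `√q` to an integer `m` is at least `1 / (√q + |m|)`, because `|q - m²| ≥ 1`.
Since `|sin (x π)|` is at least twice the distance from `x` to the nearest integer, this gives
`|sin (√q π)| ≥ 1 / (√q + 1)`. Restricting the integral for `Γ(x + 1)` to `(a, ∞)` gives
`Γ(x + 1) ≥ a ^ x * exp (-a)`, and the choice `a = e / c` turns this into
`c ^ x * Γ(x + 1) ≥ exp (x - e / c) ≥ (x + 1) * exp (-e / c)`. The factors `√q + 1` cancel.
-/

open Real

lemma two_mul_abs_sub_round_le_abs_sin_mul_pi (x : ℝ) : 2 * |x - round x| ≤ |sin (x * π)| := by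
  have h_near : |(x - round x) * π| ≤ π / 2 := by
    rw [abs_mul, abs_of_pos pi_pos]
    linarith [mul_le_mul_of_nonneg_right (abs_sub_round x) pi_pos.le]
  calc 2 * |x - round x| = 2 / π * |(x - round x) * π| := by
        rw [abs_mul, abs_of_pos pi_pos]
        field_simp
    _ ≤ |sin ((x - round x) * π)| := mul_abs_le_abs_sin h_near
    _ = |sin (x * π)| := by
        rw [sub_mul, sin_sub_int_mul_pi, abs_mul, abs_neg_one_zpow, one_mul]

lemma one_le_abs_sqrt_sub_mul_abs_sqrt_add {q : ℕ} (hq : ¬ IsSquare q) (m : ℤ) :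
    1 ≤ |√q - m| * |√q + m| := by
  have h_ne : (q : ℤ) - m ^ 2 ≠ 0 := fun h ↦
    hq ⟨m.natAbs, by zify; rw [abs_mul_abs_self]; linarith⟩
  calc (1 : ℝ) ≤ |(q : ℝ) - m ^ 2| := mod_cast Int.one_le_abs h_ne
    _ = |√q - m| * |√q + m| := by
        rw [← abs_mul, mul_comm, ← sq_sub_sq, sq_sqrt q.cast_nonneg]

lemma one_le_sqrt_add_one_mul_abs_sin_sqrt_mul_pi {q : ℕ} (hq : ¬ IsSquare q) :
    1 ≤ (√q + 1) * |sin (√q * π)| := by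
  have h_sum : |√q + round √q| ≤ 2 * (√q + 1) := by
    have h_round := abs_le.mp (abs_sub_round √(q : ℝ))
    rw [abs_le]
    constructor <;> linarith [sqrt_nonneg (q : ℝ)]
  calc 1 ≤ |√q - round √q| * |√q + round √q| := one_le_abs_sqrt_sub_mul_abs_sqrt_add hq _
    _ ≤ |√q - round √q| * (2 * (√q + 1)) := by gcongr
    _ = (√q + 1) * (2 * |√q - round √q|) := by ring
    _ ≤ (√q + 1) * |sin (√q * π)| := by
        gcongr
        exact two_mul_abs_sub_round_le_abs_sin_mul_pi _

lemma rpow_mul_exp_neg_le_Gamma_add_one {a x : ℝ} (ha : 0 ≤ a) (hx : 0 ≤ x) :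
    a ^ x * exp (-a) ≤ Gamma (x + 1) := by
  have h_subset : Set.Ioi a ⊆ Set.Ioi 0 := Set.Ioi_subset_Ioi ha
  have h_int : MeasureTheory.IntegrableOn (fun t ↦ exp (-t) * t ^ x) (Set.Ioi 0) := by
    simpa only [add_sub_cancel_right] using GammaIntegral_convergent (show 0 < x + 1 by positivity)
  calc a ^ x * exp (-a) = ∫ t in Set.Ioi a, exp (-t) * a ^ x := by
        rw [MeasureTheory.integral_mul_const, integral_exp_neg_Ioi, mul_comm]
    _ ≤ ∫ t in Set.Ioi a, exp (-t) * t ^ x := by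
        refine MeasureTheory.setIntegral_mono_on ((integrableOn_exp_neg_Ioi a).mul_const _)
          (h_int.mono_set h_subset) measurableSet_Ioi fun t ht ↦ ?_
        have h_le : a ≤ t := le_of_lt ht
        gcongr
    _ ≤ ∫ t in Set.Ioi 0, exp (-t) * t ^ x := by
        refine MeasureTheory.setIntegral_mono_set h_int ?_ h_subset.eventuallyLE
        filter_upwards [MeasureTheory.ae_restrict_mem measurableSet_Ioi] with t ht
        exact mul_nonneg (exp_nonneg _) (rpow_nonneg (le_of_lt ht) _)
    _ = Gamma (x + 1) := by
        rw [Gamma_eq_integral (by positivity), add_sub_cancel_right]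

lemma add_one_mul_exp_neg_le_rpow_mul_Gamma {c x : ℝ} (hc : 0 < c) (hx : 0 ≤ x) :
    (x + 1) * exp (-(exp 1 / c)) ≤ c ^ x * Gamma (x + 1) :=
  calc (x + 1) * exp (-(exp 1 / c)) ≤ exp x * exp (-(exp 1 / c)) := by
        gcongr
        exact add_one_le_exp x
    _ = c ^ x * ((exp 1 / c) ^ x * exp (-(exp 1 / c))) := by
        rw [← mul_assoc, ← mul_rpow hc.le (by positivity), mul_div_cancel₀ _ hc.ne', exp_one_rpow]
    _ ≤ c ^ x * Gamma (x + 1) := by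
        gcongr
        exact rpow_mul_exp_neg_le_Gamma_add_one (by positivity) hx

lemma exp_neg_le_rpow_sqrt_mul_abs_sin_mul_Gamma {c : ℝ} (hc : 0 < c) {q : ℕ}
    (hq : ¬ IsSquare q) :
    exp (-(exp 1 / c)) ≤ c ^ √q * |sin (√q * π)| * Gamma (√q + 1) :=
  calc exp (-(exp 1 / c))
      ≤ (√q + 1) * |sin (√q * π)| * exp (-(exp 1 / c)) :=
        le_mul_of_one_le_left (exp_nonneg _) (one_le_sqrt_add_one_mul_abs_sin_sqrt_mul_pi hq)
    _ = |sin (√q * π)| * ((√q + 1) * exp (-(exp 1 / c))) := by ring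
    _ ≤ |sin (√q * π)| * (c ^ √q * Gamma (√q + 1)) :=
        mul_le_mul_of_nonneg_left (add_one_mul_exp_neg_le_rpow_mul_Gamma hc (sqrt_nonneg _))
          (abs_nonneg _)
    _ = c ^ √q * |sin (√q * π)| * Gamma (√q + 1) := by ring

/-- κ-suitability of square roots of integers (Lemma 7.7). -/
theorem kappa_suitable_sqrt_integers (κ : ℝ) (hκ : 0 < κ) :
    Bornology.IsBounded
      {r : ℝ | ∃ q : ℕ, 0 < q ∧ (¬ ∃ n : ℕ, n ^ 2 = q) ∧
        r = ((2 * κ) ^ Real.sqrt q * |Real.sin (Real.sqrt q * Real.pi)| *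
          Real.Gamma (Real.sqrt q + 1))⁻¹} ∧
    ∃ M : ℝ, 0 < M ∧ ∀ q : ℕ, 0 < q → (¬ ∃ n : ℕ, n ^ 2 = q) →
      (2 * κ) ^ Real.sqrt q * |Real.sin (Real.sqrt q * Real.pi)| *
        Real.Gamma (Real.sqrt q + 1) ≥ 1 / M := by
  set M := exp (exp 1 / (2 * κ))
  have hM : 0 < M := exp_pos _
  have h_lower (q : ℕ) (hq : ¬ ∃ n : ℕ, n ^ 2 = q) :
      M⁻¹ ≤ (2 * κ) ^ √q * |sin (√q * π)| * Gamma (√q + 1) := by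
    have h_nonsquare : ¬ IsSquare q := by simpa only [isSquare_iff_exists_sq, eq_comm] using hq
    rw [← exp_neg]
    exact exp_neg_le_rpow_sqrt_mul_abs_sin_mul_Gamma (by positivity) h_nonsquare
  refine ⟨(Metric.isBounded_Icc 0 M).subset ?_, M, hM, fun q _ hq ↦ one_div M ▸ h_lower q hq⟩
  rintro _ ⟨q, -, hq, rfl⟩
  exact ⟨inv_nonneg.mpr ((inv_pos.mpr hM).le.trans (h_lower q hq)),
    inv_le_of_inv_le₀ hM (h_lower q hq)⟩
end
end
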